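/- The squared sub-Riemannian distance of the octonionic Hopf fibration is recovered from the subelliptic heat kernel by d²(r,η) = −lim_{t→0⁺} 4t·ln p_t(r,η); in particular: (1) for every η ∈ [0,π), lim_{t→0⁺} (−4t·ln p_t(0,η)) = 2πη − η², and (2) for every r ∈ [0,π/2), lim_{t→0⁺} (−4t·ln p_t(r,0)) = r². Consequently the sub-Riemannian distance satisfies d(0,η) = √(2πη − η²) and d(r,0) = r, and the sub-Riemannian diameter of S^{15} equals π. -/

import Mathlib

open Real MeasureTheory Filter Topology

/-- Jacobi polynomial `P_k^{3,b}` (with `b = m+3` octonionic, `b = m+1` quaternionic),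
given by the polynomial extension of the Rodrigues formula. -/
noncomputable def jacP (k b : ℕ) : Polynomial ℝ :=
  Polynomial.C ((-1 : ℝ) ^ k / (2 ^ k * (Nat.factorial k : ℝ))) *
    (Polynomial.derivative^[k]
        ((1 - Polynomial.X) ^ (k + 3) * (1 + Polynomial.X) ^ (b + k)) /
      ((1 - Polynomial.X) ^ 3 * (1 + Polynomial.X) ^ b))

/-- Normalized eigenfunction `h_m` of the radial Laplacian on `S^7`. -/
noncomputable def hOct (m : ℕ) (η : ℝ) : ℝ :=
  (Real.Gamma (7 / 2) / (Real.sqrt π * Real.Gamma 3)) *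
    ∫ φ in (0 : ℝ)..π,
      (((Real.cos η : ℂ) + Complex.I * ((Real.sin η * Real.cos φ : ℝ) : ℂ)) ^ m).re *
        (Real.sin φ) ^ 5

/-- Coefficient `α_{k,m}`. -/
noncomputable def alphOct (k m : ℕ) : ℝ :=
  (96 / π ^ 8) * (m + 3) * (2 * k + m + 7) *
    (Nat.choose (k + m + 6) (k + m + 3)) * (Nat.choose (m + 5) m)

/-- Subelliptic heat kernel of the octonionic Hopf fibration, in cylindric coordinates. -/
noncomputable def pOct (t r η : ℝ) : ℝ :=
  ∑' m : ℕ, ∑' k : ℕ,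
    alphOct k m * hOct m η * Real.exp (-(4 * ((k * (k + m + 7) + 2 * m : ℕ) : ℝ)) * t) *
      (Real.cos r) ^ m * (jacP k (m + 3)).eval (Real.cos (2 * r))

/-- Coefficient `β_{k,m}` of the quaternionic heat kernel. -/
noncomputable def betQ (k m : ℕ) : ℝ :=
  (Real.Gamma 4 / (2 * π ^ 6)) * (2 * k + m + 5) * (m + 1) *
    (Nat.choose (k + m + 4) (k + m + 1))

/-- Subelliptic heat kernel of the quaternionic Hopf fibration on `S^11`. -/
noncomputable def pQuat (t r η : ℝ) : ℝ :=
  ∑' m : ℕ, ∑' k : ℕ,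
    betQ k m * Real.exp (-(4 * ((k * (k + m + 5) + 2 * m : ℕ) : ℝ)) * t) *
      (Real.sin ((m + 1) * η) / Real.sin η) *
      (Real.cos r) ^ m * (jacP k (m + 1)).eval (Real.cos (2 * r))

/-- Gegenbauer polynomial `C_m^5` (polynomial extension to all real `x`). -/
noncomputable def geg5 (m : ℕ) (x : ℝ) : ℝ :=
  ∑ j ∈ Finset.range (m / 2 + 1),
    (-1 : ℝ) ^ j * (Nat.factorial (m - j + 4)) /
      ((Nat.factorial 4) * (Nat.factorial j) * (Nat.factorial (m - 2 * j))) * (2 * x) ^ (m - 2 * j)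

/-- Radial heat kernel of the round sphere `S^11`, as a function of `cos δ`. -/
noncomputable def qS11 (t x : ℝ) : ℝ :=
  (Real.Gamma 5 / (2 * π ^ 6)) *
    ∑' m : ℕ, (m + 5) * Real.exp (-((m * (m + 10) : ℕ) : ℝ) * t) * geg5 m x

/-- The kernel `g_t(η,y)` appearing in the integral representation. -/
noncomputable def gInt (t η y : ℝ) : ℝ :=
  (Real.sin η)⁻¹ ^ 3 *
    (Real.cos (η * y / (2 * t)) * (2 * y) * (η - 3 * t * Real.cot η) +
      Real.sin (η * y / (2 * t)) *
        (8 * t ^ 2 * Real.cot η ^ 2 + 4 * t ^ 2 * ((Real.sin η)⁻¹) ^ 2 -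
          6 * t * η * Real.cot η + 2 * t + η ^ 2 - y ^ 2))

/-- Theta-type function `V(t,δ)`. -/
noncomputable def Vtheta (t δ : ℝ) : ℝ :=
  (1 / Real.sqrt (4 * π * t)) * ∑' k : ℤ, Real.exp (-(δ - 2 * k * π) ^ 2 / (4 * t))

/-- The operator `f ↦ -(1/(2π sin δ)) f'`. -/
noncomputable def Dop (f : ℝ → ℝ) : ℝ → ℝ :=
  fun δ => -(1 / (2 * π * Real.sin δ)) * deriv f δ


theorem oct_poly_le_exp (C : ℝ) (K : ℕ) (ε : ℝ) (hε : 0 < ε) :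
    ∀ᶠ t in 𝓝[>] (0:ℝ), C * (1 / t) ^ K ≤ Real.exp (ε / (4 * t)) := by
  have h1 : Tendsto (fun x : ℝ => x ^ K / Real.exp ((ε / 4) * x)) atTop (𝓝 0) := by
    have := isLittleO_pow_exp_pos_mul_atTop (k := K) (b := ε / 4) (by positivity)
    exact this.tendsto_div_nhds_zero
  have h2 : Tendsto (fun t : ℝ => 1 / t) (𝓝[>] 0) atTop := by
    simpa using tendsto_inv_nhdsGT_zero (𝕜 := ℝ)
  have h3 := (h1.comp h2).const_mul C
  rw [mul_zero] at h3
  filter_upwards [h3.eventually (eventually_le_nhds (zero_lt_one)), self_mem_nhdsWithin] with t ht ht0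
  simp only [Function.comp] at ht
  rw [← mul_div_assoc, div_le_one (Real.exp_pos _)] at ht
  refine ht.trans (le_of_eq ?_)
  congr 1
  have : t ≠ 0 := ne_of_gt ht0
  field_simp

theorem oct_log_limit (p : ℝ → ℝ) (D : ℝ)
    (h : ∀ ε > 0, ∀ᶠ t in 𝓝[>] (0:ℝ), Real.exp (-(D + ε) / (4 * t)) ≤ p t ∧
      p t ≤ Real.exp (-(D - ε) / (4 * t))) :
    Tendsto (fun t => -(4 * t) * Real.log (p t)) (𝓝[>] 0) (𝓝 D) := by
  rw [Metric.tendsto_nhds]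
  intro ε hε
  filter_upwards [h (ε / 2) (by positivity), self_mem_nhdsWithin] with t ht ht0
  have ht0 : 0 < t := ht0
  have hp : 0 < p t := (Real.exp_pos _).trans_le ht.1
  have l1 := (Real.le_log_iff_exp_le hp).2 ht.1
  have l2 := (Real.log_le_iff_le_exp hp).2 ht.2
  rw [div_le_iff₀ (by positivity)] at l1
  rw [le_div_iff₀ (by positivity)] at l2
  rw [Real.dist_eq, abs_lt]
  constructor <;> nlinarith

theorem oct_jac_numer (k b : ℕ) :
    (Polynomial.derivative^[k]
        ((1 - Polynomial.X : Polynomial ℝ) ^ (k + 3) * (1 + Polynomial.X) ^ (b + k))) =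
      ((1 - Polynomial.X) ^ 3 * (1 + Polynomial.X) ^ b) *
        ∑ j ∈ Finset.range (k + 1), Polynomial.C ((-1 : ℝ) ^ (k - j) * (k.factorial : ℝ) *
          ((k + 3).choose (k - j) : ℝ) * ((b + k).choose j : ℝ)) *
          ((1 - Polynomial.X) ^ j * (1 + Polynomial.X) ^ (k - j)) := by
  rw [Polynomial.iterate_derivative_mul, Finset.mul_sum]
  refine Finset.sum_congr rfl fun j hj => ?_
  have hj : j ≤ k := Nat.lt_succ_iff.1 (Finset.mem_range.1 hj)
  have h1 : Polynomial.derivative^[k - j] ((1 - Polynomial.X : Polynomial ℝ) ^ (k + 3)) =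
      Polynomial.C ((-1 : ℝ) ^ (k - j) * ((k + 3).descFactorial (k - j) : ℝ)) *
        (1 - Polynomial.X) ^ (3 + j) := by
    have := Polynomial.iterate_derivative_comp_one_sub_X ((Polynomial.X : Polynomial ℝ) ^ (k + 3)) (k - j)
    rw [Polynomial.pow_comp, Polynomial.X_comp, Polynomial.iterate_derivative_X_pow_eq_C_mul] at this
    rw [this]
    simp only [Polynomial.mul_comp, Polynomial.C_comp, Polynomial.pow_comp, Polynomial.X_comp,
      map_mul, map_pow, map_neg, map_one]
    rw [show k + 3 - (k - j) = 3 + j by omega]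
    ring
  have h2 : Polynomial.derivative^[j] ((1 + Polynomial.X : Polynomial ℝ) ^ (b + k)) =
      Polynomial.C ((b + k).descFactorial j : ℝ) * (1 + Polynomial.X) ^ (b + (k - j)) := by
    have := Polynomial.iterate_derivative_X_add_pow (b + k) j (1 : ℝ)
    rw [map_one, add_comm] at this
    rw [this, show b + k - j = b + (k - j) by omega]
    simp
  rw [h1, h2, nsmul_eq_mul]
  have h3 : (k.choose j : ℝ) * (((k + 3).descFactorial (k - j) : ℝ)) * ((b + k).descFactorial j : ℝ) =
      (k.factorial : ℝ) * ((k + 3).choose (k - j) : ℝ) * ((b + k).choose j : ℝ) := by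
    rw [Nat.descFactorial_eq_factorial_mul_choose, Nat.descFactorial_eq_factorial_mul_choose,
      ← Nat.choose_mul_factorial_mul_factorial hj]
    push_cast; ring
  have h4 : Polynomial.C ((-1 : ℝ) ^ (k - j) * (k.factorial : ℝ) *
          ((k + 3).choose (k - j) : ℝ) * ((b + k).choose j : ℝ)) =
      (k.choose j : Polynomial ℝ) * Polynomial.C ((-1 : ℝ) ^ (k - j) * ((k + 3).descFactorial (k - j) : ℝ)) *
       Polynomial.C ((b + k).descFactorial j : ℝ) := by
    rw [← Polynomial.C_eq_natCast, ← Polynomial.C_mul, ← Polynomial.C_mul]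
    congr 1
    linear_combination (-(-1 : ℝ) ^ (k - j)) * h3
  rw [h4]
  ring

theorem oct_jac_eq (k b : ℕ) :
    jacP k b = ∑ j ∈ Finset.range (k + 1), Polynomial.C ((-1 : ℝ) ^ j / 2 ^ k *
          ((k + 3).choose (k - j) : ℝ) * ((b + k).choose j : ℝ)) *
          ((1 - Polynomial.X) ^ j * (1 + Polynomial.X) ^ (k - j)) := by
  unfold jacP
  have hne : ((1 - Polynomial.X : Polynomial ℝ) ^ 3 * (1 + Polynomial.X) ^ b) ≠ 0 := by
    refine mul_ne_zero (pow_ne_zero _ fun h => ?_) (pow_ne_zero _ fun h => ?_)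
    · have := congrArg (Polynomial.eval 0) h
      simp at this
    · have := congrArg (Polynomial.eval 0) h
      simp at this
  rw [oct_jac_numer, mul_div_cancel_left₀ _ hne, Finset.mul_sum]
  refine Finset.sum_congr rfl fun j hj => ?_
  have hj : j ≤ k := Nat.lt_succ_iff.1 (Finset.mem_range.1 hj)
  rw [← mul_assoc, ← Polynomial.C_mul]
  congr 2
  have : (k.factorial : ℝ) ≠ 0 := by positivity
  have h5 : (-1 : ℝ) ^ k * (-1) ^ (k - j) = (-1) ^ j := by
    obtain ⟨u, rfl⟩ := Nat.exists_eq_add_of_le hj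
    rw [show j + u - j = u by omega, pow_add, mul_assoc, ← mul_pow]; simp
  field_simp
  linear_combination (((k+3).choose (k-j):ℝ) * ((b+k).choose j:ℝ)) * h5

theorem oct_jac_eval (k b : ℕ) (r : ℝ) :
    (jacP k b).eval (Real.cos (2 * r)) = ∑ l ∈ Finset.range (k + 1),
      (-1 : ℝ) ^ l * ((b + k).choose l : ℝ) * ((2 * k + b + 3 - l).choose (k - l) : ℝ) *
        Real.cos r ^ (2 * (k - l)) := by
  rw [oct_jac_eq, Polynomial.eval_finsetSum]
  set z := Real.cos r ^ 2 with hz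
  have h1 : (1 - Real.cos (2 * r)) = 2 * (1 - z) := by rw [Real.cos_two_mul]; ring
  have h2 : (1 + Real.cos (2 * r)) = 2 * z := by rw [Real.cos_two_mul]; ring
  have e1 : ∀ j ∈ Finset.range (k + 1),
      Polynomial.eval (Real.cos (2 * r)) (Polynomial.C ((-1 : ℝ) ^ j / 2 ^ k *
          ((k + 3).choose (k - j) : ℝ) * ((b + k).choose j : ℝ)) *
          ((1 - Polynomial.X) ^ j * (1 + Polynomial.X) ^ (k - j))) =
      ∑ l ∈ Finset.range (k + 1), (-1 : ℝ) ^ l * z ^ (k - l) * ((b + k).choose l : ℝ) *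
        (if l ≤ j then ((k + 3).choose (k - j) : ℝ) * ((b + k - l).choose (j - l) : ℝ) else 0) := by
    intro j hj
    have hj : j ≤ k := Nat.lt_succ_iff.1 (Finset.mem_range.1 hj)
    simp only [Polynomial.eval_mul, Polynomial.eval_C, Polynomial.eval_pow, Polynomial.eval_sub,
      Polynomial.eval_one, Polynomial.eval_X, Polynomial.eval_add, h1, h2]
    have : (2 * (1 - z)) ^ j * (2 * z) ^ (k - j) = 2 ^ k * ((1 - z) ^ j * z ^ (k - j)) := by
      rw [mul_pow, mul_pow]
      rw [show (2:ℝ) ^ k = 2 ^ j * 2 ^ (k - j) by rw [← pow_add]; congr 1; omega]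
      ring
    rw [this, sub_eq_add_neg, add_pow, Finset.sum_mul, Finset.mul_sum, Finset.mul_sum]
    have hsub : Finset.range (j + 1) ⊆ Finset.range (k + 1) := by
      intro x; simp; omega
    rw [← Finset.sum_subset hsub]
    · refine Finset.sum_congr rfl fun l hl => ?_
      have hl : l ≤ j := Nat.lt_succ_iff.1 (Finset.mem_range.1 hl)
      rw [if_pos hl]
      have hc : ((b + k).choose j : ℝ) * (j.choose l : ℝ) =
          ((b + k).choose l : ℝ) * ((b + k - l).choose (j - l) : ℝ) := by
        exact_mod_cast Nat.choose_mul hl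
      have hp : z ^ (k - l) = z ^ (j - l) * z ^ (k - j) := by
        rw [← pow_add]; congr 1; omega
      have hs : (-z) ^ (j - l) = (-1) ^ (j - l) * z ^ (j - l) := by rw [← mul_pow]; simp
      have hs2 : (-1 : ℝ) ^ j * (-1) ^ (j - l) = (-1) ^ l := by
        obtain ⟨u, rfl⟩ := Nat.exists_eq_add_of_le hl
        rw [show l + u - l = u by omega, pow_add, mul_assoc, ← mul_pow]; simp
      rw [hs, hp, ← hs2]
      field_simp
      simp only [one_pow, mul_one]
      linear_combination ((k+3).choose (k-j):ℝ) * z^(j-l) * z^(k-j) * hc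
    · intro l _ hl
      rw [if_neg (by simpa using hl)]; ring
  rw [Finset.sum_congr rfl e1, Finset.sum_comm]
  refine Finset.sum_congr rfl fun l hl => ?_
  have hl : l ≤ k := Nat.lt_succ_iff.1 (Finset.mem_range.1 hl)
  rw [← Finset.mul_sum]
  have hv : ∑ j ∈ Finset.range (k + 1),
      (if l ≤ j then ((k + 3).choose (k - j) : ℝ) * ((b + k - l).choose (j - l) : ℝ) else 0) =
      ((2 * k + b + 3 - l).choose (k - l) : ℝ) := by
    rw [show 2 * k + b + 3 - l = (b + k - l) + (k + 3) by omega, Nat.add_choose_eq,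
      Finset.Nat.sum_antidiagonal_eq_sum_range_succ_mk, ← Finset.sum_filter]
    push_cast
    refine Finset.sum_bij' (fun j _ => j - l) (fun i _ => i + l) ?_ ?_ ?_ ?_ ?_
    · intro j hj; simp at hj ⊢; omega
    · intro j hj; simp at hj ⊢; omega
    · intro j hj; simp at hj ⊢; omega
    · intro j hj; simp at hj ⊢
    · intro j hj
      simp at hj
      rw [show k - l - (j - l) = k - j by omega]
      ring
  rw [hv, hz, ← pow_mul]
  ring

theorem oct_jac_eval_one (k b : ℕ) :
    (jacP k b).eval 1 = ((k + 3).choose 3 : ℝ) := by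
  rw [oct_jac_eq, Polynomial.eval_finsetSum, Finset.sum_eq_single 0]
  · simp only [Polynomial.eval_mul, Polynomial.eval_C, Polynomial.eval_pow, Polynomial.eval_sub,
      Polynomial.eval_one, Polynomial.eval_X, Polynomial.eval_add]
    rw [show (1 + 1 : ℝ) = 2 by norm_num]
    have : (k + 3).choose k = (k + 3).choose 3 := by
      rw [← Nat.choose_symm_add]
    simp [this]
    field_simp
  · intro j _ hj
    simp [hj]
  · simp

/-- The third derivative of the Chebyshev polynomial `T_j` at `cos η`. -/
noncomputable def octD (j η : ℝ) : ℝ :=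
  -j ^ 3 * sin (j * η) / sin η ^ 3 - 3 * j ^ 2 * cos η * cos (j * η) / sin η ^ 4 +
    j * sin (j * η) * (sin η ^ 2 + 3 * cos η ^ 2) / sin η ^ 5

theorem oct_int_aux (m : ℕ) (c s : ℂ) (A1 A2 A3 A4 A5 : ℂ)
    (h1 : A1 * ((m + 1) * (Complex.I * s)) = 1) (h2 : A2 * ((m + 2) * (Complex.I * s)) = A1)
    (h3 : A3 * ((m + 3) * (Complex.I * s)) = A2) (h4 : A4 * ((m + 4) * (Complex.I * s)) = A3)
    (h5 : A5 * ((m + 5) * (Complex.I * s)) = A4) :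
    ∫ φ in (0 : ℝ)..π, (c + Complex.I * (s * Complex.cos φ)) ^ m * Complex.sin φ ^ 5 =
      (8 * A3 * (c + Complex.I * s) ^ (m + 3) - 24 * A4 * (c + Complex.I * s) ^ (m + 4)
        + 24 * A5 * (c + Complex.I * s) ^ (m + 5)) -
      (8 * A3 * (c - Complex.I * s) ^ (m + 3) + 24 * A4 * (c - Complex.I * s) ^ (m + 4)
        + 24 * A5 * (c - Complex.I * s) ^ (m + 5)) := by
  set F : ℂ → ℂ := fun z =>
    -(A1 * ((1 - Complex.cos z ^ 2) ^ 2) * (c + Complex.I * (s * Complex.cos z)) ^ (m + 1)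
      - A2 * (-4 * Complex.cos z + 4 * Complex.cos z ^ 3) * (c + Complex.I * (s * Complex.cos z)) ^ (m + 2)
      + A3 * (-4 + 12 * Complex.cos z ^ 2) * (c + Complex.I * (s * Complex.cos z)) ^ (m + 3)
      - A4 * (24 * Complex.cos z) * (c + Complex.I * (s * Complex.cos z)) ^ (m + 4)
      + A5 * 24 * (c + Complex.I * (s * Complex.cos z)) ^ (m + 5)) with hF
  have hd : ∀ z : ℂ, HasDerivAt F ((c + Complex.I * (s * Complex.cos z)) ^ m * Complex.sin z ^ 5) z := by
    intro z
    have hc := Complex.hasDerivAt_cos z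
    have hW : HasDerivAt (fun z => c + Complex.I * (s * Complex.cos z))
        (Complex.I * (s * (-Complex.sin z))) z := ((hc.const_mul s).const_mul Complex.I).const_add c
    have e1 := (((((hc.pow 2).const_sub 1).pow 2).const_mul A1).mul (hW.pow (m + 1)))
    have e2 := ((((hc.const_mul (-4)).add ((hc.pow 3).const_mul 4)).const_mul A2).mul (hW.pow (m + 2)))
    have e3 := (((((hc.pow 2).const_mul 12).const_add (-4)).const_mul A3).mul (hW.pow (m + 3)))
    have e4 := (((hc.const_mul 24).const_mul A4).mul (hW.pow (m + 4)))
    have e5 := ((hW.pow (m + 5)).const_mul (A5 * 24))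
    have := ((((e1.sub e2).add e3).sub e4).add e5).neg
    refine this.congr_deriv ?_
    simp only [Pi.pow_apply, Nat.add_sub_cancel, Pi.mul_apply, Pi.add_apply]
    rw [show m + 2 - 1 = m + 1 by omega, show m + 3 - 1 = m + 2 by omega,
      show m + 4 - 1 = m + 3 by omega, show m + 5 - 1 = m + 4 by omega]
    push_cast
    have hs : Complex.sin z ^ 2 = 1 - Complex.cos z ^ 2 := by
      linear_combination Complex.sin_sq_add_cos_sq z
    set W := c + Complex.I * (s * Complex.cos z)
    set C := Complex.cos z
    set S := Complex.sin z
    rw [show S ^ 5 = S * (1 - C ^ 2) ^ 2 by rw [← hs]; ring]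
    simp only [pow_succ W]
    linear_combination S * (1 - C ^ 2) ^ 2 * W ^ m * h1 - (-4 * C + 4 * C ^ 3) * S * W ^ m * W * h2
      + (-4 + 12 * C ^ 2) * S * W ^ m * W * W * h3 - 24 * C * S * W ^ m * W * W * W * h4
      + 24 * S * W ^ m * W * W * W * W * h5
  rw [intervalIntegral.integral_eq_sub_of_hasDerivAt (f := fun φ : ℝ => F φ)]
  · simp only [hF]
    rw [← Complex.ofReal_cos, ← Complex.ofReal_cos, Real.cos_pi, Real.cos_zero]
    push_cast
    ring_nf
  · intro x _
    exact (hd x).comp_ofReal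
  · apply Continuous.intervalIntegrable
    fun_prop

theorem oct_gamma_const : Real.Gamma (7 / 2) / (Real.sqrt π * Real.Gamma 3) = 15 / 16 := by
  have h1 : Real.Gamma (7 / 2) = 15 / 8 * Real.sqrt π := by
    rw [show (7 / 2 : ℝ) = 5 / 2 + 1 by norm_num, Real.Gamma_add_one (by norm_num),
      show (5 / 2 : ℝ) = 3 / 2 + 1 by norm_num, Real.Gamma_add_one (by norm_num),
      show (3 / 2 : ℝ) = 1 / 2 + 1 by norm_num, Real.Gamma_add_one (by norm_num),
      Real.Gamma_one_half_eq]
    ring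
  have h2 : Real.Gamma 3 = 2 := by
    rw [show (3 : ℝ) = 2 + 1 by norm_num, Real.Gamma_add_one (by norm_num), Real.Gamma_two]; norm_num
  have : Real.sqrt π ≠ 0 := by positivity
  rw [h1, h2]; field_simp; norm_num

theorem oct_h_zero (m : ℕ) : hOct m 0 = 1 := by
  unfold hOct
  rw [oct_gamma_const]
  have : ∫ φ in (0 : ℝ)..π, sin φ ^ 5 = 16 / 15 := by
    rw [integral_sin_pow, integral_sin_pow]
    norm_num [integral_sin]
  simp [this]

theorem oct_h_eq (m : ℕ) (η : ℝ) (hη : sin η ≠ 0) :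
    ((m : ℝ) + 3) * ((m + 5).choose m : ℝ) * hOct m η = octD (m + 3) η / 8 := by
  have hch : ((m + 5).choose m : ℝ) = (m + 1) * (m + 2) * (m + 3) * (m + 4) * (m + 5) / 120 := by
    have h := Nat.descFactorial_eq_factorial_mul_choose (m + 5) 5
    rw [← Nat.choose_symm_add] at h
    have h2 : ((m + 5).descFactorial 5 : ℝ) = ((5).factorial : ℝ) * ((m + 5).choose m : ℝ) := by
      exact_mod_cast h
    simp [Nat.descFactorial_succ, Nat.factorial] at h2
    linear_combination (-1 / 120 : ℝ) * h2
  set s := sin η with hs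
  set c := cos η with hc
  have hsC : (s : ℂ) ≠ 0 := by exact_mod_cast hη
  have hm1 : (m + 1 : ℂ) ≠ 0 := by exact_mod_cast Nat.succ_ne_zero m
  have hm2 : (m + 2 : ℂ) ≠ 0 := by exact_mod_cast Nat.succ_ne_zero (m + 1)
  have hm3 : (m + 3 : ℂ) ≠ 0 := by exact_mod_cast Nat.succ_ne_zero (m + 2)
  have hm4 : (m + 4 : ℂ) ≠ 0 := by exact_mod_cast Nat.succ_ne_zero (m + 3)
  have hm5 : (m + 5 : ℂ) ≠ 0 := by exact_mod_cast Nat.succ_ne_zero (m + 4)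
  have key : ((∫ φ in (0 : ℝ)..π, (((c : ℂ) + Complex.I * ((s * cos φ : ℝ) : ℂ)) ^ m).re * sin φ ^ 5 : ℝ) : ℂ)
     = ((-16 * sin ((m + 3) * η) / ((m + 1) * (m + 2) * (m + 3) * s ^ 3)
       - 48 * cos ((m + 4) * η) / ((m + 1) * (m + 2) * (m + 3) * (m + 4) * s ^ 4)
       + 48 * sin ((m + 5) * η) / ((m + 1) * (m + 2) * (m + 3) * (m + 4) * (m + 5) * s ^ 5) : ℝ) : ℂ) := by
    have hI := oct_int_aux m c s (1 / ((m + 1) * (Complex.I * s)))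
      (1 / ((m + 1) * (m + 2) * (Complex.I * s) ^ 2))
      (1 / ((m + 1) * (m + 2) * (m + 3) * (Complex.I * s) ^ 3))
      (1 / ((m + 1) * (m + 2) * (m + 3) * (m + 4) * (Complex.I * s) ^ 4))
      (1 / ((m + 1) * (m + 2) * (m + 3) * (m + 4) * (m + 5) * (Complex.I * s) ^ 5))
      (by field_simp) (by field_simp) (by field_simp) (by field_simp) (by field_simp)
    have hep : ∀ n : ℕ, ((c : ℂ) + Complex.I * s) ^ n = cos (n * η) + Complex.I * sin (n * η) := by
      intro n
      have := Complex.cos_add_sin_mul_I_pow n η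
      rw [hc, hs]; push_cast
      rw [mul_comm Complex.I, this]; ring
    have hem : ∀ n : ℕ, ((c : ℂ) - Complex.I * s) ^ n = cos (n * η) - Complex.I * sin (n * η) := by
      intro n
      have := Complex.cos_add_sin_mul_I_pow n (-η)
      rw [hc, hs]; push_cast
      simp only [Complex.cos_neg, Complex.sin_neg, mul_neg] at this
      rw [sub_eq_add_neg, show -(Complex.I * Complex.sin η) = -Complex.sin η * Complex.I by ring, this]; ring
    rw [hep, hep, hep, hem, hem, hem] at hI
    have hI2 : ((∫ φ in (0 : ℝ)..π, (((c : ℂ) + Complex.I * ((s * cos φ : ℝ) : ℂ)) ^ m).re * sin φ ^ 5 : ℝ))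
       = (∫ φ in (0 : ℝ)..π, ((c : ℂ) + Complex.I * (s * Complex.cos φ)) ^ m * Complex.sin φ ^ 5).re := by
      have hcl := Complex.reCLM.intervalIntegral_comp_comm (μ := volume) (a := 0) (b := π)
        (f := fun φ : ℝ => ((c : ℂ) + Complex.I * (s * Complex.cos φ)) ^ m * Complex.sin φ ^ 5)
        (by apply Continuous.intervalIntegrable; fun_prop)
      rw [Complex.reCLM_apply] at hcl
      rw [← hcl]
      congr 1
      ext φ
      simp only [Complex.reCLM_apply]
      rw [← Complex.ofReal_sin, ← Complex.ofReal_pow, Complex.re_mul_ofReal]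
      push_cast; rfl
    rw [hI2]
    have hI3 : (∫ φ in (0 : ℝ)..π, ((c : ℂ) + Complex.I * (s * Complex.cos φ)) ^ m * Complex.sin φ ^ 5)
       = ((-16 * sin ((m + 3) * η) / ((m + 1) * (m + 2) * (m + 3) * s ^ 3)
       - 48 * cos ((m + 4) * η) / ((m + 1) * (m + 2) * (m + 3) * (m + 4) * s ^ 4)
       + 48 * sin ((m + 5) * η) / ((m + 1) * (m + 2) * (m + 3) * (m + 4) * (m + 5) * s ^ 5) : ℝ) : ℂ) := by
      rw [hI]
      push_cast
      simp only [mul_pow, Complex.I_pow_three, Complex.I_pow_four, show Complex.I ^ 5 = Complex.I by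
        rw [show Complex.I ^ 5 = Complex.I ^ 4 * Complex.I by ring, Complex.I_pow_four, one_mul]]
      field_simp
      ring_nf
    rw [hI3, Complex.ofReal_re]
  have key := Complex.ofReal_injective key
  unfold hOct
  rw [oct_gamma_const, key, hch]
  unfold octD
  rw [← hs, ← hc]
  rw [show ((m : ℝ) + 5) * η = ((m : ℝ) + 3) * η + 2 * η by ring,
    show ((m : ℝ) + 4) * η = ((m : ℝ) + 3) * η + η by ring, Real.sin_add, Real.cos_add,
    Real.sin_two_mul, Real.cos_two_mul, ← hs, ← hc]
  set S := sin (((m : ℝ) + 3) * η)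
  set C := cos (((m : ℝ) + 3) * η)
  have hsc : c ^ 2 = 1 - s ^ 2 := by rw [hs, hc, Real.cos_sq']
  field_simp
  ring_nf
  simp only [hsc]
  ring

theorem oct_tendsto_pow_cexp (w : ℂ) (hw : 0 < w.re) (k : ℕ) :
    Tendsto (fun s : ℝ => (s : ℂ) ^ k * Complex.exp (-w * s)) atTop (𝓝 0) := by
  rw [tendsto_zero_iff_norm_tendsto_zero]
  have h := (isLittleO_pow_exp_pos_mul_atTop (k := k) hw).tendsto_div_nhds_zero
  refine h.congr' ?_
  filter_upwards [eventually_ge_atTop 0] with s hs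
  rw [norm_mul, norm_pow, Complex.norm_real, Complex.norm_exp, Real.norm_of_nonneg hs]
  simp [Real.exp_neg, div_eq_mul_inv]

theorem oct_integral_sq (w : ℂ) (hw : 0 < w.re) :
    ∫ s in Set.Ioi (0 : ℝ), (s : ℂ) ^ 2 * Complex.exp (-w * s) = 2 / w ^ 3 := by
  have hw0 : w ≠ 0 := by rintro rfl; simp at hw
  have h := integral_Ioi_of_hasDerivAt_of_tendsto' (a := 0) (m := (0 : ℂ))
    (f := fun s : ℝ => -(Complex.exp (-w * s) * ((s : ℂ) ^ 2 / w + 2 * s / w ^ 2 + 2 / w ^ 3)))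
    (f' := fun s : ℝ => (s : ℂ) ^ 2 * Complex.exp (-w * s)) ?_ ?_ ?_
  · rw [h]; simp
  · intro x _
    have : HasDerivAt (fun s : ℂ => -(Complex.exp (-w * s) * (s ^ 2 / w + 2 * s / w ^ 2 + 2 / w ^ 3)))
        ((x : ℂ) ^ 2 * Complex.exp (-w * x)) (x : ℂ) := by
      have h1 : HasDerivAt (fun s : ℂ => Complex.exp (-w * s)) (Complex.exp (-w * x) * (-w * 1)) (x : ℂ) :=
        ((hasDerivAt_id (x : ℂ)).const_mul (-w)).cexp
      have h2 : HasDerivAt (fun s : ℂ => s ^ 2 / w + 2 * s / w ^ 2 + 2 / w ^ 3)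
          ((2 * (x : ℂ)) / w + 2 * 1 / w ^ 2) (x : ℂ) := by
        have := ((((hasDerivAt_id (x : ℂ)).pow 2).div_const w).add
          (((hasDerivAt_id (x : ℂ)).const_mul 2).div_const (w ^ 2))).add_const (2 / w ^ 3)
        refine this.congr_deriv ?_
        simp
      refine (h1.mul h2).neg.congr_deriv ?_
      field_simp
      ring
    exact this.comp_ofReal
  · have := integrableOn_rpow_mul_exp_neg_mul_rpow (p := 1) (s := 2) (b := w.re) (by norm_num) (by norm_num) hw
    refine Integrable.mono' this ?_ ?_
    · apply Continuous.aestronglyMeasurable; fun_prop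
    · filter_upwards [ae_restrict_mem measurableSet_Ioi] with s hs
      rw [norm_mul, norm_pow, Complex.norm_real, Complex.norm_exp, Real.norm_of_nonneg (le_of_lt hs)]
      simp
  · have h0 := oct_tendsto_pow_cexp w hw 0
    have h1 := oct_tendsto_pow_cexp w hw 1
    have h2 := oct_tendsto_pow_cexp w hw 2
    have := ((h2.div_const w).add ((h1.const_mul (2 / w ^ 2)).add (h0.const_mul (2 / w ^ 3)))).neg
    simp only [zero_div, mul_zero, add_zero, neg_zero] at this
    refine this.congr fun s => ?_
    field_simp
    ring

theorem oct_summable_inv_cube (w : ℂ) :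
    Summable (fun n : ℤ => 1 / (w + 2 * π * Complex.I * n) ^ 3) := by
  have h := (EisensteinSeries.linear_right_summable (w / (2 * π * Complex.I)) 1 (k := 3) (by norm_num)).mul_left
    (1 / (2 * π * Complex.I) ^ 3)
  refine h.congr fun n => ?_
  have hpi : (2 * π * Complex.I : ℂ) ≠ 0 := by simp [Real.pi_ne_zero]
  have : w + 2 * π * Complex.I * n = (2 * π * Complex.I) * (w / (2 * π * Complex.I) + n) := by
    field_simp
  rw [this, show (3 : ℤ) = ((3 : ℕ) : ℤ) by norm_num, zpow_natCast, Int.cast_one, one_mul, one_div, one_div, ← mul_inv, ← mul_pow]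

theorem oct_lipschitz (w : ℂ) (hw : 0 < w.re) (θ : ℝ) (h0 : 0 ≤ θ) (h1 : θ < 1) :
    ∑' n : ℕ, ((n + θ : ℝ) : ℂ) ^ 2 * Complex.exp (-w * ((n + θ : ℝ) : ℂ)) =
      2 * ∑' a : ℤ, Complex.exp (2 * π * Complex.I * a * θ) / (w + 2 * π * Complex.I * a) ^ 3 := by
  set f : ℝ → ℂ := fun s => ((max s 0 : ℝ) : ℂ) ^ 2 * Complex.exp (-w * s) with hf
  have hfour : ∀ n : ℤ, FourierTransform.fourier f (n : ℝ) = 2 / (w + 2 * π * Complex.I * n) ^ 3 := by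
    intro n
    rw [Real.fourier_real_eq_integral_exp_smul, ← oct_integral_sq _ (by simpa using hw),
      ← integral_indicator measurableSet_Ioi]
    congr 1
    ext s
    by_cases hs : 0 < s
    · rw [Set.indicator_of_mem (by exact hs), hf]
      simp only [smul_eq_mul, max_eq_left hs.le]
      rw [mul_left_comm, ← Complex.exp_add]
      congr 2
      push_cast; ring
    · rw [Set.indicator_of_notMem (by exact hs), hf]
      simp [max_eq_right (not_lt.1 hs)]
  have hP := Real.tsum_eq_tsum_fourier_of_rpow_decay_of_summable (f := f) (by fun_prop)
    (b := 2) (by norm_num) ?_ ?_ θ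
  · simp only [hfour, fourier_coe_apply] at hP
    have e1 : ∑' n : ℤ, f (θ + n) = ∑' n : ℕ, ((n + θ : ℝ) : ℂ) ^ 2 * Complex.exp (-w * ((n + θ : ℝ) : ℂ)) := by
      have hinj : Function.Injective (fun n : ℕ => (n : ℤ)) := Nat.cast_injective
      rw [← hinj.tsum_eq]
      · refine tsum_congr fun n => ?_
        have : (0 : ℝ) ≤ θ + n := by positivity
        simp only [hf, Int.cast_natCast, max_eq_left this]
        rw [add_comm]
      · intro n hn
        by_contra hc
        apply hn
        have : n < 0 := by
          by_contra hh
          exact hc ⟨n.toNat, by simp; omega⟩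
        have h3 : (n : ℝ) ≤ -1 := by exact_mod_cast (by omega : n ≤ -1)
        simp only [hf]
        rw [max_eq_right (by linarith)]
        simp
    rw [← e1, hP, ← tsum_mul_left]
    refine tsum_congr fun a => ?_
    simp only [Complex.ofReal_one, div_one]
    ring
  · rw [cocompact_eq_atBot_atTop, Asymptotics.isBigO_sup]
    constructor
    · refine (Asymptotics.isBigO_zero (E' := ℂ) _ _).congr' ?_ EventuallyEq.rfl
      filter_upwards [eventually_le_atBot 0] with s hs
      simp [hf, max_eq_right hs]
    · have h2 := (oct_tendsto_pow_cexp w hw 4)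
      refine Asymptotics.IsBigO.of_bound 1 ?_
      filter_upwards [eventually_gt_atTop 0, (tendsto_zero_iff_norm_tendsto_zero.1 h2).eventually
        (eventually_le_nhds zero_lt_one)] with s hs hs2
      simp only [hf, max_eq_left hs.le]
      rw [norm_mul, norm_pow, Complex.norm_real, Real.norm_of_nonneg hs.le] at hs2 ⊢
      rw [abs_of_pos hs, one_mul, Real.rpow_neg hs.le, norm_inv, Real.norm_of_nonneg (by positivity)]
      rw [show (2 : ℝ) = ((2 : ℕ) : ℝ) by norm_num, Real.rpow_natCast, ← one_div, le_div_iff₀ (by positivity)]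
      calc _ = s ^ 4 * ‖Complex.exp (-w * s)‖ := by ring
        _ ≤ 1 := hs2
  · refine ((oct_summable_inv_cube w).mul_left 2).congr fun n => ?_
    rw [hfour]; ring

noncomputable def octL (μ ν : ℕ) (φ t x y : ℝ) : ℝ :=
  ∑' p : ℕ × ℕ, ((p.1 : ℝ) + 1) ^ μ * ((p.2 : ℝ) + 1) ^ ν *
    exp (-(4 * ((p.1 : ℝ) + 1) * ((p.2 : ℝ) + 1) * t)) * sin (((p.1 : ℝ) + 1) * x + ((p.2 : ℝ) + 1) * y + φ)

noncomputable def octM (i j : ℕ) (τ x y : ℝ) : ℝ :=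
  ∑' p : ℕ × ℕ, (x + 2 * π * (p.1 : ℝ)) ^ i * (y + 2 * π * (p.2 : ℝ)) ^ j *
    exp (-(τ * (x + 2 * π * (p.1 : ℝ)) * (y + 2 * π * (p.2 : ℝ))))

theorem oct_summable_lin_pow_exp (A B c : ℝ) (i : ℕ) (hB : 0 < B) (hc : 0 < c) :
    Summable (fun n : ℕ => |A + B * n| ^ i * exp (-(c * (A + B * n)))) := by
  have h : ∀ n : ℕ, |A + B * n| ^ i * exp (-(c * (A + B * n))) ≤
      ((|A| + B) ^ i * exp (-(c * A)) * exp (c * B)) * (((n + 1 : ℕ) : ℝ) ^ i * exp (-(c * B) * ((n + 1 : ℕ) : ℝ))) := by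
    intro n
    have h1 : |A + B * n| ≤ (|A| + B) * ((n + 1 : ℕ) : ℝ) := by
      refine (abs_add_le _ _).trans ?_
      rw [abs_of_nonneg (by positivity : 0 ≤ B * n)]
      push_cast
      nlinarith [abs_nonneg A, mul_nonneg (abs_nonneg A) (Nat.cast_nonneg (α := ℝ) n)]
    have h2 : exp (-(c * (A + B * n))) = exp (-(c * A)) * exp (c * B) * exp (-(c * B) * ((n + 1 : ℕ) : ℝ)) := by
      rw [← exp_add, ← exp_add]; congr 1; push_cast; ring
    rw [h2]
    calc _ ≤ ((|A| + B) * ((n + 1 : ℕ) : ℝ)) ^ i * (exp (-(c * A)) * exp (c * B) * exp (-(c * B) * ((n + 1 : ℕ) : ℝ))) := by gcongr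
      _ = _ := by rw [mul_pow]; ring
  refine Summable.of_nonneg_of_le (fun n => by positivity) h ?_
  exact (((Real.summable_pow_mul_exp_neg_nat_mul i (r := c * B) (by positivity)).comp_injective
    (add_left_injective 1)).mul_left _)

theorem oct_summable_L (μ ν : ℕ) (t : ℝ) (ht : 0 < t) :
    Summable (fun p : ℕ × ℕ => ((p.1 : ℝ) + 1) ^ μ * ((p.2 : ℝ) + 1) ^ ν *
      exp (-(4 * ((p.1 : ℝ) + 1) * ((p.2 : ℝ) + 1) * t))) := by
  have h1 := oct_summable_lin_pow_exp 1 1 (2 * t) μ one_pos (by positivity)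
  have h2 := oct_summable_lin_pow_exp 1 1 (2 * t) ν one_pos (by positivity)
  have h := h1.mul_of_nonneg h2 (fun n => by positivity) (fun n => by positivity)
  refine Summable.of_nonneg_of_le (fun n => by positivity) ?_ h
  intro p
  simp only [one_mul]
  rw [abs_of_nonneg (by positivity : (0 : ℝ) ≤ 1 + p.1), abs_of_nonneg (by positivity : (0 : ℝ) ≤ 1 + p.2)]
  calc _ ≤ ((p.1 : ℝ) + 1) ^ μ * ((p.2 : ℝ) + 1) ^ ν * exp (-(2 * t * (1 + p.1)) + -(2 * t * (1 + p.2))) := by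
        gcongr
        have a1 : (0 : ℝ) ≤ p.1 := by positivity
        have a2 : (0 : ℝ) ≤ p.2 := by positivity
        nlinarith [mul_nonneg a1 a2, mul_nonneg (mul_nonneg a1 a2) ht.le, mul_nonneg a1 ht.le, mul_nonneg a2 ht.le]
    _ = _ := by rw [exp_add, add_comm (p.1 : ℝ), add_comm (p.2 : ℝ)]; ring

theorem oct_summable_M (i j : ℕ) (τ δ A B : ℝ) (hτ : 0 < τ) (hδ : 0 < δ) :
    Summable (fun p : ℕ × ℕ => |A + 2 * π * (p.1 : ℝ)| ^ i * |B + 2 * π * (p.2 : ℝ)| ^ j *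
      exp (-(τ * (δ + 2 * π * (p.1 : ℝ)) * (δ + 2 * π * (p.2 : ℝ))))) := by
  have h1 := oct_summable_lin_pow_exp A (2 * π) (τ * δ / 2) i (by positivity) (by positivity)
  have h2 := oct_summable_lin_pow_exp B (2 * π) (τ * δ / 2) j (by positivity) (by positivity)
  have h := (h1.mul_of_nonneg h2 (fun n => by positivity) (fun n => by positivity)).mul_left
    (exp (τ * δ / 2 * A) * exp (τ * δ / 2 * B))
  refine Summable.of_nonneg_of_le (fun n => by positivity) ?_ h
  intro p
  have a1 : (0 : ℝ) ≤ p.1 := by positivity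
  have a2 : (0 : ℝ) ≤ p.2 := by positivity
  have e : (exp (τ * δ / 2 * A) * exp (τ * δ / 2 * B)) *
     ((|A + 2 * π * (p.1 : ℝ)| ^ i * exp (-(τ * δ / 2 * (A + 2 * π * p.1)))) *
      (|B + 2 * π * (p.2 : ℝ)| ^ j * exp (-(τ * δ / 2 * (B + 2 * π * p.2))))) =
     |A + 2 * π * (p.1 : ℝ)| ^ i * |B + 2 * π * (p.2 : ℝ)| ^ j *
      exp (-(τ * (δ / 2 * (2 * π * p.1) + δ / 2 * (2 * π * p.2)))) := by
    rw [show -(τ * (δ / 2 * (2 * π * p.1) + δ / 2 * (2 * π * p.2))) =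
      τ * δ / 2 * A + τ * δ / 2 * B + (-(τ * δ / 2 * (A + 2 * π * p.1)) + -(τ * δ / 2 * (B + 2 * π * p.2))) by ring,
      exp_add, exp_add, exp_add]
    ring
  rw [e]
  gcongr _ * exp (-?_)
  have b1 : 0 ≤ 2 * π * (p.1 : ℝ) := by positivity
  have b2 : 0 ≤ 2 * π * (p.2 : ℝ) := by positivity
  rw [mul_assoc τ (δ + 2 * π * (p.1 : ℝ))]
  refine mul_le_mul_of_nonneg_left ?_ hτ.le
  nlinarith [mul_nonneg b1 b2, mul_nonneg b1 hδ.le, mul_nonneg b2 hδ.le]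

theorem oct_tsum_int (F : ℤ → ℂ) (hF : Summable F) :
    ∑' a : ℤ, F a = F 0 + ∑' n : ℕ, (F (n + 1) + F (-(n + 1))) := by
  have h1 : Summable (fun n : ℕ => F n) := hF.comp_injective Nat.cast_injective
  have h2 : Summable (fun n : ℕ => F (-((n : ℤ) + 1))) :=
    hF.comp_injective (i := fun n : ℕ => -((n : ℤ) + 1)) (by intro a b h; simpa using h)
  have h3 : Summable (fun n : ℕ => F ((n : ℤ) + 1)) :=
    hF.comp_injective (i := fun n : ℕ => ((n : ℤ) + 1)) (by intro a b h; simpa using h)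
  rw [tsum_of_nat_of_neg_add_one h1 h2, h1.tsum_eq_zero_add, (Summable.tsum_add h3 h2)]
  push_cast
  rw [add_assoc]

theorem oct_tsum_int' (F : ℤ → ℂ) (hF : Summable F) :
    ∑' a : ℤ, F a = ∑' n : ℕ, F (-n) + ∑' n : ℕ, F (n + 1) := by
  have h1 : Summable (fun n : ℕ => F (-(n : ℤ))) :=
    hF.comp_injective (i := fun n : ℕ => -(n : ℤ)) (by intro a b h; simpa using h)
  have h3 : Summable (fun n : ℕ => F ((n : ℤ) + 1)) :=
    hF.comp_injective (i := fun n : ℕ => ((n : ℤ) + 1)) (by intro a b h; simpa using h)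
  have := tsum_of_nat_of_neg_add_one (f := fun a => F (-a)) h1 (by simpa using h3)
  rw [← (Equiv.neg ℤ).tsum_eq]
  simpa using this

theorem oct_summable_int_rpow : Summable (fun a : ℤ => (1 + |(a : ℝ)|) ^ (-(3 / 2) : ℝ)) := by
  have h : Summable (fun n : ℕ => (1 + |((n : ℤ) : ℝ)|) ^ (-(3 / 2) : ℝ)) := by
    have := (Real.summable_nat_rpow (p := -(3 / 2))).2 (by norm_num)
    refine (this.comp_injective (add_left_injective 1)).congr fun n => ?_
    simp [add_comm]
  refine Summable.of_nat_of_neg h ?_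
  simpa using h

theorem oct_summable_G (t x y : ℝ) (ht : 0 < t) (hy : 0 < y) (hy2 : y < 2 * π) :
    Summable (fun p : ℤ × ℤ => Complex.exp (Complex.I * p.1 * x) /
      (4 * p.1 * t - Complex.I * y + 2 * π * Complex.I * p.2) ^ 3) := by
  have hs := oct_summable_int_rpow.mul_of_nonneg oct_summable_int_rpow
    (fun n => by positivity) (fun n => by positivity)
  obtain ⟨κ, hκ, hκ1, hκ2, hκ3⟩ : ∃ κ : ℝ, 0 < κ ∧ κ ≤ 4 * t ∧ κ ≤ y / 2 ∧ κ ≤ (2 * π - y) / 2 :=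
    ⟨min (4 * t) (min (y / 2) ((2 * π - y) / 2)), by
      refine lt_min (by linarith) (lt_min (by linarith) (by linarith)), min_le_left _ _,
      (min_le_right _ _).trans (min_le_left _ _), (min_le_right _ _).trans (min_le_right _ _)⟩
  refine Summable.of_norm_bounded ((hs.mul_left (1 / (2 * κ ^ 2 / 3) ^ (3 / 2 : ℝ)))) ?_
  rintro ⟨a, N⟩
  simp only
  rw [norm_div, norm_pow]
  have hn1 : ‖Complex.exp (Complex.I * a * x)‖ = 1 := by
    rw [show Complex.I * a * x = ((a * x : ℝ) : ℂ) * Complex.I by push_cast; ring]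
    exact Complex.norm_exp_ofReal_mul_I _
  rw [hn1]
  set W := (4 * a * t - Complex.I * y + 2 * π * Complex.I * N : ℂ) with hW
  have hsq : ‖W‖ ^ 2 = (4 * a * t) ^ 2 + (2 * π * N - y) ^ 2 := by
    have : W = ((4 * a * t : ℝ) : ℂ) + ((2 * π * N - y : ℝ) : ℂ) * Complex.I := by
      rw [hW]; push_cast; ring
    rw [this, Complex.sq_norm, Complex.normSq_add_mul_I]
  have hN : κ * (1 + |(N : ℝ)|) ≤ |2 * π * N - y| := by
    rcases le_or_gt N 0 with h | h
    · have h' : (N : ℝ) ≤ 0 := by exact_mod_cast h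
      rw [abs_of_nonpos h', abs_of_nonpos (by nlinarith [Real.pi_pos])]
      nlinarith [Real.pi_pos]
    · have h' : (1 : ℝ) ≤ N := by exact_mod_cast h
      rw [abs_of_nonneg (by linarith : (0 : ℝ) ≤ N), abs_of_nonneg (by nlinarith [Real.pi_pos])]
      nlinarith [Real.pi_pos]
  have hN2 : (κ * (1 + |(N : ℝ)|)) ^ 2 ≤ (2 * π * N - y) ^ 2 := by
    rw [← sq_abs (2 * π * N - y)]
    exact pow_le_pow_left₀ (by positivity) hN 2
  have hA2 : (κ * |(a : ℝ)|) ^ 2 ≤ (4 * a * t) ^ 2 := by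
    rw [show (4 * a * t) ^ 2 = (4 * t * |(a : ℝ)|) ^ 2 by rw [mul_pow _ |(a : ℝ)|, sq_abs]; ring]
    exact pow_le_pow_left₀ (by positivity) (mul_le_mul_of_nonneg_right hκ1 (abs_nonneg _)) 2
  have hlow : (2 * κ ^ 2 / 3) * ((1 + |(a : ℝ)|) * (1 + |(N : ℝ)|)) ≤ ‖W‖ ^ 2 := by
    rw [hsq]
    refine le_trans ?_ (add_le_add hA2 hN2)
    have q1 := abs_nonneg (a : ℝ)
    have q2 := abs_nonneg (N : ℝ)
    have : (2 / 3) * ((1 + |(a : ℝ)|) * (1 + |(N : ℝ)|)) ≤ |(a : ℝ)| ^ 2 + (1 + |(N : ℝ)|) ^ 2 := by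
      nlinarith [sq_nonneg (|(a : ℝ)| - |(N : ℝ)|), sq_nonneg (|(a : ℝ)| - 1)]
    calc _ = κ ^ 2 * ((2 / 3) * ((1 + |(a : ℝ)|) * (1 + |(N : ℝ)|))) := by ring
      _ ≤ κ ^ 2 * (|(a : ℝ)| ^ 2 + (1 + |(N : ℝ)|) ^ 2) := by gcongr
      _ = _ := by ring
  have hcube : ‖W‖ ^ 3 = (‖W‖ ^ 2) ^ (3 / 2 : ℝ) := by
    rw [← Real.rpow_natCast, ← Real.rpow_natCast, ← Real.rpow_mul (norm_nonneg _)]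
    norm_num
  have h3 := Real.rpow_le_rpow (by positivity) hlow (by norm_num : (0 : ℝ) ≤ 3 / 2)
  rw [← hcube, Real.mul_rpow (by positivity) (by positivity), Real.mul_rpow (by positivity) (by positivity)] at h3
  rw [Real.rpow_neg (by positivity), Real.rpow_neg (by positivity)]
  calc 1 / ‖W‖ ^ 3 ≤ 1 / ((2 * κ ^ 2 / 3) ^ (3 / 2 : ℝ) * ((1 + |(a : ℝ)|) ^ (3 / 2 : ℝ) * (1 + |(N : ℝ)|) ^ (3 / 2 : ℝ))) := by
        gcongr
    _ = _ := by
      rw [one_div, mul_inv, mul_inv]; ring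

/-- inner sum over `N` for positive `a`. -/
theorem oct_inner_N (w : ℂ) (hw : 0 < w.re) :
    ∑' N : ℤ, 1 / (w + 2 * π * Complex.I * N) ^ 3 =
      1 / 2 * ∑' b : ℕ, ((b : ℂ) + 1) ^ 2 * Complex.exp (-w * ((b : ℂ) + 1)) := by
  have h := oct_lipschitz w hw 0 le_rfl one_pos
  simp only [Complex.ofReal_zero, mul_zero, Complex.exp_zero, add_zero] at h
  have hs : Summable (fun n : ℕ => ((n : ℝ) : ℂ) ^ 2 * Complex.exp (-w * ((n : ℝ) : ℂ))) := by
    refine Summable.of_norm_bounded (Real.summable_pow_mul_exp_neg_nat_mul 2 hw) fun n => ?_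
    rw [norm_mul, norm_pow, Complex.norm_exp]
    simp
  rw [hs.tsum_eq_zero_add] at h
  simp only [Nat.cast_zero, Complex.ofReal_zero, ne_eq, OfNat.ofNat_ne_zero, not_false_eq_true,
    zero_pow, zero_mul, zero_add] at h
  push_cast at h
  rw [h]; ring

theorem oct_inner_N_neg (w : ℂ) (hw : 0 < w.re) :
    ∑' N : ℤ, 1 / (-w + 2 * π * Complex.I * N) ^ 3 =
      -(1 / 2 * ∑' b : ℕ, ((b : ℂ) + 1) ^ 2 * Complex.exp (-w * ((b : ℂ) + 1))) := by
  rw [← oct_inner_N w hw, ← (Equiv.neg ℤ).tsum_eq, ← tsum_neg]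
  refine tsum_congr fun N => ?_
  simp only [Equiv.neg_apply, Int.cast_neg]
  rw [show -w + 2 * π * Complex.I * -(N : ℂ) = -(w + 2 * π * Complex.I * N) by ring]
  rw [Odd.neg_pow (by decide), one_div, one_div, inv_neg]

theorem oct_inner_a (t x Y : ℝ) (ht : 0 < t) (hx : 0 < x) (hx2 : x < 2 * π) (hY : 0 < Y) :
    ∑' a : ℤ, Complex.exp (Complex.I * a * x) / (4 * a * t - Complex.I * Y) ^ 3 =
      -(π * Complex.I * ((1 / (4 * t) : ℝ) : ℂ) ^ 3) *
        ((∑' n : ℕ, (x + 2 * π * n) ^ 2 * exp (-((1 / (4 * t)) * (x + 2 * π * n) * Y)) : ℝ) : ℂ) := by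
  have hpi := Real.pi_pos
  have h := oct_lipschitz ((2 * π * (1 / (4 * t)) * Y : ℝ) : ℂ) (by rw [Complex.ofReal_re]; positivity)
    (x / (2 * π)) (by positivity) (by rw [div_lt_one (by positivity)]; exact hx2)
  have e2 : ((∑' n : ℕ, (x + 2 * π * n) ^ 2 * exp (-((1 / (4 * t)) * (x + 2 * π * n) * Y)) : ℝ) : ℂ) =
      (4 * π ^ 2) * ∑' n : ℕ, ((n + x / (2 * π) : ℝ) : ℂ) ^ 2 *
        Complex.exp (-((2 * π * (1 / (4 * t)) * Y : ℝ) : ℂ) * ((n + x / (2 * π) : ℝ) : ℂ)) := by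
    rw [Complex.ofReal_tsum, ← tsum_mul_left]
    refine tsum_congr fun n => ?_
    have : x + 2 * π * n = (2 * π) * (n + x / (2 * π)) := by field_simp; ring
    rw [this]
    push_cast
    rw [show -(1 / (4 * (t : ℂ)) * (2 * π * (n + x / (2 * π))) * Y) =
      -(2 * π * (1 / (4 * t)) * Y) * (n + x / (2 * π)) by ring]
    ring
  rw [e2, h, ← mul_assoc, ← mul_assoc, ← tsum_mul_left]
  refine tsum_congr fun a => ?_
  have hpiC : (π : ℂ) ≠ 0 := by exact_mod_cast hpi.ne'
  have htC : (t : ℂ) ≠ 0 := by exact_mod_cast ht.ne'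
  have hD : (4 * a * t - Complex.I * Y : ℂ) = (4 * t / (2 * π * Complex.I)) *
      (((2 * π * (1 / (4 * t)) * Y : ℝ) : ℂ) + 2 * π * Complex.I * a) := by
    push_cast
    field_simp
    linear_combination (-(Y : ℂ)) * Complex.I_sq
  rw [hD, show (2 * π * Complex.I * a * ((x / (2 * π) : ℝ) : ℂ) : ℂ) = Complex.I * a * x by
    push_cast; field_simp]
  set q := (((2 * π * (1 / (4 * t)) * Y : ℝ) : ℂ) + 2 * π * Complex.I * a) with hq
  rw [mul_pow, div_pow, mul_pow (2 * (π : ℂ)), Complex.I_pow_three]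
  push_cast
  have hI : Complex.I ≠ 0 := Complex.I_ne_zero
  by_cases hq0 : q = 0
  · rw [hq0]; simp
  · field_simp
    ring

theorem oct_inner_a_neg (t x Y : ℝ) (ht : 0 < t) (hx : 0 < x) (hx2 : x < 2 * π) (hY : 0 < Y) :
    ∑' a : ℤ, Complex.exp (Complex.I * a * x) / (4 * a * t + Complex.I * Y) ^ 3 =
      (π * Complex.I * ((1 / (4 * t) : ℝ) : ℂ) ^ 3) *
        ((∑' n : ℕ, (2 * π - x + 2 * π * n) ^ 2 * exp (-((1 / (4 * t)) * (2 * π - x + 2 * π * n) * Y)) : ℝ) : ℂ) := by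
  have h := oct_inner_a t (2 * π - x) Y ht (by linarith) (by linarith) hY
  rw [neg_mul] at h
  rw [← neg_eq_iff_eq_neg] at h
  rw [← h, ← (Equiv.neg ℤ).tsum_eq, ← tsum_neg]
  refine tsum_congr fun a => ?_
  simp only [Equiv.neg_apply, Int.cast_neg]
  rw [show (4 * (-(a : ℂ)) * t + Complex.I * Y) = -(4 * a * t - Complex.I * Y) by ring,
    Odd.neg_pow (by decide), div_neg]
  congr 2
  rw [show Complex.I * a * ((2 * π - x : ℝ) : ℂ) = Complex.I * -a * x + a * (2 * π * Complex.I) by push_cast; ring,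
    Complex.exp_add, Complex.exp_int_mul_two_pi_mul_I, mul_one]

theorem oct_dual_base (t y : ℝ) (ht : 0 < t) (hy : 0 < y) (hy2 : y < 2 * π) :
    ∃ z : ℝ, ∀ x : ℝ, 0 < x → x < 2 * π →
      octL 0 2 0 t x y = -(π * (1 / (4 * t)) ^ 3) *
        (octM 2 0 (1 / (4 * t)) x y - octM 2 0 (1 / (4 * t)) (2 * π - x) (2 * π - y)) + z := by
  have hpi := Real.pi_pos
  set Z0 : ℂ := ∑' N : ℤ, 1 / (-Complex.I * y + 2 * π * Complex.I * N) ^ 3 with hZ0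
  refine ⟨-Z0.im, fun x hx hx2 => ?_⟩
  have hG := oct_summable_G t x y ht hy hy2
  set G : ℤ → ℤ → ℂ := fun a N => Complex.exp (Complex.I * a * x) /
      (4 * a * t - Complex.I * y + 2 * π * Complex.I * N) ^ 3 with hGdef
  have hG' : Summable (Function.uncurry G) := hG
  have hcomm := hG'.tsum_comm.symm
  have hsa : Summable (fun a => ∑' N, G a N) := hG'.prod
  have hsN : Summable (fun N => ∑' a, G a N) := hG'.prod_symm.prod
  -- left side
  have hL : ∑' a, ∑' N, G a N = Z0 + Complex.I * (octL 0 2 0 t x y : ℂ) := by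
    rw [oct_tsum_int _ hsa]
    congr 1
    · rw [hZ0]
      refine tsum_congr fun N => ?_
      simp [hGdef]
    · unfold octL
      have hsumL : Summable (fun p : ℕ × ℕ => ((p.1 : ℝ) + 1) ^ 0 * ((p.2 : ℝ) + 1) ^ 2 *
        exp (-(4 * ((p.1 : ℝ) + 1) * ((p.2 : ℝ) + 1) * t)) *
          sin (((p.1 : ℝ) + 1) * x + ((p.2 : ℝ) + 1) * y + 0)) := by
        refine Summable.of_norm_bounded (oct_summable_L 0 2 t ht) fun p => ?_
        rw [norm_mul, Real.norm_of_nonneg (by positivity)]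
        refine mul_le_of_le_one_right (by positivity) ?_
        exact Real.abs_sin_le_one _
      rw [hsumL.tsum_prod, Complex.ofReal_tsum, ← tsum_mul_left]
      refine tsum_congr fun n => ?_
      have hr : 0 < (4 * ((n : ℝ) + 1) * t) := by positivity
      have e1 : ∑' N, G ((n : ℤ) + 1) N = Complex.exp (Complex.I * ((n : ℂ) + 1) * x) *
          (1 / 2 * ∑' b : ℕ, ((b : ℂ) + 1) ^ 2 *
            Complex.exp (-(((4 * ((n : ℝ) + 1) * t : ℝ) : ℂ) - Complex.I * y) * ((b : ℂ) + 1))) := by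
        rw [← oct_inner_N _ (by simpa using hr), ← tsum_mul_left]
        refine tsum_congr fun N => ?_
        simp only [hGdef]
        push_cast
        ring
      have e2 : ∑' N, G (-((n : ℤ) + 1)) N = Complex.exp (-(Complex.I * ((n : ℂ) + 1) * x)) *
          (-(1 / 2 * ∑' b : ℕ, ((b : ℂ) + 1) ^ 2 *
            Complex.exp (-(((4 * ((n : ℝ) + 1) * t : ℝ) : ℂ) + Complex.I * y) * ((b : ℂ) + 1)))) := by
        rw [← oct_inner_N_neg _ (by simpa using hr), ← tsum_mul_left]
        refine tsum_congr fun N => ?_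
        simp only [hGdef]
        push_cast
        rw [show Complex.I * -((n : ℂ) + 1) * x = -(Complex.I * ((n : ℂ) + 1) * x) by ring]
        rw [show (4 * -((n : ℂ) + 1) * t - Complex.I * y) = -(4 * ((n : ℂ) + 1) * t + Complex.I * y) by ring]
        ring
      have hsb : ∀ w : ℂ, 0 < w.re → Summable (fun b : ℕ => ((b : ℂ) + 1) ^ 2 * Complex.exp (-w * ((b : ℂ) + 1))) := by
        intro w hw
        have := (Real.summable_pow_mul_exp_neg_nat_mul 2 hw).comp_injective (add_left_injective 1)
        refine Summable.of_norm_bounded this fun n => ?_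
        have hn : ‖(n : ℂ) + 1‖ = ((n + 1 : ℕ) : ℝ) := by
          rw [← Nat.cast_succ, Complex.norm_natCast]
        rw [norm_mul, norm_pow, Complex.norm_exp, hn]
        simp
      rw [e1, e2]
      rw [show ∀ u v p q : ℂ, u * (1 / 2 * p) + v * (-(1 / 2 * q)) = (1 / 2 * u) * p - (1 / 2 * v) * q by intros; ring]
      rw [← tsum_mul_left, ← tsum_mul_left,
        ← Summable.tsum_sub ((hsb _ (by simpa using hr)).mul_left _) ((hsb _ (by simpa using hr)).mul_left _),
        Complex.ofReal_tsum, ← tsum_mul_left]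
      refine tsum_congr fun b => ?_
      push_cast
      rw [Complex.sin]
      have hI : Complex.I ^ 2 = -1 := Complex.I_sq
      rw [show -(4 * ((n : ℂ) + 1) * t - Complex.I * y) * ((b : ℂ) + 1) =
         -(4 * ((n : ℂ) + 1) * ((b : ℂ) + 1) * t) + Complex.I * ((b : ℂ) + 1) * y by ring,
        show -(4 * ((n : ℂ) + 1) * t + Complex.I * y) * ((b : ℂ) + 1) =
         -(4 * ((n : ℂ) + 1) * ((b : ℂ) + 1) * t) + -(Complex.I * ((b : ℂ) + 1) * y) by ring,
        show -(((n : ℂ) + 1) * x + ((b : ℂ) + 1) * y + 0) * Complex.I =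
         -(Complex.I * ((n : ℂ) + 1) * x) + -(Complex.I * ((b : ℂ) + 1) * y) by ring,
        show (((n : ℂ) + 1) * x + ((b : ℂ) + 1) * y + 0) * Complex.I =
         (Complex.I * ((n : ℂ) + 1) * x) + (Complex.I * ((b : ℂ) + 1) * y) by ring]
      simp only [Complex.exp_add]
      generalize Complex.exp (-(4 * ((n : ℂ) + 1) * ((b : ℂ) + 1) * t)) = E0
      generalize Complex.exp (-(Complex.I * ((n : ℂ) + 1) * x)) = E1
      generalize Complex.exp (Complex.I * ((n : ℂ) + 1) * x) = E2
      generalize Complex.exp (-(Complex.I * ((b : ℂ) + 1) * y)) = E3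
      generalize Complex.exp (Complex.I * ((b : ℂ) + 1) * y) = E4
      linear_combination (((b : ℂ) + 1) ^ 2 * E0 * (E2 * E4 - E1 * E3) / 2) * hI
  -- right side
  have hR : ∑' N, ∑' a, G a N = -(π * Complex.I * ((1 / (4 * t) : ℝ) : ℂ) ^ 3) *
      ((octM 2 0 (1 / (4 * t)) x y - octM 2 0 (1 / (4 * t)) (2 * π - x) (2 * π - y) : ℝ) : ℂ) := by
    have hM : ∀ x' y' : ℝ, 0 < x' → 0 < y' → octM 2 0 (1 / (4 * t)) x' y' =
        ∑' N : ℕ, ∑' n : ℕ, (x' + 2 * π * n) ^ 2 * exp (-((1 / (4 * t)) * (x' + 2 * π * n) * (y' + 2 * π * N))) := by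
      intro x' y' hx' hy'
      unfold octM
      have hd : 0 < min x' y' := lt_min hx' hy'
      have hsum : Summable (fun p : ℕ × ℕ => (x' + 2 * π * (p.1 : ℝ)) ^ 2 * (y' + 2 * π * (p.2 : ℝ)) ^ 0 *
          exp (-((1 / (4 * t)) * (x' + 2 * π * (p.1 : ℝ)) * (y' + 2 * π * (p.2 : ℝ))))) := by
        refine Summable.of_nonneg_of_le (fun p => by positivity) (fun p => ?_)
          (oct_summable_M 2 0 (1 / (4 * t)) (min x' y') x' y' (by positivity) hd)
        rw [abs_of_nonneg (by positivity), abs_of_nonneg (by positivity)]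
        gcongr
        · exact min_le_left _ _
        · exact min_le_right _ _
      rw [hsum.tsum_prod]
      have hsum' : Summable (Function.uncurry fun n N : ℕ => (x' + 2 * π * (n : ℝ)) ^ 2 * (y' + 2 * π * (N : ℝ)) ^ 0 *
          exp (-((1 / (4 * t)) * (x' + 2 * π * (n : ℝ)) * (y' + 2 * π * (N : ℝ))))) := hsum
      rw [← hsum'.tsum_comm]
      simp
    rw [oct_tsum_int' _ hsN, hM x y hx hy, hM (2 * π - x) (2 * π - y) (by linarith) (by linarith),
      Complex.ofReal_sub, Complex.ofReal_tsum, Complex.ofReal_tsum, mul_sub, ← tsum_mul_left, ← tsum_mul_left,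
      sub_eq_add_neg, ← tsum_neg]
    congr 1
    · refine tsum_congr fun N => ?_
      rw [← oct_inner_a t x _ ht hx hx2 (by positivity)]
      refine tsum_congr fun a => ?_
      simp only [hGdef]
      congr 2
      push_cast; ring
    · refine tsum_congr fun N => ?_
      rw [neg_mul, neg_neg, ← oct_inner_a_neg t x _ ht hx hx2 (by have : (0:ℝ) ≤ 2 * π * N := by positivity
                                                                  linarith)]
      refine tsum_congr fun a => ?_
      simp only [hGdef]
      congr 2
      push_cast; ring
  rw [hL, hR] at hcomm
  have him := congrArg Complex.im hcomm
  rw [show -(π * Complex.I * ((1 / (4 * t) : ℝ) : ℂ) ^ 3) *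
      ((octM 2 0 (1 / (4 * t)) x y - octM 2 0 (1 / (4 * t)) (2 * π - x) (2 * π - y) : ℝ) : ℂ) =
      Complex.I * ((-(π * (1 / (4 * t)) ^ 3) * (octM 2 0 (1 / (4 * t)) x y -
       octM 2 0 (1 / (4 * t)) (2 * π - x) (2 * π - y)) : ℝ) : ℂ) by push_cast; ring] at him
  simp only [Complex.add_im, Complex.I_mul_im, Complex.ofReal_re] at him
  linarith

theorem octL_symm (μ ν : ℕ) (φ t x y : ℝ) : octL μ ν φ t x y = octL ν μ φ t y x := by
  unfold octL
  rw [← (Equiv.prodComm ℕ ℕ).tsum_eq]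
  refine tsum_congr fun p => ?_
  simp only [Equiv.prodComm_apply, Prod.fst_swap, Prod.snd_swap]
  rw [show 4 * ((p.2 : ℝ) + 1) * ((p.1 : ℝ) + 1) * t = 4 * ((p.1 : ℝ) + 1) * ((p.2 : ℝ) + 1) * t by ring,
    show ((p.2 : ℝ) + 1) * x + ((p.1 : ℝ) + 1) * y + φ = ((p.1 : ℝ) + 1) * y + ((p.2 : ℝ) + 1) * x + φ by ring]
  ring

theorem octM_symm (i j : ℕ) (τ x y : ℝ) : octM i j τ x y = octM j i τ y x := by
  unfold octM
  rw [← (Equiv.prodComm ℕ ℕ).tsum_eq]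
  refine tsum_congr fun p => ?_
  simp only [Equiv.prodComm_apply, Prod.fst_swap, Prod.snd_swap]
  rw [show τ * (x + 2 * π * (p.2 : ℝ)) * (y + 2 * π * (p.1 : ℝ)) =
    τ * (y + 2 * π * (p.1 : ℝ)) * (x + 2 * π * (p.2 : ℝ)) by ring]
  ring

theorem octL_summable (μ ν : ℕ) (φ t x y : ℝ) (ht : 0 < t) :
    Summable (fun p : ℕ × ℕ => ((p.1 : ℝ) + 1) ^ μ * ((p.2 : ℝ) + 1) ^ ν *
    exp (-(4 * ((p.1 : ℝ) + 1) * ((p.2 : ℝ) + 1) * t)) * sin (((p.1 : ℝ) + 1) * x + ((p.2 : ℝ) + 1) * y + φ)) := by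
  refine Summable.of_norm_bounded (oct_summable_L μ ν t ht) fun p => ?_
  rw [norm_mul, Real.norm_of_nonneg (by positivity)]
  exact mul_le_of_le_one_right (by positivity) (Real.abs_sin_le_one _)

theorem octL_term_deriv (A a c φ x : ℝ) :
    HasDerivAt (fun x => A * sin (a * x + c + φ)) ((A * a) * sin (a * x + c + (φ + π / 2))) x := by
  have h : HasDerivAt (fun x => a * x + c + φ) a x := by
    simpa using (((hasDerivAt_id x).const_mul a).add_const c).add_const φ
  refine (h.sin.const_mul _).congr_deriv ?_
  rw [← add_assoc _ φ, Real.sin_add_pi_div_two]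
  ring

theorem octL_deriv_x (μ ν : ℕ) (φ t x y : ℝ) (ht : 0 < t) :
    HasDerivAt (fun x => octL μ ν φ t x y) (octL (μ + 1) ν (φ + π / 2) t x y) x := by
  unfold octL
  refine hasDerivAt_tsum (oct_summable_L (μ + 1) ν t ht)
    (g := fun (p : ℕ × ℕ) (x : ℝ) => ((p.1 : ℝ) + 1) ^ μ * ((p.2 : ℝ) + 1) ^ ν *
    exp (-(4 * ((p.1 : ℝ) + 1) * ((p.2 : ℝ) + 1) * t)) * sin (((p.1 : ℝ) + 1) * x + ((p.2 : ℝ) + 1) * y + φ))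
    (g' := fun (p : ℕ × ℕ) (x : ℝ) => ((p.1 : ℝ) + 1) ^ (μ + 1) * ((p.2 : ℝ) + 1) ^ ν *
    exp (-(4 * ((p.1 : ℝ) + 1) * ((p.2 : ℝ) + 1) * t)) * sin (((p.1 : ℝ) + 1) * x + ((p.2 : ℝ) + 1) * y + (φ + π / 2)))
    (fun p x => ?_) (fun p x => ?_)
    (octL_summable μ ν φ t 0 y ht) x
  · refine (octL_term_deriv _ _ _ _ _).congr_deriv ?_
    generalize exp (-(4 * ((p.1 : ℝ) + 1) * ((p.2 : ℝ) + 1) * t)) = E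
    generalize sin (((p.1 : ℝ) + 1) * x + ((p.2 : ℝ) + 1) * y + (φ + π / 2)) = S
    generalize ((p.2 : ℝ) + 1) ^ ν = F
    rw [pow_succ]
    ring
  · rw [norm_mul, Real.norm_of_nonneg (by positivity)]
    exact mul_le_of_le_one_right (by positivity) (Real.abs_sin_le_one _)

theorem octL_deriv_y (μ ν : ℕ) (φ t x y : ℝ) (ht : 0 < t) :
    HasDerivAt (fun y => octL μ ν φ t x y) (octL μ (ν + 1) (φ + π / 2) t x y) y := by
  have := octL_deriv_x ν μ φ t y x ht
  rw [octL_symm]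
  exact this.congr_of_eventuallyEq (Eventually.of_forall fun y => octL_symm _ _ _ _ _ _)

theorem octM_summable (i j : ℕ) (τ x y : ℝ) (hτ : 0 < τ) (hx : 0 < x) (hy : 0 < y) :
    Summable (fun p : ℕ × ℕ => (x + 2 * π * (p.1 : ℝ)) ^ i * (y + 2 * π * (p.2 : ℝ)) ^ j *
      exp (-(τ * (x + 2 * π * (p.1 : ℝ)) * (y + 2 * π * (p.2 : ℝ))))) := by
  have hpi := Real.pi_pos
  refine Summable.of_nonneg_of_le (fun p => by positivity) (fun p => ?_)
    (oct_summable_M i j τ (min x y) x y hτ (lt_min hx hy))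
  have hd : 0 < min x y := lt_min hx hy
  rw [abs_of_nonneg (by positivity), abs_of_nonneg (by positivity)]
  gcongr
  · exact min_le_left _ _
  · exact min_le_right _ _

theorem octM_term_deriv (i j : ℕ) (τ a y x : ℝ) :
    HasDerivAt (fun x => (x + a) ^ i * y ^ j * exp (-(τ * (x + a) * y)))
      (i * ((x + a) ^ (i - 1) * y ^ j * exp (-(τ * (x + a) * y))) -
        τ * ((x + a) ^ i * y ^ (j + 1) * exp (-(τ * (x + a) * y)))) x := by
  have h : HasDerivAt (fun x => x + a) 1 x := (hasDerivAt_id x).add_const _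
  have h1 := (h.pow i).mul_const (y ^ j)
  have h2 := (((h.const_mul τ).mul_const y).neg).exp
  refine (h1.mul h2).congr_deriv ?_
  simp only [Pi.pow_apply, Pi.neg_apply]
  ring

theorem octM_deriv_x (i j : ℕ) (τ x y : ℝ) (hτ : 0 < τ) (hx : 0 < x) (hy : 0 < y) :
    HasDerivAt (fun x => octM i j τ x y) (i * octM (i - 1) j τ x y - τ * octM i (j + 1) τ x y) x := by
  have hpi := Real.pi_pos
  set δ := min (x / 2) y with hδ
  have hd : 0 < δ := lt_min (by linarith) hy
  have hs1 := oct_summable_M (i - 1) j τ δ (2 * x) y hτ hd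
  have hs2 := oct_summable_M i (j + 1) τ δ (2 * x) y hτ hd
  have hu := (hs1.mul_left (i : ℝ)).add (hs2.mul_left τ)
  have e : i * octM (i - 1) j τ x y - τ * octM i (j + 1) τ x y =
     ∑' p : ℕ × ℕ, (i * ((x + 2 * π * (p.1 : ℝ)) ^ (i - 1) * (y + 2 * π * (p.2 : ℝ)) ^ j *
       exp (-(τ * (x + 2 * π * (p.1 : ℝ)) * (y + 2 * π * (p.2 : ℝ))))) -
       τ * ((x + 2 * π * (p.1 : ℝ)) ^ i * (y + 2 * π * (p.2 : ℝ)) ^ (j + 1) *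
       exp (-(τ * (x + 2 * π * (p.1 : ℝ)) * (y + 2 * π * (p.2 : ℝ)))))) := by
    unfold octM
    rw [← tsum_mul_left, ← tsum_mul_left, Summable.tsum_sub]
    · exact (octM_summable _ _ τ x y hτ hx hy).mul_left _
    · exact (octM_summable _ _ τ x y hτ hx hy).mul_left _
  rw [e]
  unfold octM
  refine hasDerivAt_tsum_of_isPreconnected (t := Set.Ioo (x / 2) (2 * x))
    (g := fun (p : ℕ × ℕ) (x : ℝ) => (x + 2 * π * (p.1 : ℝ)) ^ i * (y + 2 * π * (p.2 : ℝ)) ^ j *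
       exp (-(τ * (x + 2 * π * (p.1 : ℝ)) * (y + 2 * π * (p.2 : ℝ)))))
    (g' := fun (p : ℕ × ℕ) (x : ℝ) => (i * ((x + 2 * π * (p.1 : ℝ)) ^ (i - 1) * (y + 2 * π * (p.2 : ℝ)) ^ j *
       exp (-(τ * (x + 2 * π * (p.1 : ℝ)) * (y + 2 * π * (p.2 : ℝ))))) -
       τ * ((x + 2 * π * (p.1 : ℝ)) ^ i * (y + 2 * π * (p.2 : ℝ)) ^ (j + 1) *
       exp (-(τ * (x + 2 * π * (p.1 : ℝ)) * (y + 2 * π * (p.2 : ℝ)))))))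
    hu isOpen_Ioo
    isPreconnected_Ioo (fun p x' _ => ?_) (fun p x' hx' => ?_) (y₀ := x) ⟨by linarith, by linarith⟩
    (octM_summable i j τ x y hτ hx hy) ⟨by linarith, by linarith⟩
  · exact octM_term_deriv i j τ _ _ _
  · have hx0 : 0 < x' := by have := hx'.1; linarith
    have hx2 : x' ≤ 2 * x := hx'.2.le
    have hd1 : δ ≤ x' := (min_le_left _ _).trans hx'.1.le
    have hd2 : δ ≤ y := min_le_right _ _
    refine (norm_sub_le _ _).trans ?_
    rw [Real.norm_of_nonneg (by positivity), Real.norm_of_nonneg (by positivity)]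
    rw [abs_of_nonneg (by positivity), abs_of_nonneg (by positivity)]
    gcongr

theorem octM_deriv_y (i j : ℕ) (τ x y : ℝ) (hτ : 0 < τ) (hx : 0 < x) (hy : 0 < y) :
    HasDerivAt (fun y => octM i j τ x y) (j * octM i (j - 1) τ x y - τ * octM (i + 1) j τ x y) y := by
  have := octM_deriv_x j i τ y x hτ hy hx
  rw [octM_symm i, octM_symm (i + 1)]
  exact this.congr_of_eventuallyEq (Eventually.of_forall fun y => octM_symm _ _ _ _ _)

theorem octM_limit (i j : ℕ) (x y : ℝ) (hx : 0 < x) (hy : 0 < y) :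
    Tendsto (fun τ => exp (τ * (x * y)) * octM i j τ x y) atTop (𝓝 (x ^ i * y ^ j)) := by
  have hpi := Real.pi_pos
  have e : ∀ τ, exp (τ * (x * y)) * octM i j τ x y = ∑' p : ℕ × ℕ,
      (x + 2 * π * (p.1 : ℝ)) ^ i * (y + 2 * π * (p.2 : ℝ)) ^ j *
        exp (-(τ * ((x + 2 * π * (p.1 : ℝ)) * (y + 2 * π * (p.2 : ℝ)) - x * y))) := by
    intro τ
    unfold octM
    rw [← tsum_mul_left]
    refine tsum_congr fun p => ?_
    rw [show -(τ * ((x + 2 * π * (p.1 : ℝ)) * (y + 2 * π * (p.2 : ℝ)) - x * y)) =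
      τ * (x * y) + -(τ * (x + 2 * π * (p.1 : ℝ)) * (y + 2 * π * (p.2 : ℝ))) by ring, exp_add]
    ring
  simp only [e]
  have hpos : ∀ p : ℕ × ℕ, 0 ≤ (x + 2 * π * (p.1 : ℝ)) * (y + 2 * π * (p.2 : ℝ)) - x * y := by
    intro p
    have : 0 ≤ x * (2 * π * (p.2 : ℝ)) + (2 * π * (p.1 : ℝ)) * (y + 2 * π * (p.2 : ℝ)) := by positivity
    linarith
  have hlim : x ^ i * y ^ j = ∑' p : ℕ × ℕ, if p = (0, 0) then x ^ i * y ^ j else 0 := by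
    rw [tsum_ite_eq]
  rw [hlim]
  refine tendsto_tsum_of_dominated_convergence (bound := fun p : ℕ × ℕ => exp (1 * (x * y)) *
     ((x + 2 * π * (p.1 : ℝ)) ^ i * (y + 2 * π * (p.2 : ℝ)) ^ j *
      exp (-(1 * (x + 2 * π * (p.1 : ℝ)) * (y + 2 * π * (p.2 : ℝ))))))
    ((octM_summable i j 1 x y one_pos hx hy).mul_left _) ?_ ?_
  · rintro ⟨n, m⟩
    by_cases h : (n, m) = (0, 0)
    · rw [if_pos h]
      simp only [Prod.mk.injEq] at h
      obtain ⟨rfl, rfl⟩ := h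
      simp
    · rw [if_neg h]
      have hp : 0 < (x + 2 * π * (n : ℝ)) * (y + 2 * π * (m : ℝ)) - x * y := by
        have : (n : ℝ) ≠ 0 ∨ (m : ℝ) ≠ 0 := by
          by_contra hc
          push Not at hc
          apply h
          simp only [Prod.mk.injEq]
          exact ⟨by exact_mod_cast hc.1, by exact_mod_cast hc.2⟩
        have h1 : (0 : ℝ) ≤ n := by positivity
        have h2 : (0 : ℝ) ≤ m := by positivity
        have e1 : (x + 2 * π * (n : ℝ)) * (y + 2 * π * (m : ℝ)) - x * y =
          x * (2 * π * (m : ℝ)) + (2 * π * (n : ℝ)) * (y + 2 * π * (m : ℝ)) := by ring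
        rw [e1]
        rcases this with h3 | h3
        · have : 0 < (n : ℝ) := lt_of_le_of_ne h1 (Ne.symm h3)
          positivity
        · have : 0 < (m : ℝ) := lt_of_le_of_ne h2 (Ne.symm h3)
          positivity
      rw [show (0 : ℝ) = (x + 2 * π * (n : ℝ)) ^ i * (y + 2 * π * (m : ℝ)) ^ j * 0 by ring]
      refine Tendsto.const_mul _ ?_
      refine Real.tendsto_exp_neg_atTop_nhds_zero.comp ?_
      exact Tendsto.atTop_mul_const hp tendsto_id
  · filter_upwards [eventually_ge_atTop 1] with τ hτ p
    rw [Real.norm_of_nonneg (by positivity)]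
    have : exp (1 * (x * y)) *
     ((x + 2 * π * (p.1 : ℝ)) ^ i * (y + 2 * π * (p.2 : ℝ)) ^ j *
      exp (-(1 * (x + 2 * π * (p.1 : ℝ)) * (y + 2 * π * (p.2 : ℝ))))) =
      (x + 2 * π * (p.1 : ℝ)) ^ i * (y + 2 * π * (p.2 : ℝ)) ^ j *
        exp (-(1 * ((x + 2 * π * (p.1 : ℝ)) * (y + 2 * π * (p.2 : ℝ)) - x * y))) := by
      rw [show -(1 * ((x + 2 * π * (p.1 : ℝ)) * (y + 2 * π * (p.2 : ℝ)) - x * y)) =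
        1 * (x * y) + -(1 * (x + 2 * π * (p.1 : ℝ)) * (y + 2 * π * (p.2 : ℝ))) by ring, exp_add]
      ring
    rw [this]
    have := hpos p
    gcongr

noncomputable def octEv (l : List (ℝ × ℕ × ℕ × ℕ)) (τ x y : ℝ) : ℝ :=
  (l.map fun q => q.1 * τ ^ q.2.1 * octM q.2.2.1 q.2.2.2 τ x y).sum

noncomputable def octDX (l : List (ℝ × ℕ × ℕ × ℕ)) : List (ℝ × ℕ × ℕ × ℕ) :=
  l.flatMap fun q => [(q.1 * q.2.2.1, q.2.1, q.2.2.1 - 1, q.2.2.2), (-q.1, q.2.1 + 1, q.2.2.1, q.2.2.2 + 1)]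

noncomputable def octDY (l : List (ℝ × ℕ × ℕ × ℕ)) : List (ℝ × ℕ × ℕ × ℕ) :=
  l.flatMap fun q => [(q.1 * q.2.2.2, q.2.1, q.2.2.1, q.2.2.2 - 1), (-q.1, q.2.1 + 1, q.2.2.1 + 1, q.2.2.2)]

noncomputable def octTop (E : ℕ) (l : List (ℝ × ℕ × ℕ × ℕ)) (X Y : ℝ) : ℝ :=
  (l.map fun q => if q.2.1 = E then q.1 * (X ^ q.2.2.1 * Y ^ q.2.2.2) else 0).sum

theorem octEv_cons (q) (l : List (ℝ × ℕ × ℕ × ℕ)) (τ x y : ℝ) : octEv (q :: l) τ x y =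
    q.1 * τ ^ q.2.1 * octM q.2.2.1 q.2.2.2 τ x y + octEv l τ x y := by simp [octEv]

theorem octTop_cons (E : ℕ) (q) (l : List (ℝ × ℕ × ℕ × ℕ)) (x y : ℝ) : octTop E (q :: l) x y =
    (if q.2.1 = E then q.1 * (x ^ q.2.2.1 * y ^ q.2.2.2) else 0) + octTop E l x y := by simp [octTop]

theorem octDX_cons (q) (l : List (ℝ × ℕ × ℕ × ℕ)) : octDX (q :: l) =
   (q.1 * q.2.2.1, q.2.1, q.2.2.1 - 1, q.2.2.2) :: (-q.1, q.2.1 + 1, q.2.2.1, q.2.2.2 + 1) :: octDX l := by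
  simp [octDX]

theorem octDY_cons (q) (l : List (ℝ × ℕ × ℕ × ℕ)) : octDY (q :: l) =
   (q.1 * q.2.2.2, q.2.1, q.2.2.1, q.2.2.2 - 1) :: (-q.1, q.2.1 + 1, q.2.2.1 + 1, q.2.2.2) :: octDY l := by
  simp [octDY]

theorem octEv_deriv_x (l : List (ℝ × ℕ × ℕ × ℕ)) (τ x y : ℝ) (hτ : 0 < τ) (hx : 0 < x) (hy : 0 < y) :
    HasDerivAt (fun x => octEv l τ x y) (octEv (octDX l) τ x y) x := by
  induction l with
  | nil => simpa [octEv, octDX] using hasDerivAt_const x (0 : ℝ)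
  | cons q l ih =>
    simp only [octDX_cons, octEv_cons]
    refine (((octM_deriv_x q.2.2.1 q.2.2.2 τ x y hτ hx hy).const_mul (q.1 * τ ^ q.2.1)).add ih).congr_deriv ?_
    ring

theorem octEv_deriv_y (l : List (ℝ × ℕ × ℕ × ℕ)) (τ x y : ℝ) (hτ : 0 < τ) (hx : 0 < x) (hy : 0 < y) :
    HasDerivAt (fun y => octEv l τ x y) (octEv (octDY l) τ x y) y := by
  induction l with
  | nil => simpa [octEv, octDY] using hasDerivAt_const y (0 : ℝ)
  | cons q l ih =>
    simp only [octDY_cons, octEv_cons]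
    refine (((octM_deriv_y q.2.2.1 q.2.2.2 τ x y hτ hx hy).const_mul (q.1 * τ ^ q.2.1)).add ih).congr_deriv ?_
    ring

theorem octTop_DX (E : ℕ) (l : List (ℝ × ℕ × ℕ × ℕ)) (X Y : ℝ) (h : ∀ q ∈ l, q.2.1 ≤ E) :
    octTop (E + 1) (octDX l) X Y = -Y * octTop E l X Y ∧ ∀ q ∈ octDX l, q.2.1 ≤ E + 1 := by
  induction l with
  | nil => simp [octTop, octDX]
  | cons q l ih =>
    obtain ⟨h1, h2⟩ := ih (fun q' hq' => h q' (List.mem_cons_of_mem _ hq'))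
    have hq := h q List.mem_cons_self
    refine ⟨?_, ?_⟩
    · simp only [octDX_cons, octTop_cons, h1]
      rw [if_neg (by omega)]
      by_cases h : q.2.1 = E
      · rw [if_pos (by omega), if_pos h]; ring
      · rw [if_neg (by omega), if_neg h]; ring
    · intro q' hq'
      rw [octDX_cons] at hq'
      simp only [List.mem_cons] at hq'
      rcases hq' with rfl | rfl | hq'
      · simp; omega
      · simp; omega
      · exact h2 q' hq'

theorem octTop_DY (E : ℕ) (l : List (ℝ × ℕ × ℕ × ℕ)) (X Y : ℝ) (h : ∀ q ∈ l, q.2.1 ≤ E) :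
    octTop (E + 1) (octDY l) X Y = -X * octTop E l X Y ∧ ∀ q ∈ octDY l, q.2.1 ≤ E + 1 := by
  induction l with
  | nil => simp [octTop, octDY]
  | cons q l ih =>
    obtain ⟨h1, h2⟩ := ih (fun q' hq' => h q' (List.mem_cons_of_mem _ hq'))
    have hq := h q List.mem_cons_self
    refine ⟨?_, ?_⟩
    · simp only [octDY_cons, octTop_cons, h1]
      rw [if_neg (by omega)]
      by_cases h : q.2.1 = E
      · rw [if_pos (by omega), if_pos h]; ring
      · rw [if_neg (by omega), if_neg h]; ring
    · intro q' hq'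
      rw [octDY_cons] at hq'
      simp only [List.mem_cons] at hq'
      rcases hq' with rfl | rfl | hq'
      · simp; omega
      · simp; omega
      · exact h2 q' hq'

theorem octEv_limit (E : ℕ) (l : List (ℝ × ℕ × ℕ × ℕ)) (x y : ℝ) (hx : 0 < x) (hy : 0 < y)
    (h : ∀ q ∈ l, q.2.1 ≤ E) :
    Tendsto (fun τ => (τ ^ E)⁻¹ * exp (τ * (x * y)) * octEv l τ x y) atTop (𝓝 (octTop E l x y)) := by
  induction l with
  | nil => simp [octEv, octTop]
  | cons q l ih =>
    have ih := ih (fun q' hq' => h q' (List.mem_cons_of_mem _ hq'))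
    have hq := h q List.mem_cons_self
    simp only [octEv_cons, octTop_cons, mul_add]
    refine Tendsto.add ?_ ih
    have hM := octM_limit q.2.2.1 q.2.2.2 x y hx hy
    have hr : Tendsto (fun τ : ℝ => (τ ^ E)⁻¹ * τ ^ q.2.1) atTop (𝓝 (if q.2.1 = E then 1 else 0)) := by
      by_cases h : q.2.1 = E
      · rw [if_pos h, h]
        refine tendsto_const_nhds.congr' ?_
        filter_upwards [eventually_gt_atTop 0] with τ hτ
        rw [inv_mul_cancel₀ (by positivity)]
      · rw [if_neg h]
        have := tendsto_pow_neg_atTop (𝕜 := ℝ) (n := E - q.2.1) (by omega)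
        refine this.congr' ?_
        filter_upwards [eventually_gt_atTop 0] with τ hτ
        have e : τ ^ E = τ ^ (E - q.2.1) * τ ^ q.2.1 := by rw [← pow_add]; congr 1; omega
        rw [e, zpow_neg, zpow_natCast]
        field_simp
    have := (hr.mul hM).const_mul q.1
    refine (this.congr fun τ => ?_).trans (le_of_eq ?_)
    · ring
    · congr 1; split_ifs <;> ring

def octDual (μ ν : ℕ) (φ σ t : ℝ) (l : List (ℝ × ℕ × ℕ × ℕ)) : Prop :=
  ∀ x y : ℝ, 0 < x → x < 2 * π → 0 < y → y < 2 * π →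
    octL μ ν φ t x y = -π * (octEv l (1 / (4 * t)) x y - σ * octEv l (1 / (4 * t)) (2 * π - x) (2 * π - y))

theorem octDual_first (t : ℝ) (ht : 0 < t) : octDual 1 2 (π / 2) (-1) t (octDX [(1, 3, 2, 0)]) := by
  intro x y hx hx2 hy hy2
  have hτ : 0 < 1 / (4 * t) := by positivity
  obtain ⟨z, hz⟩ := oct_dual_base t y ht hy hy2
  have hL := octL_deriv_x 0 2 0 t x y ht
  have h1 := octEv_deriv_x [(1, 3, 2, 0)] (1 / (4 * t)) x y hτ hx hy
  have h2 := (octEv_deriv_x [(1, 3, 2, 0)] (1 / (4 * t)) (2 * π - x) (2 * π - y) hτ (by linarith)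
    (by linarith)).comp x ((hasDerivAt_id x).const_sub (2 * π))
  have h3 := ((h1.sub h2).const_mul (-π)).add_const z
  have : octL 1 2 (0 + π / 2) t x y = _ := hL.unique (h3.congr_of_eventuallyEq ?_)
  · rw [zero_add] at this
    rw [this]; ring
  · filter_upwards [Ioo_mem_nhds hx hx2] with x' hx'
    rw [hz x' hx'.1 hx'.2]
    simp [octEv]
    ring

theorem octDual_x (μ ν : ℕ) (φ σ t : ℝ) (l) (ht : 0 < t) (h : octDual μ ν φ σ t l) :
    octDual (μ + 1) ν (φ + π / 2) (-σ) t (octDX l) := by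
  intro x y hx hx2 hy hy2
  have hτ : 0 < 1 / (4 * t) := by positivity
  have hL := octL_deriv_x μ ν φ t x y ht
  have h1 := octEv_deriv_x l (1 / (4 * t)) x y hτ hx hy
  have h2 := (octEv_deriv_x l (1 / (4 * t)) (2 * π - x) (2 * π - y) hτ (by linarith)
    (by linarith)).comp x ((hasDerivAt_id x).const_sub (2 * π))
  have h3 := ((h1.sub (h2.const_mul σ)).const_mul (-π))
  rw [hL.unique (h3.congr_of_eventuallyEq ?_)]
  · ring
  · filter_upwards [Ioo_mem_nhds hx hx2] with x' hx'
    rw [h x' y hx'.1 hx'.2 hy hy2]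
    simp

theorem octDual_y (μ ν : ℕ) (φ σ t : ℝ) (l) (ht : 0 < t) (h : octDual μ ν φ σ t l) :
    octDual μ (ν + 1) (φ + π / 2) (-σ) t (octDY l) := by
  intro x y hx hx2 hy hy2
  have hτ : 0 < 1 / (4 * t) := by positivity
  have hL := octL_deriv_y μ ν φ t x y ht
  have h1 := octEv_deriv_y l (1 / (4 * t)) x y hτ hx hy
  have h2 := (octEv_deriv_y l (1 / (4 * t)) (2 * π - x) (2 * π - y) hτ (by linarith)
    (by linarith)).comp y ((hasDerivAt_id y).const_sub (2 * π))
  have h3 := ((h1.sub (h2.const_mul σ)).const_mul (-π))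
  rw [hL.unique (h3.congr_of_eventuallyEq ?_)]
  · ring
  · filter_upwards [Ioo_mem_nhds hy hy2] with y' hy'
    rw [h x y' hx hx2 hy'.1 hy'.2]
    simp

theorem octDual_all (μ ν : ℕ) : ∃ l : List (ℝ × ℕ × ℕ × ℕ), (∀ q ∈ l, q.2.1 ≤ μ + ν + 4) ∧
    (∀ X Y, octTop (μ + ν + 4) l X Y = (-1) ^ (μ + ν + 1) * (Y ^ (μ + 1) * X ^ (ν + 2))) ∧
    ∀ t, 0 < t → octDual (μ + 1) (ν + 2) ((μ + ν + 1 : ℕ) * (π / 2)) ((-1) ^ (μ + ν + 1)) t l := by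
  induction ν with
  | zero =>
    induction μ with
    | zero =>
      refine ⟨octDX [(1, 3, 2, 0)], ?_, ?_, ?_⟩
      · exact (octTop_DX 3 [(1, 3, 2, 0)] 0 0 (by simp)).2
      · intro X Y
        rw [(octTop_DX 3 [(1, 3, 2, 0)] X Y (by simp)).1]
        simp [octTop]
      · intro t ht
        simpa using octDual_first t ht
    | succ μ ih =>
      obtain ⟨l, h1, h2, h3⟩ := ih
      refine ⟨octDX l, ?_, ?_, ?_⟩
      · intro q hq
        have := (octTop_DX _ l 0 0 h1).2 q hq
        omega
      · intro X Y
        have := (octTop_DX _ l X Y h1).1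
        rw [show μ + 1 + 0 + 4 = μ + 0 + 4 + 1 by ring, this, h2]
        ring
      · intro t ht
        convert octDual_x _ _ _ _ t l ht (h3 t ht) using 1
        · push_cast; ring
        · ring
  | succ ν ih =>
      obtain ⟨l, h1, h2, h3⟩ := ih
      refine ⟨octDY l, ?_, ?_, ?_⟩
      · intro q hq
        have := (octTop_DY _ l 0 0 h1).2 q hq
        omega
      · intro X Y
        have := (octTop_DY _ l X Y h1).1
        rw [show μ + (ν + 1) + 4 = μ + ν + 4 + 1 by ring, this, h2]
        ring
      · intro t ht
        convert octDual_y _ _ _ _ t l ht (h3 t ht) using 1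
        · push_cast; ring
        · ring

theorem oct_tau_tendsto : Tendsto (fun t : ℝ => 1 / (4 * t)) (𝓝[>] 0) atTop := by
  have := (tendsto_inv_nhdsGT_zero (𝕜 := ℝ)).const_mul_atTop (show (0 : ℝ) < 1 / 4 by norm_num)
  refine this.congr fun t => ?_
  rw [one_div, one_div, mul_inv]

theorem octL_limit1 (μ ν : ℕ) (η : ℝ) (h0 : 0 < η) (h1 : η < 2 * π) :
    Tendsto (fun t => ((1 / (4 * t)) ^ (μ + ν + 4))⁻¹ * exp (1 / (4 * t) * (η * (2 * π - η))) *
      octL (μ + 1) (ν + 2) ((μ + ν + 1 : ℕ) * (π / 2)) t η (2 * π - η)) (𝓝[>] 0)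
    (𝓝 (-π * ((-1) ^ (μ + ν + 1) * ((2 * π - η) ^ (μ + 1) * η ^ (ν + 2)) - η ^ (μ + 1) * (2 * π - η) ^ (ν + 2)))) := by
  obtain ⟨l, hl1, hl2, hl3⟩ := octDual_all μ ν
  have hA := (octEv_limit _ l η (2 * π - η) h0 (by linarith) hl1).comp oct_tau_tendsto
  have hB := (octEv_limit _ l (2 * π - η) η (by linarith) h0 hl1).comp oct_tau_tendsto
  have hC := (hA.sub (hB.const_mul ((-1) ^ (μ + ν + 1)))).const_mul (-π)
  rw [hl2, hl2] at hC
  have e : ∀ a b : ℝ, -π * ((-1) ^ (μ + ν + 1) * a - (-1) ^ (μ + ν + 1) * ((-1) ^ (μ + ν + 1) * b))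
      = -π * ((-1) ^ (μ + ν + 1) * a - b) := by
    intro a b
    rw [← mul_assoc ((-1 : ℝ) ^ (μ + ν + 1)) _ b, ← mul_pow]; norm_num
  rw [e] at hC
  refine hC.congr' ?_
  filter_upwards [self_mem_nhdsWithin] with t ht
  rw [hl3 t ht η (2 * π - η) h0 h1 (by linarith) (by linarith)]
  simp only [Function.comp]
  rw [show 2 * π - (2 * π - η) = η by ring, mul_comm (2 * π - η) η]
  ring

theorem octL_add_pi (μ ν : ℕ) (φ t x y : ℝ) : octL μ ν (φ + π) t x y = - octL μ ν φ t x y := by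
  unfold octL
  rw [← tsum_neg]
  refine tsum_congr fun p => ?_
  rw [← add_assoc, Real.sin_add_pi]; ring

theorem octL_limit2 (μ ν : ℕ) (hμ : 1 ≤ μ) (hν : 1 ≤ ν) (h3 : 3 ≤ μ + ν) (η : ℝ) (h0 : 0 < η) (h1 : η < 2 * π) :
    Tendsto (fun t => ((1 / (4 * t)) ^ (μ + ν + 1))⁻¹ * exp (1 / (4 * t) * (η * (2 * π - η))) *
      octL μ ν ((μ + ν : ℕ) * (π / 2)) t η (2 * π - η)) (𝓝[>] 0)
    (𝓝 (π * ((-1) ^ (μ + ν) * ((2 * π - η) ^ μ * η ^ ν) - η ^ μ * (2 * π - η) ^ ν))) := by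
  have key : ∀ μ ν : ℕ, 1 ≤ μ → 2 ≤ ν → ∀ η, 0 < η → η < 2 * π →
    Tendsto (fun t => ((1 / (4 * t)) ^ (μ + ν + 1))⁻¹ * exp (1 / (4 * t) * (η * (2 * π - η))) *
      octL μ ν ((μ + ν : ℕ) * (π / 2)) t η (2 * π - η)) (𝓝[>] 0)
    (𝓝 (π * ((-1) ^ (μ + ν) * ((2 * π - η) ^ μ * η ^ ν) - η ^ μ * (2 * π - η) ^ ν))) := by
    intro μ ν hμ hν η h0 h1
    obtain ⟨μ, rfl⟩ := Nat.exists_eq_add_of_le' hμ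
    obtain ⟨ν, rfl⟩ := Nat.exists_eq_add_of_le' hν
    have := (octL_limit1 μ ν η h0 h1).neg
    refine (this.congr fun t => ?_).trans (le_of_eq ?_)
    · rw [show (((μ + 1 + (ν + 2) : ℕ) : ℝ) * (π / 2)) = ((μ + ν + 1 : ℕ) : ℝ) * (π / 2) + π by push_cast; ring,
        octL_add_pi, show μ + 1 + (ν + 2) + 1 = μ + ν + 4 by ring]
      ring
    · congr 1; ring
  by_cases h2 : 2 ≤ ν
  · exact key μ ν hμ h2 η h0 h1
  · have := key ν μ hν (by omega) (2 * π - η) (by linarith) (by linarith)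
    refine (this.congr fun t => ?_).trans (le_of_eq ?_)
    · rw [octL_symm, show 2 * π - (2 * π - η) = η by ring, mul_comm (2 * π - η) η, add_comm ν μ]
    · rw [show 2 * π - (2 * π - η) = η by ring, add_comm ν μ]
      congr 1; ring

theorem oct_hasSum_congr {ι : Type*} {f g : ι → ℝ} {a b : ℝ} (h : HasSum f a) (hfg : ∀ p, g p = f p) (hab : b = a) :
    HasSum g b := by
  rw [hab, show g = f from funext hfg]; exact h

theorem octL_nat_pi (μ ν e : ℕ) (φ t x y : ℝ) : octL μ ν (φ + e * π) t x y = (-1) ^ e * octL μ ν φ t x y := by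
  induction e with
  | zero => simp
  | succ e ih =>
    rw [show φ + ((e + 1 : ℕ) : ℝ) * π = φ + e * π + π by push_cast; ring, octL_add_pi, ih]
    ring

/-- normalising weight -/
noncomputable def octW (η t : ℝ) : ℝ := ((1 / (4 * t)) ^ 11)⁻¹ * exp (1 / (4 * t) * (η * (2 * π - η)))

theorem octL_lim_gen (μ ν e : ℕ) (φ : ℝ) (hμ : 1 ≤ μ) (hν : 1 ≤ ν) (h3 : 3 ≤ μ + ν) (η : ℝ) (h0 : 0 < η) (h1 : η < 2 * π)
    (hφ : ((μ + ν : ℕ) : ℝ) * (π / 2) = φ + e * π) :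
    Tendsto (fun t => ((1 / (4 * t)) ^ (μ + ν + 1))⁻¹ * exp (1 / (4 * t) * (η * (2 * π - η))) *
      octL μ ν φ t η (2 * π - η)) (𝓝[>] 0)
    (𝓝 ((-1) ^ e * (π * ((-1) ^ (μ + ν) * ((2 * π - η) ^ μ * η ^ ν) - η ^ μ * (2 * π - η) ^ ν)))) := by
  have := (octL_limit2 μ ν hμ hν h3 η h0 h1).const_mul ((-1) ^ e)
  refine this.congr fun t => ?_
  rw [hφ, octL_nat_pi]
  have hs : (-1 : ℝ) ^ e * (-1) ^ e = 1 := by rw [← mul_pow]; norm_num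
  linear_combination ((1 / (4 * t)) ^ (μ + ν + 1))⁻¹ * exp (1 / (4 * t) * (η * (2 * π - η))) *
      octL μ ν φ t η (2 * π - η) * hs

theorem octL_lim_small (μ ν e : ℕ) (φ : ℝ) (hμ : 1 ≤ μ) (hν : 1 ≤ ν) (h3 : 3 ≤ μ + ν) (h9 : μ + ν ≤ 9)
    (η : ℝ) (h0 : 0 < η) (h1 : η < 2 * π)
    (hφ : ((μ + ν : ℕ) : ℝ) * (π / 2) = φ + e * π) :
    Tendsto (fun t => octW η t * octL μ ν φ t η (2 * π - η)) (𝓝[>] 0) (𝓝 0) := by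
  have h := octL_lim_gen μ ν e φ hμ hν h3 η h0 h1 hφ
  have h2 : Tendsto (fun t : ℝ => ((1 / (4 * t)) ^ (10 - (μ + ν)))⁻¹) (𝓝[>] 0) (𝓝 0) :=
    (tendsto_inv_atTop_zero.comp (tendsto_pow_atTop (by omega : 10 - (μ + ν) ≠ 0))).comp oct_tau_tendsto
  have := h2.mul h
  rw [zero_mul] at this
  refine this.congr fun t => ?_
  unfold octW
  have : (1 / (4 * t)) ^ 11 = (1 / (4 * t)) ^ (10 - (μ + ν)) * (1 / (4 * t)) ^ (μ + ν + 1) := by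
    rw [← pow_add]; congr 1; omega
  rw [this, mul_inv]
  ring

theorem octL_lim_ten (μ ν : ℕ) (hμ : 1 ≤ μ) (hν : 1 ≤ ν) (h10 : μ + ν = 10)
    (η : ℝ) (h0 : 0 < η) (h1 : η < 2 * π) :
    Tendsto (fun t => octW η t * octL μ ν 0 t η (2 * π - η)) (𝓝[>] 0)
      (𝓝 (-π * ((2 * π - η) ^ μ * η ^ ν - η ^ μ * (2 * π - η) ^ ν))) := by
  have h := octL_lim_gen μ ν 5 0 hμ hν (by omega) η h0 h1 (by rw [h10]; push_cast; ring)
  rw [h10] at h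
  refine (h.congr fun t => ?_).trans (le_of_eq ?_)
  · unfold octW; ring
  · congr 1; ring

noncomputable def octLS (L : List (ℝ × ℕ × ℕ)) (φ t x y : ℝ) : ℝ :=
  (L.map fun q => q.1 * octL q.2.1 q.2.2 φ t x y).sum

noncomputable def octPS (L : List (ℝ × ℕ × ℕ)) (a b : ℝ) : ℝ :=
  (L.map fun q => q.1 * (a ^ q.2.1 * b ^ q.2.2)).sum

theorem octLS_hasSum (L : List (ℝ × ℕ × ℕ)) (φ t x y : ℝ) (ht : 0 < t) :
    HasSum (fun p : ℕ × ℕ => octPS L ((p.1 : ℝ) + 1) ((p.2 : ℝ) + 1) *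
      (exp (-(4 * ((p.1 : ℝ) + 1) * ((p.2 : ℝ) + 1) * t)) * sin (((p.1 : ℝ) + 1) * x + ((p.2 : ℝ) + 1) * y + φ)))
      (octLS L φ t x y) := by
  induction L with
  | nil => simpa [octPS, octLS] using hasSum_zero
  | cons q L ih =>
    have := ((octL_summable q.2.1 q.2.2 φ t x y ht).hasSum.mul_left q.1).add ih
    simp only [octPS, octLS, List.map_cons, List.sum_cons]
    refine oct_hasSum_congr this (fun p => ?_) rfl
    simp only [octPS]; ring

theorem octLS_lim_zero (L : List (ℝ × ℕ × ℕ)) (φ η : ℝ) (h0 : 0 < η) (h1 : η < 2 * π)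
    (h : ∀ q ∈ L, 1 ≤ q.2.1 ∧ 1 ≤ q.2.2 ∧ 3 ≤ q.2.1 + q.2.2 ∧ q.2.1 + q.2.2 ≤ 9 ∧
      ∃ e : ℕ, ((q.2.1 + q.2.2 : ℕ) : ℝ) * (π / 2) = φ + e * π) :
    Tendsto (fun t => octW η t * octLS L φ t η (2 * π - η)) (𝓝[>] 0) (𝓝 0) := by
  induction L with
  | nil => simp [octLS]
  | cons q L ih =>
    have ih := ih (fun q' hq' => h q' (List.mem_cons_of_mem _ hq'))
    obtain ⟨a, b, c, d, e, he⟩ := h q List.mem_cons_self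
    have := ((octL_lim_small q.2.1 q.2.2 e φ a b c d η h0 h1 he).const_mul q.1).add ih
    simp only [mul_zero, add_zero] at this
    refine this.congr fun t => ?_
    simp only [octLS, List.map_cons, List.sum_cons]
    ring

noncomputable def octL1 : List (ℝ × ℕ × ℕ) := [(1, 5, 3), (-1, 3, 5), (-1, 5, 1), (1, 1, 5), (1, 3, 1), (-1, 1, 3)]
noncomputable def octL2 : List (ℝ × ℕ × ℕ) := [(1, 6, 3), (-1, 5, 4), (-1, 4, 5), (1, 3, 6), (-1, 6, 1), (1, 5, 2),
  (1, 2, 5), (-1, 1, 6), (1, 4, 1), (-1, 3, 2), (-1, 2, 3), (1, 1, 4)]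
noncomputable def octL3 : List (ℝ × ℕ × ℕ) := [(-1, 7, 1), (2, 6, 2), (-1, 5, 3), (1, 3, 5), (-2, 2, 6), (1, 1, 7),
  (1, 5, 1), (-2, 4, 2), (2, 2, 4), (-1, 1, 5)]
noncomputable def octL4 : List (ℝ × ℕ × ℕ) := [(1, 7, 3), (-2, 6, 4), (2, 4, 6), (-1, 3, 7)]

theorem octL1_eval (a b : ℝ) : (a + b) * (a ^ 3 - a) * (b ^ 3 - b) * (a - b) = octPS octL1 a b := by
  simp only [octPS, octL1, List.map_cons, List.sum_cons, List.map_nil, List.sum_nil]; ring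
theorem octL2_eval (a b : ℝ) : (a + b) * (a ^ 3 - a) * (b ^ 3 - b) * (a - b) ^ 2 = octPS octL2 a b := by
  simp only [octPS, octL2, List.map_cons, List.sum_cons, List.map_nil, List.sum_nil]; ring
theorem octL3_eval (a b : ℝ) : (a + b) * (a ^ 3 - a) * (b ^ 3 - b) * (a - b) ^ 3 = octPS octL3 a b + octPS octL4 a b := by
  simp only [octPS, octL3, octL4, List.map_cons, List.sum_cons, List.map_nil, List.sum_nil]; ring

theorem octLS1_lim (η : ℝ) (h0 : 0 < η) (h1 : η < 2 * π) :
    Tendsto (fun t => octW η t * octLS octL1 0 t η (2 * π - η)) (𝓝[>] 0) (𝓝 0) := by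
  refine octLS_lim_zero _ _ _ h0 h1 ?_
  have h : ∀ q ∈ octL1, 1 ≤ q.2.1 ∧ 1 ≤ q.2.2 ∧ 3 ≤ q.2.1 + q.2.2 ∧ q.2.1 + q.2.2 ≤ 9 ∧ (q.2.1 + q.2.2) % 2 = 0 := by
    simp [octL1]
  intro q hq
  obtain ⟨a, b, c, d, e⟩ := h q hq
  obtain ⟨e, he⟩ : ∃ e, q.2.1 + q.2.2 = 2 * e := ⟨(q.2.1 + q.2.2) / 2, by omega⟩
  exact ⟨a, b, c, d, e, by rw [he]; push_cast; ring⟩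

theorem octLS3_lim (η : ℝ) (h0 : 0 < η) (h1 : η < 2 * π) :
    Tendsto (fun t => octW η t * octLS octL3 0 t η (2 * π - η)) (𝓝[>] 0) (𝓝 0) := by
  refine octLS_lim_zero _ _ _ h0 h1 ?_
  have h : ∀ q ∈ octL3, 1 ≤ q.2.1 ∧ 1 ≤ q.2.2 ∧ 3 ≤ q.2.1 + q.2.2 ∧ q.2.1 + q.2.2 ≤ 9 ∧ (q.2.1 + q.2.2) % 2 = 0 := by
    simp [octL3]
  intro q hq
  obtain ⟨a, b, c, d, e⟩ := h q hq
  obtain ⟨e, he⟩ : ∃ e, q.2.1 + q.2.2 = 2 * e := ⟨(q.2.1 + q.2.2) / 2, by omega⟩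
  exact ⟨a, b, c, d, e, by rw [he]; push_cast; ring⟩

theorem octLS2_lim (η : ℝ) (h0 : 0 < η) (h1 : η < 2 * π) :
    Tendsto (fun t => octW η t * octLS octL2 (π / 2) t η (2 * π - η)) (𝓝[>] 0) (𝓝 0) := by
  refine octLS_lim_zero _ _ _ h0 h1 ?_
  have h : ∀ q ∈ octL2, 1 ≤ q.2.1 ∧ 1 ≤ q.2.2 ∧ 3 ≤ q.2.1 + q.2.2 ∧ q.2.1 + q.2.2 ≤ 9 ∧ (q.2.1 + q.2.2) % 2 = 1 := by
    simp [octL2]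
  intro q hq
  obtain ⟨a, b, c, d, e⟩ := h q hq
  obtain ⟨e, he⟩ : ∃ e, q.2.1 + q.2.2 = 2 * e + 1 := ⟨(q.2.1 + q.2.2) / 2, by omega⟩
  exact ⟨a, b, c, d, e, by rw [he]; push_cast; ring⟩

theorem octLS4_lim (η : ℝ) (h0 : 0 < η) (h1 : η < 2 * π) :
    Tendsto (fun t => octW η t * octLS octL4 0 t η (2 * π - η)) (𝓝[>] 0)
      (𝓝 (-(2 * π * η ^ 3 * (2 * π - η) ^ 3 * ((2 * π - η) ^ 2 - η ^ 2) * (2 * π - 2 * η) ^ 2))) := by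
  have h a b := octL_lim_ten a b
  have := ((((h 7 3 (by norm_num) (by norm_num) rfl η h0 h1).add
    ((h 6 4 (by norm_num) (by norm_num) rfl η h0 h1).const_mul (-2))).add
    ((h 4 6 (by norm_num) (by norm_num) rfl η h0 h1).const_mul 2)).sub
    (h 3 7 (by norm_num) (by norm_num) rfl η h0 h1))
  refine (this.congr fun t => ?_).trans (le_of_eq ?_)
  · simp only [octLS, octL4, List.map_cons, List.sum_cons, List.map_nil, List.sum_nil]; ring
  · congr 1; ring

/-- the symmetric double series -/
noncomputable def octF (t η : ℝ) (p : ℕ × ℕ) : ℝ :=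
  (((p.1 : ℝ) + 1) + ((p.2 : ℝ) + 1)) * (((p.1 : ℝ) + 1) ^ 3 - ((p.1 : ℝ) + 1)) *
    (((p.2 : ℝ) + 1) ^ 3 - ((p.2 : ℝ) + 1)) * exp (-(4 * ((p.1 : ℝ) + 1) * ((p.2 : ℝ) + 1) * t)) *
    octD (((p.1 : ℝ) + 1) - ((p.2 : ℝ) + 1)) η

theorem octF_hasSum (t η : ℝ) (ht : 0 < t) : HasSum (octF t η)
    (-(octLS octL3 0 t η (2 * π - η) + octLS octL4 0 t η (2 * π - η)) / sin η ^ 3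
     - 3 * cos η / sin η ^ 4 * octLS octL2 (π / 2) t η (2 * π - η)
     + (sin η ^ 2 + 3 * cos η ^ 2) / sin η ^ 5 * octLS octL1 0 t η (2 * π - η)) := by
  have h1 := octLS_hasSum octL1 0 t η (2 * π - η) ht
  have h2 := octLS_hasSum octL2 (π / 2) t η (2 * π - η) ht
  have h3 := octLS_hasSum octL3 0 t η (2 * π - η) ht
  have h4 := octLS_hasSum octL4 0 t η (2 * π - η) ht
  have := (((h3.add h4).mul_left (-(1 / sin η ^ 3))).sub (h2.mul_left (3 * cos η / sin η ^ 4))).add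
    (h1.mul_left ((sin η ^ 2 + 3 * cos η ^ 2) / sin η ^ 5))
  refine oct_hasSum_congr this (fun p => ?_) (by ring)
  · have hs : sin (((p.1 : ℝ) + 1) * η + ((p.2 : ℝ) + 1) * (2 * π - η) + 0)
        = sin ((((p.1 : ℝ) + 1) - ((p.2 : ℝ) + 1)) * η) := by
      rw [← Real.sin_add_nat_mul_two_pi ((((p.1 : ℝ) + 1) - ((p.2 : ℝ) + 1)) * η) (p.2 + 1)]
      congr 1; push_cast; ring
    have hc : sin (((p.1 : ℝ) + 1) * η + ((p.2 : ℝ) + 1) * (2 * π - η) + π / 2)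
        = cos ((((p.1 : ℝ) + 1) - ((p.2 : ℝ) + 1)) * η) := by
      rw [Real.sin_add_pi_div_two]
      rw [← Real.cos_add_nat_mul_two_pi ((((p.1 : ℝ) + 1) - ((p.2 : ℝ) + 1)) * η) (p.2 + 1)]
      congr 1; push_cast; ring
    simp only [hs, hc]
    have e3 := octL3_eval ((p.1 : ℝ) + 1) ((p.2 : ℝ) + 1)
    rw [← octL1_eval, ← octL2_eval, ← add_mul, ← octL3_eval]
    unfold octF octD
    generalize (p.1 : ℝ) + 1 = a
    generalize (p.2 : ℝ) + 1 = b
    ring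

theorem octF_lim (η : ℝ) (h0 : 0 < η) (h1 : η < 2 * π) :
    Tendsto (fun t => octW η t * ∑' p, octF t η p) (𝓝[>] 0)
      (𝓝 (2 * π * η ^ 3 * (2 * π - η) ^ 3 * ((2 * π - η) ^ 2 - η ^ 2) * (2 * π - 2 * η) ^ 2 / sin η ^ 3)) := by
  have := ((((octLS3_lim η h0 h1).add (octLS4_lim η h0 h1)).mul_const (-(1 / sin η ^ 3))).sub
    ((octLS2_lim η h0 h1).const_mul (3 * cos η / sin η ^ 4))).add
    ((octLS1_lim η h0 h1).const_mul ((sin η ^ 2 + 3 * cos η ^ 2) / sin η ^ 5))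
  refine (this.congr' ?_).trans (le_of_eq ?_)
  · filter_upwards [self_mem_nhdsWithin] with t ht
    rw [(octF_hasSum t η ht).tsum_eq]
    ring
  · congr 1; ring

theorem octD_zero (η : ℝ) : octD 0 η = 0 := by simp [octD]

theorem octD_neg (j η : ℝ) : octD (-j) η = octD j η := by
  simp only [octD, neg_mul, Real.sin_neg, Real.cos_neg]; ring

theorem octD_one (η : ℝ) (h : sin η ≠ 0) : octD 1 η = 0 := by
  simp only [octD, one_mul]; field_simp; ring

theorem octD_two (η : ℝ) (h : sin η ≠ 0) : octD 2 η = 0 := by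
  simp only [octD, Real.sin_two_mul, Real.cos_two_mul]
  have e : sin η ^ 2 = 1 - cos η ^ 2 := Real.sin_sq η
  field_simp
  simp only [e]; ring

theorem octF_swap (t η : ℝ) (p : ℕ × ℕ) : octF t η p.swap = octF t η p := by
  unfold octF
  simp only [Prod.fst_swap, Prod.snd_swap]
  rw [← octD_neg (((p.1 : ℝ) + 1) - ((p.2 : ℝ) + 1)), neg_sub,
    show 4 * ((p.2 : ℝ) + 1) * ((p.1 : ℝ) + 1) * t = 4 * ((p.1 : ℝ) + 1) * ((p.2 : ℝ) + 1) * t by ring]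
  ring

theorem octF_diag (t η : ℝ) (p : ℕ × ℕ) (h : p.1 = p.2) : octF t η p = 0 := by
  unfold octF; rw [h, sub_self, octD_zero, mul_zero]

theorem oct_choose3 (n : ℕ) : ((n + 3).choose 3 : ℝ) = ((n : ℝ) + 1) * (n + 2) * (n + 3) / 6 := by
  have := Nat.cast_choose_eq_ascPochhammer_div ℝ (n + 3) 3
  rw [this]
  simp [ascPochhammer, Nat.factorial, Polynomial.eval_comp]
  ring

theorem octF_tsum (t η : ℝ) (ht : 0 < t) (hη : sin η ≠ 0) :
    ∑' p, octF t η p = 2 * ∑' m : ℕ, ∑' k : ℕ, octF t η (k + 1, k + m + 4) := by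
  have hs := (octF_hasSum t η ht).summable
  set A : Set (ℕ × ℕ) := {p | p.1 < p.2}
  set B : Set (ℕ × ℕ) := {p | p.2 < p.1}
  have e : octF t η = fun p => A.indicator (octF t η) p + B.indicator (octF t η) p := by
    funext p
    rcases lt_trichotomy p.1 p.2 with h | h | h
    · rw [Set.indicator_of_mem (show p ∈ A from h), Set.indicator_of_notMem (show p ∉ B from not_lt.2 h.le), add_zero]
    · rw [Set.indicator_of_notMem (show p ∉ A from not_lt.2 h.ge),
        Set.indicator_of_notMem (show p ∉ B from not_lt.2 h.le), octF_diag _ _ _ h, add_zero]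
    · rw [Set.indicator_of_mem (show p ∈ B from h), Set.indicator_of_notMem (show p ∉ A from not_lt.2 h.le), zero_add]
  have hA := hs.indicator A
  have hB := hs.indicator B
  have e2 : ∑' p, B.indicator (octF t η) p = ∑' p, A.indicator (octF t η) p := by
    rw [← (Equiv.prodComm ℕ ℕ).tsum_eq]
    refine tsum_congr fun p => ?_
    simp only [Equiv.prodComm_apply]
    by_cases h : p.1 < p.2
    · rw [Set.indicator_of_mem (show p.swap ∈ B from h), Set.indicator_of_mem (show p ∈ A from h), octF_swap]
    · rw [Set.indicator_of_notMem (show p.swap ∉ B from h), Set.indicator_of_notMem (show p ∉ A from h)]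
  set g : ℕ × ℕ → ℕ × ℕ := fun q => (q.2 + 1, q.2 + q.1 + 4) with hg
  have hinj : Function.Injective g := by
    rintro ⟨a, b⟩ ⟨c, d⟩ h
    simp only [hg, Prod.mk.injEq] at h ⊢
    omega
  have hsupp : Function.support (A.indicator (octF t η)) ⊆ Set.range g := by
    rintro ⟨p1, p2⟩ hp
    by_contra hc
    apply hp
    by_cases hA : p1 < p2
    · rw [Set.indicator_of_mem (show (p1, p2) ∈ A from hA)]
      by_cases h1 : p1 = 0
      · simp [octF, h1]
      by_cases h3 : p1 + 3 ≤ p2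
      · exfalso
        apply hc
        refine ⟨(p2 - p1 - 3, p1 - 1), ?_⟩
        simp only [hg, Prod.mk.injEq]
        omega
      · have : p2 = p1 + 1 ∨ p2 = p1 + 2 := by omega
        unfold octF
        rcases this with h | h
        · rw [show ((((p1, p2).1 : ℕ) : ℝ) + 1) - ((((p1, p2).2 : ℕ) : ℝ) + 1) = -1 by simp [h],
            octD_neg, octD_one _ hη, mul_zero]
        · rw [show ((((p1, p2).1 : ℕ) : ℝ) + 1) - ((((p1, p2).2 : ℕ) : ℝ) + 1) = -2 by simp [h],
            octD_neg, octD_two _ hη, mul_zero]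
    · exact Set.indicator_of_notMem (show (p1, p2) ∉ A from hA) _
  have e3 : ∑' p, A.indicator (octF t η) p = ∑' q, octF t η (g q) := by
    rw [← hinj.tsum_eq hsupp]
    refine tsum_congr fun q => ?_
    refine Set.indicator_of_mem (show g q ∈ A from ?_) _
    show (g q).1 < (g q).2
    simp only [hg]; omega
  have e4 : ∑' p, octF t η p = ∑' p, (A.indicator (octF t η) p + B.indicator (octF t η) p) :=
    tsum_congr fun p => congrFun e p
  rw [e4, hA.tsum_add hB, e2, e3, ← two_mul]
  congr 1
  exact (hs.comp_injective hinj).tsum_prod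

theorem oct_p_eq (t η : ℝ) (ht : 0 < t) (hη : sin η ≠ 0) :
    pOct t 0 η = 1 / (6 * π ^ 8) * exp (40 * t) * ∑' p, octF t η p := by
  rw [octF_tsum t η ht hη, show ∀ z : ℝ, 1 / (6 * π ^ 8) * exp (40 * t) * (2 * z) =
    1 / (3 * π ^ 8) * exp (40 * t) * z by intro z; ring, ← tsum_mul_left]
  unfold pOct
  refine tsum_congr fun m => ?_
  rw [← tsum_mul_left]
  refine tsum_congr fun k => ?_
  rw [mul_zero, cos_zero, one_pow, mul_one, oct_jac_eval_one]
  have hh := oct_h_eq m η hη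
  have h1 : ((k + m + 6).choose (k + m + 3) : ℝ) = ((k : ℝ) + m + 4) * (k + m + 5) * (k + m + 6) / 6 := by
    rw [show (k + m + 6).choose (k + m + 3) = (k + m + 3 + 3).choose 3 from
      Nat.choose_symm_of_eq_add (by ring), oct_choose3]
    push_cast; ring
  unfold alphOct octF
  rw [h1, oct_choose3]
  have hj : ((((k + 1, k + m + 4) : ℕ × ℕ).1 : ℝ) + 1) - ((((k + 1, k + m + 4) : ℕ × ℕ).2 : ℝ) + 1) = -((m : ℝ) + 3) := by
    push_cast; ring
  rw [hj, octD_neg]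
  have hD : octD ((m : ℝ) + 3) η = 8 * (((m : ℝ) + 3) * ((m + 5).choose m : ℝ) * hOct m η) := by rw [hh]; ring
  rw [hD]
  have he : exp (-(4 * ((k * (k + m + 7) + 2 * m : ℕ) : ℝ)) * t) = exp (40 * t) *
    exp (-(4 * ((((k + 1, k + m + 4) : ℕ × ℕ).1 : ℝ) + 1) * ((((k + 1, k + m + 4) : ℕ × ℕ).2 : ℝ) + 1) * t)) := by
    rw [← exp_add]; congr 1; push_cast; ring
  rw [he]
  generalize exp (-(4 * ((((k + 1, k + m + 4) : ℕ × ℕ).1 : ℝ) + 1) * ((((k + 1, k + m + 4) : ℕ × ℕ).2 : ℝ) + 1) * t)) = E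
  push_cast
  have := Real.pi_pos
  field_simp
  ring

theorem oct_part1_pos (η : ℝ) (h0 : 0 < η) (h1 : η < π) :
    Tendsto (fun t => -(4 * t) * log (pOct t 0 η)) (𝓝[>] 0) (𝓝 (2 * π * η - η ^ 2)) := by
  have hpi := Real.pi_pos
  have hs : 0 < sin η := Real.sin_pos_of_pos_of_lt_pi h0 h1
  set c : ℝ := 1 / (6 * π ^ 8) *
    (2 * π * η ^ 3 * (2 * π - η) ^ 3 * ((2 * π - η) ^ 2 - η ^ 2) * (2 * π - 2 * η) ^ 2 / sin η ^ 3) with hc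
  have hcp : 0 < c := by
    have a1 : 0 < 2 * π - η := by linarith
    have a2 : 0 < (2 * π - η) ^ 2 - η ^ 2 := by nlinarith
    have a3 : 0 < 2 * π - 2 * η := by linarith
    positivity
  have hexp : Tendsto (fun t : ℝ => exp (40 * t)) (𝓝[>] 0) (𝓝 1) := by
    have : Continuous (fun t : ℝ => exp (40 * t)) := by fun_prop
    have := this.tendsto 0
    simp only [mul_zero, exp_zero] at this
    exact this.mono_left nhdsWithin_le_nhds
  have hlim : Tendsto (fun t => octW η t * pOct t 0 η) (𝓝[>] 0) (𝓝 c) := by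
    have := ((octF_lim η h0 (by linarith)).const_mul (1 / (6 * π ^ 8))).mul hexp
    rw [mul_one] at this
    refine this.congr' ?_
    filter_upwards [self_mem_nhdsWithin] with t ht
    rw [oct_p_eq t η ht hs.ne']
    ring
  refine oct_log_limit _ _ fun ε hε => ?_
  have b1 := hlim.eventually (lt_mem_nhds (show c / 2 < c by linarith))
  have b2 := hlim.eventually (gt_mem_nhds (show c < 2 * c by linarith))
  have b3 := oct_poly_le_exp (2 * c) 11 ε hε
  have b4 := oct_poly_le_exp (2 / c * 4 ^ 11) 0 ε hε
  have b5 : ∀ᶠ t : ℝ in 𝓝[>] 0, t < 1 := by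
    have : Set.Iio (1 : ℝ) ∈ 𝓝 (0 : ℝ) := Iio_mem_nhds one_pos
    exact mem_nhdsWithin_of_mem_nhds this
  filter_upwards [self_mem_nhdsWithin, b1, b2, b3, b4, b5] with t ht c1 c2 c3 c4 c5
  have ht : 0 < t := ht
  have hW : octW η t = (4 * t) ^ 11 * exp ((2 * π * η - η ^ 2) / (4 * t)) := by
    unfold octW
    rw [one_div, inv_pow, inv_inv]
    congr 2
    field_simp
  rw [hW] at c1 c2
  set E := exp ((2 * π * η - η ^ 2) / (4 * t)) with hE
  have hEp : 0 < E := exp_pos _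
  have hEe : 0 < exp (ε / (4 * t)) := exp_pos _
  constructor
  · rw [show -(2 * π * η - η ^ 2 + ε) / (4 * t) = -((2 * π * η - η ^ 2) / (4 * t)) + -(ε / (4 * t)) by ring,
      exp_add, exp_neg, exp_neg, ← hE]
    have : (4 * t) ^ 11 ≤ 4 ^ 11 := by
      rw [mul_pow]
      have : t ^ 11 ≤ 1 := pow_le_one₀ ht.le c5.le
      linarith
    rw [pow_zero, mul_one] at c4
    have hp : 0 < pOct t 0 η := by
      have : 0 < (4 * t) ^ 11 * E * pOct t 0 η := by linarith
      exact pos_of_mul_pos_right this (by positivity)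
    have h5 : c / 2 ≤ 4 ^ 11 * E * pOct t 0 η := c1.le.trans (by gcongr)
    have h6 : 1 ≤ pOct t 0 η * (E * exp (ε / (4 * t))) := by
      calc (1 : ℝ) = (c / 2) * (2 / c) := by field_simp
        _ ≤ (4 ^ 11 * E * pOct t 0 η) * (2 / c) := by gcongr
        _ = pOct t 0 η * (E * (2 / c * 4 ^ 11)) := by ring
        _ ≤ _ := by gcongr
    rw [← mul_inv, inv_le_iff_one_le_mul₀ (by positivity)]
    exact h6
  · rw [show -(2 * π * η - η ^ 2 - ε) / (4 * t) = -((2 * π * η - η ^ 2) / (4 * t)) + (ε / (4 * t)) by ring,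
      exp_add, exp_neg, ← hE]
    rw [← div_eq_inv_mul, le_div_iff₀ hEp]
    refine le_trans ?_ c3
    have h5 : pOct t 0 η * E ≤ 2 * c / (4 * t) ^ 11 := by
      rw [le_div_iff₀ (by positivity)]; linarith
    refine h5.trans ?_
    rw [div_eq_mul_inv, ← inv_pow, ← one_div]
    gcongr
    linarith

theorem oct_pow_exp_le (n : ℕ) (x : ℝ) (hx : 0 ≤ x) : x ^ n * exp (-x) ≤ n.factorial := by
  rw [exp_neg, ← div_eq_mul_inv, div_le_iff₀ (exp_pos _)]
  have := Real.pow_div_factorial_le_exp x hx n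
  rw [div_le_iff₀ (by positivity)] at this
  linarith

theorem oct_alph_bound (k m : ℕ) : 0 < alphOct k m ∧
    alphOct k m * ((k + 3).choose 3 : ℝ) ≤ 96 * 7 ^ 13 * (((k : ℝ) + 1) ^ 13 * ((m : ℝ) + 1) ^ 13) := by
  have hpi := Real.pi_gt_three
  have c1 : 0 < (k + m + 6).choose (k + m + 3) := Nat.choose_pos (by omega)
  have c2 : 0 < (m + 5).choose m := Nat.choose_pos (by omega)
  refine ⟨by unfold alphOct; positivity, ?_⟩
  set N : ℝ := 7 * (((k : ℝ) + 1) * ((m : ℝ) + 1)) with hN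
  have hk : (0 : ℝ) ≤ k := by positivity
  have hm : (0 : ℝ) ≤ m := by positivity
  have hkm : 0 ≤ (k : ℝ) * m := by positivity
  have b1 : ((k + m + 6).choose (k + m + 3) : ℝ) ≤ N ^ 3 := by
    rw [show (k + m + 6).choose (k + m + 3) = (k + m + 6).choose 3 from Nat.choose_symm_of_eq_add (by ring)]
    have : ((k + m + 6).choose 3 : ℝ) ≤ ((k + m + 6 : ℕ) : ℝ) ^ 3 := by exact_mod_cast Nat.choose_le_pow _ _
    refine this.trans (pow_le_pow_left₀ (by positivity) ?_ _)
    push_cast; rw [hN]; nlinarith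
  have b2 : ((m + 5).choose m : ℝ) ≤ N ^ 5 := by
    rw [show (m + 5).choose m = (m + 5).choose 5 from Nat.choose_symm_of_eq_add (by ring)]
    have : ((m + 5).choose 5 : ℝ) ≤ ((m + 5 : ℕ) : ℝ) ^ 5 := by exact_mod_cast Nat.choose_le_pow _ _
    refine this.trans (pow_le_pow_left₀ (by positivity) ?_ _)
    push_cast; rw [hN]; nlinarith
  have b3 : ((k + 3).choose 3 : ℝ) ≤ N ^ 3 := by
    have : ((k + 3).choose 3 : ℝ) ≤ ((k + 3 : ℕ) : ℝ) ^ 3 := by exact_mod_cast Nat.choose_le_pow _ _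
    refine this.trans (pow_le_pow_left₀ (by positivity) ?_ _)
    push_cast; rw [hN]; nlinarith
  have b4 : (96 / π ^ 8) ≤ 96 := div_le_self (by norm_num) (one_le_pow₀ (by linarith))
  have b5 : (m : ℝ) + 3 ≤ N := by rw [hN]; nlinarith
  have b6 : 2 * (k : ℝ) + m + 7 ≤ N := by rw [hN]; nlinarith
  have hN0 : 0 ≤ N := by positivity
  calc alphOct k m * ((k + 3).choose 3 : ℝ) ≤ 96 * N * N * N ^ 3 * N ^ 5 * N ^ 3 := by
        unfold alphOct; gcongr
    _ = _ := by rw [hN]; ring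

/-- terms of the kernel at the pole -/
noncomputable def octG (t : ℝ) (m k : ℕ) : ℝ :=
  alphOct k m * exp (-(4 * ((k * (k + m + 7) + 2 * m : ℕ) : ℝ)) * t) * ((k + 3).choose 3 : ℝ)

theorem octG_nonneg (t : ℝ) (m k : ℕ) : 0 ≤ octG t m k := by
  have := (oct_alph_bound k m).1
  unfold octG; positivity

theorem octG_bound : ∃ C : ℝ, 0 < C ∧ ∀ t, 0 < t → t ≤ 1 → ∀ m k : ℕ,
    octG t m k ≤ C * (1 / t) ^ 30 * ((1 / ((m : ℝ) + 1) ^ 2) * (1 / ((k : ℝ) + 1) ^ 2)) := by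
  have hb : ∀ t, 0 < t → t ≤ 1 → ∀ k : ℕ, ((k : ℝ) + 1) ^ 13 * exp (-(4 * k * t)) ≤
      (exp 4 * Nat.factorial 15) * (1 / t) ^ 15 * (1 / ((k : ℝ) + 1) ^ 2) := by
    intro t ht ht1 k
    have h := oct_pow_exp_le 15 (4 * (k + 1) * t) (by positivity)
    have e : exp (-(4 * k * t)) ≤ exp 4 * exp (-(4 * (k + 1) * t)) := by
      rw [← exp_add]; apply exp_le_exp.2; nlinarith
    rw [mul_one_div, le_div_iff₀ (by positivity), one_div, inv_pow, ← div_eq_mul_inv, le_div_iff₀ (by positivity)]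
    calc ((k : ℝ) + 1) ^ 13 * exp (-(4 * k * t)) * ((k : ℝ) + 1) ^ 2 * t ^ 15
        ≤ ((k : ℝ) + 1) ^ 13 * (exp 4 * exp (-(4 * (k + 1) * t))) * ((k : ℝ) + 1) ^ 2 * t ^ 15 := by gcongr
      _ = exp 4 * ((((k : ℝ) + 1) * t) ^ 15 * exp (-(4 * (k + 1) * t))) := by ring
      _ ≤ exp 4 * ((4 * ((k : ℝ) + 1) * t) ^ 15 * exp (-(4 * (k + 1) * t))) := by
          gcongr
          linarith
      _ ≤ _ := by gcongr
  refine ⟨96 * 7 ^ 13 * (exp 4 * Nat.factorial 15) ^ 2, by positivity, fun t ht ht1 m k => ?_⟩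
  have h1 := hb t ht ht1 k
  have h2 := hb t ht ht1 m
  have h3 := (oct_alph_bound k m).2
  have e : exp (-(4 * ((k * (k + m + 7) + 2 * m : ℕ) : ℝ)) * t) ≤ exp (-(4 * k * t)) * exp (-(4 * m * t)) := by
    rw [← exp_add]; apply exp_le_exp.2
    have hk : (k : ℝ) + m ≤ ((k * (k + m + 7) + 2 * m : ℕ) : ℝ) := by
      have : k + m ≤ k * (k + m + 7) + 2 * m := by nlinarith
      exact_mod_cast this
    nlinarith
  unfold octG
  calc alphOct k m * exp (-(4 * ((k * (k + m + 7) + 2 * m : ℕ) : ℝ)) * t) * ((k + 3).choose 3 : ℝ)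
      = (alphOct k m * ((k + 3).choose 3 : ℝ)) * exp (-(4 * ((k * (k + m + 7) + 2 * m : ℕ) : ℝ)) * t) := by ring
    _ ≤ (96 * 7 ^ 13 * (((k : ℝ) + 1) ^ 13 * ((m : ℝ) + 1) ^ 13)) * (exp (-(4 * k * t)) * exp (-(4 * m * t))) := by gcongr
    _ = 96 * 7 ^ 13 * ((((k : ℝ) + 1) ^ 13 * exp (-(4 * k * t))) * (((m : ℝ) + 1) ^ 13 * exp (-(4 * m * t)))) := by ring
    _ ≤ 96 * 7 ^ 13 * (((exp 4 * Nat.factorial 15) * (1 / t) ^ 15 * (1 / ((k : ℝ) + 1) ^ 2)) *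
         ((exp 4 * Nat.factorial 15) * (1 / t) ^ 15 * (1 / ((m : ℝ) + 1) ^ 2))) := by gcongr
    _ = _ := by ring

theorem oct_summable_inv_sq : Summable (fun k : ℕ => 1 / ((k : ℝ) + 1) ^ 2) := by
  have := (summable_nat_add_iff 1).2 (Real.summable_one_div_nat_pow.2 (by norm_num : 1 < 2))
  simpa using this

theorem oct_part_zero : Tendsto (fun t => -(4 * t) * log (pOct t 0 0)) (𝓝[>] 0) (𝓝 0) := by
  obtain ⟨C, hC, hb⟩ := octG_bound
  set Z := ∑' k : ℕ, 1 / ((k : ℝ) + 1) ^ 2 with hZ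
  have hs := oct_summable_inv_sq
  have e : ∀ t, pOct t 0 0 = ∑' m : ℕ, ∑' k : ℕ, octG t m k := by
    intro t
    unfold pOct octG
    refine tsum_congr fun m => tsum_congr fun k => ?_
    rw [mul_zero, cos_zero, one_pow, mul_one, oct_jac_eval_one, oct_h_zero, mul_one]
  have hub : ∀ t, 0 < t → t ≤ 1 → octG t 0 0 ≤ pOct t 0 0 ∧ pOct t 0 0 ≤ C * Z ^ 2 * (1 / t) ^ 30 := by
    intro t ht ht1
    rw [e]
    have s1 : ∀ m, Summable (fun k => octG t m k) := fun m =>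
      Summable.of_nonneg_of_le (octG_nonneg t m) (hb t ht ht1 m) ((hs.mul_left _).mul_left _)
    have b1 : ∀ m, ∑' k, octG t m k ≤ C * (1 / t) ^ 30 * (1 / ((m : ℝ) + 1) ^ 2 * Z) := by
      intro m
      rw [hZ, ← tsum_mul_left, ← tsum_mul_left]
      exact (s1 m).tsum_le_tsum (hb t ht ht1 m) ((hs.mul_left _).mul_left _)
    have n1 : ∀ m, 0 ≤ ∑' k, octG t m k := fun m => tsum_nonneg (octG_nonneg t m)
    have s2 : Summable (fun m : ℕ => C * (1 / t) ^ 30 * (1 / ((m : ℝ) + 1) ^ 2 * Z)) :=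
      (hs.mul_right _).mul_left _
    have s3 : Summable (fun m => ∑' k, octG t m k) := Summable.of_nonneg_of_le n1 b1 s2
    constructor
    · exact ((s1 0).le_tsum 0 fun k _ => octG_nonneg t 0 k).trans (s3.le_tsum 0 fun m _ => n1 m)
    · refine (s3.tsum_le_tsum b1 s2).trans (le_of_eq ?_)
      rw [tsum_mul_left, tsum_mul_right, ← hZ]; ring
  have hg0 : ∀ t, octG t 0 0 = octG 0 0 0 := by intro t; simp [octG]
  have hg : 0 < octG 0 0 0 := by
    have := (oct_alph_bound 0 0).1
    unfold octG; simpa using this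
  have b5 : ∀ᶠ t : ℝ in 𝓝[>] 0, t < 1 :=
    mem_nhdsWithin_of_mem_nhds (Iio_mem_nhds one_pos)
  refine oct_log_limit _ _ fun ε hε => ?_
  filter_upwards [self_mem_nhdsWithin, b5, oct_poly_le_exp (C * Z ^ 2) 30 ε hε,
    oct_poly_le_exp (1 / octG 0 0 0) 0 ε hε] with t ht ht1 h1 h2
  obtain ⟨u1, u2⟩ := hub t ht ht1.le
  constructor
  · rw [zero_add, neg_div, exp_neg]
    rw [pow_zero, mul_one] at h2
    refine le_trans ?_ u1
    rw [hg0]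
    rw [one_div] at h2
    exact inv_le_of_inv_le₀ hg h2
  · rw [zero_sub, neg_neg]
    exact u2.trans h1

theorem oct_part1 (η : ℝ) (h0 : 0 ≤ η) (h1 : η < π) :
    Tendsto (fun t => -(4 * t) * log (pOct t 0 η)) (𝓝[>] 0) (𝓝 (2 * π * η - η ^ 2)) := by
  rcases h0.eq_or_lt with h | h
  · rw [← h]; simpa using oct_part_zero
  · exact oct_part1_pos η h h1

/-- coefficients of Chebyshev polynomials -/
noncomputable def octT (j : ℤ) (k : ℕ) : ℝ := (Polynomial.Chebyshev.T ℝ j).coeff k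

theorem octT_neg (j : ℤ) (k : ℕ) : octT (-j) k = octT j k := by
  unfold octT; rw [Polynomial.Chebyshev.T_neg]

theorem octT_zero (k : ℕ) : octT 0 k = if k = 0 then 1 else 0 := by
  unfold octT; rw [Polynomial.Chebyshev.T_zero, Polynomial.coeff_one]

theorem octT_one (k : ℕ) : octT 1 k = if k = 1 then 1 else 0 := by
  unfold octT; rw [Polynomial.Chebyshev.T_one, Polynomial.coeff_X]; simp [eq_comm]

theorem octT_rec_zero (j : ℤ) : octT (j + 1) 0 + octT (j - 1) 0 = 0 := by
  unfold octT
  rw [Polynomial.Chebyshev.T_add_one, Polynomial.coeff_sub, mul_assoc, Polynomial.coeff_ofNat_mul]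
  simp

theorem octT_rec_succ (j : ℤ) (k : ℕ) : octT (j + 1) (k + 1) + octT (j - 1) (k + 1) = 2 * octT j k := by
  unfold octT
  rw [Polynomial.Chebyshev.T_add_one, Polynomial.coeff_sub, mul_assoc, Polynomial.coeff_ofNat_mul,
    Polynomial.coeff_X_mul]
  ring

/-- majorant polynomials -/
noncomputable def octS : ℕ → Polynomial ℝ
  | 0 => 1
  | 1 => Polynomial.X
  | (n + 2) => 2 * Polynomial.X * octS (n + 1) + octS n

theorem octT_le_S (n : ℕ) : ∀ k, |octT n k| ≤ (octS n).coeff k := by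
  induction n using Nat.twoStepInduction with
  | zero => intro k; simp only [Nat.cast_zero, octT_zero, octS, Polynomial.coeff_one]; split_ifs <;> simp
  | one => intro k; simp only [Nat.cast_one, octT_one, octS, Polynomial.coeff_X]; split_ifs with h1 h2 h2 <;> simp_all
  | more n ih0 ih1 =>
    intro k
    rw [octS, Polynomial.coeff_add, mul_assoc, Polynomial.coeff_ofNat_mul]
    rcases k with _ | k
    · have := octT_rec_zero (n + 1)
      rw [show (n : ℤ) + 1 + 1 = ((n + 2 : ℕ) : ℤ) by push_cast; ring, add_sub_cancel_right] at this
      rw [show octT ((n + 2 : ℕ) : ℤ) 0 = -octT n 0 by linarith, abs_neg]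
      simpa using ih0 0
    · have := octT_rec_succ (n + 1) k
      rw [show (n : ℤ) + 1 + 1 = ((n + 2 : ℕ) : ℤ) by push_cast; ring, add_sub_cancel_right] at this
      rw [show octT ((n + 2 : ℕ) : ℤ) (k + 1) = 2 * octT ((n : ℤ) + 1) k - octT n (k + 1) by linarith,
        Polynomial.coeff_X_mul]
      have h1 := ih1 k
      have h0 := ih0 (k + 1)
      push_cast at h1
      calc _ ≤ |2 * octT ((n : ℤ) + 1) k| + |octT n (k + 1)| := abs_sub _ _
        _ ≤ _ := by rw [abs_mul, abs_two]; linarith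

theorem octS_eval (Y : ℝ) (hY : 0 ≤ Y) (n : ℕ) : 0 ≤ (octS n).eval Y ∧ (octS n).eval Y ≤ (2 * Y + 1) ^ n := by
  induction n using Nat.twoStepInduction with
  | zero => simp [octS]
  | one => simp [octS]; exact ⟨hY, by linarith⟩
  | more n ih0 ih1 =>
    simp only [octS, Polynomial.eval_add, Polynomial.eval_mul, Polynomial.eval_ofNat, Polynomial.eval_X]
    refine ⟨by have := ih0.1; have := ih1.1; positivity, ?_⟩
    calc _ ≤ 2 * Y * (2 * Y + 1) ^ (n + 1) + (2 * Y + 1) ^ n := by gcongr; exact ih1.2; exact ih0.2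
      _ = (2 * Y + 1) ^ n * (2 * Y * (2 * Y + 1) + 1) := by ring
      _ ≤ (2 * Y + 1) ^ n * (2 * Y + 1) ^ 2 := by gcongr; nlinarith
      _ = _ := by ring

theorem oct_poly_hasSum (P : Polynomial ℝ) (Y : ℝ) : HasSum (fun k => P.coeff k * Y ^ k) (P.eval Y) := by
  rw [Polynomial.eval_eq_sum_range]
  refine hasSum_sum_of_ne_finset_zero fun k hk => ?_
  rw [Polynomial.coeff_eq_zero_of_natDegree_lt, zero_mul]
  simpa using hk

theorem octT_abs (j : ℤ) (k : ℕ) : |octT j k| ≤ (octS j.natAbs).coeff k := by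
  have := octT_le_S j.natAbs k
  have e : octT (j.natAbs : ℤ) k = octT j k := by unfold octT; rw [Polynomial.Chebyshev.T_natAbs]
  rwa [e] at this

theorem octT_abs_le (j : ℤ) (k : ℕ) : |octT j k| ≤ 3 ^ j.natAbs := by
  refine (octT_abs j k).trans ?_
  have h := oct_poly_hasSum (octS j.natAbs) 1
  have h1 := (octS_eval 1 zero_le_one j.natAbs).2
  refine le_trans ?_ (h1.trans (by norm_num))
  have := le_hasSum h k (fun i _ => by
    rw [one_pow, mul_one]; exact (abs_nonneg _).trans (octT_abs j i))
  simpa using this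

theorem octT_deg (j : ℤ) (k : ℕ) (h : j.natAbs < k) : octT j k = 0 := by
  unfold octT
  apply Polynomial.coeff_eq_zero_of_natDegree_lt
  rwa [Polynomial.Chebyshev.natDegree_T]

/-- gaussian geometric summability -/
theorem oct_gauss_summable_nat (t Z : ℝ) (ht : 0 < t) (hZ : 0 < Z) :
    Summable (fun n : ℕ => exp (-t * n ^ 2) * Z ^ n) := by
  obtain ⟨M, hM⟩ : ∃ M : ℝ, ∀ n : ℕ, exp (-t * n ^ 2) * Z ^ n ≤ exp M * (exp (-1)) ^ n := by
    refine ⟨(Real.log Z + 1) ^ 2 / (4 * t), fun n => ?_⟩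
    rw [← exp_nat_mul, ← exp_add]
    nth_rewrite 1 [← Real.exp_log hZ]
    rw [← exp_nat_mul, ← exp_add]
    apply exp_le_exp.2
    have : 0 ≤ (Real.log Z + 1 - 2 * t * n) ^ 2 / (4 * t) := by positivity
    have e : (Real.log Z + 1 - 2 * t * n) ^ 2 / (4 * t) = (Real.log Z + 1) ^ 2 / (4 * t) - (Real.log Z + 1) * n + t * n ^ 2 := by
      field_simp; ring
    nlinarith
  refine Summable.of_nonneg_of_le (fun n => by positivity) hM ?_
  exact (summable_geometric_of_lt_one (exp_pos _).le (by rw [exp_lt_one_iff]; norm_num)).mul_left _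

theorem oct_gauss_summable (t Z : ℝ) (ht : 0 < t) (hZ : 0 < Z) :
    Summable (fun j : ℤ => exp (-t * (j : ℝ) ^ 2) * Z ^ j.natAbs) := by
  have := oct_gauss_summable_nat t Z ht hZ
  refine Summable.of_nat_of_neg ?_ ?_
  · simpa using this
  · simpa using this

noncomputable def octC (t : ℝ) (k : ℕ) : ℝ := ∑' j : ℤ, exp (-t * (j : ℝ) ^ 2) * octT j k

theorem octC_summable (t : ℝ) (k : ℕ) (ht : 0 < t) : Summable (fun j : ℤ => exp (-t * (j : ℝ) ^ 2) * octT j k) := by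
  refine Summable.of_norm_bounded (oct_gauss_summable t 3 ht (by norm_num)) fun j => ?_
  rw [norm_mul, Real.norm_of_nonneg (exp_pos _).le]
  gcongr
  exact octT_abs_le j k

noncomputable def octTh (t X : ℝ) : ℝ := ∑' j : ℤ, exp (-t * (j : ℝ) ^ 2) * (Polynomial.Chebyshev.T ℝ j).eval X

theorem oct_prod_summable (w : ℤ → ℝ) (c : ℤ → ℕ → ℝ) (M : ℤ → ℝ) (hw : ∀ j, 0 ≤ w j)
    (hc : ∀ j k, 0 ≤ c j k) (hs : ∀ j, Summable (c j)) (hM : ∀ j, ∑' k, c j k ≤ M j)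
    (hMs : Summable fun j => w j * M j) : Summable (fun p : ℤ × ℕ => w p.1 * c p.1 p.2) := by
  have hn : ∀ p : ℤ × ℕ, 0 ≤ w p.1 * c p.1 p.2 := fun p => mul_nonneg (hw p.1) (hc p.1 p.2)
  have key := summable_prod_of_nonneg (f := fun p : ℤ × ℕ => w p.1 * c p.1 p.2) hn
  rw [key]
  refine ⟨fun j => (hs j).mul_left (w j), ?_⟩
  refine Summable.of_nonneg_of_le (fun j => tsum_nonneg fun k => mul_nonneg (hw _) (hc _ _)) (fun j => ?_) hMs
  show ∑' y, w j * c j y ≤ _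
  rw [tsum_mul_left]
  exact mul_le_mul_of_nonneg_left (hM j) (hw j)

theorem oct_prod_swap (f : ℤ → ℕ → ℝ) (a : ℤ → ℝ) (b : ℕ → ℝ) (hs : Summable (fun p : ℤ × ℕ => f p.1 p.2))
    (ha : ∀ j, HasSum (f j) (a j)) (hb : ∀ k, HasSum (fun j => f j k) (b k)) : HasSum b (∑' j, a j) := by
  have h1 : HasSum a (∑' p : ℤ × ℕ, f p.1 p.2) := hs.hasSum.prod_fiberwise ha
  rw [h1.tsum_eq]
  have h2 : HasSum (fun p : ℕ × ℤ => f p.2 p.1) (∑' p : ℤ × ℕ, f p.1 p.2) :=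
    (Equiv.prodComm ℕ ℤ).hasSum_iff.2 hs.hasSum
  exact h2.prod_fiberwise hb

theorem octTh_hasSum (t X : ℝ) (ht : 0 < t) (hX : 0 ≤ X) : HasSum (fun k => octC t k * X ^ k) (octTh t X) := by
  have h1 := oct_prod_summable (fun j => exp (-t * (j : ℝ) ^ 2)) (fun j k => (octS j.natAbs).coeff k * X ^ k)
    (fun j => (2 * X + 1) ^ j.natAbs) (fun j => (exp_pos _).le)
    (fun j k => mul_nonneg ((abs_nonneg _).trans (octT_abs j k)) (pow_nonneg hX _))
    (fun j => (oct_poly_hasSum _ X).summable)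
    (fun j => by rw [(oct_poly_hasSum _ X).tsum_eq]; exact (octS_eval X hX _).2)
    (oct_gauss_summable t (2 * X + 1) ht (by positivity))
  refine oct_prod_swap (fun j k => exp (-t * (j : ℝ) ^ 2) * (octT j k * X ^ k)) _ _ ?_ ?_ ?_
  · refine Summable.of_norm_bounded h1 fun p => ?_
    rw [norm_mul, norm_mul, Real.norm_of_nonneg (exp_pos _).le, Real.norm_of_nonneg (pow_nonneg hX _)]
    exact mul_le_mul_of_nonneg_left (mul_le_mul_of_nonneg_right (octT_abs _ _) (pow_nonneg hX _)) (exp_pos _).le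
  · intro j
    exact (oct_poly_hasSum (Polynomial.Chebyshev.T ℝ j) X).mul_left _
  · intro k
    have := (octC_summable t k ht).hasSum.mul_right (X ^ k)
    exact oct_hasSum_congr this (fun j => by ring) rfl

/-- inverse of the finite q-Pochhammer symbol -/
noncomputable def octRn (Q : ℝ) : ℕ → ℝ
  | 0 => 1
  | (m + 1) => octRn Q m / (1 - Q ^ (m + 1))

noncomputable def octR (Q : ℝ) (m : ℤ) : ℝ := if 0 ≤ m then octRn Q m.toNat else 0

theorem octRn_bound (Q : ℝ) (h0 : 0 < Q) (h1 : Q < 1) (m : ℕ) :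
    1 ≤ octRn Q m ∧ octRn Q m ≤ exp (Q * (1 - Q ^ m) / (1 - Q) ^ 2) := by
  induction m with
  | zero => simp [octRn]
  | succ m ih =>
    have hq : Q ^ (m + 1) ≤ Q := by
      rw [pow_succ]; exact mul_le_of_le_one_left h0.le (pow_le_one₀ h0.le h1.le)
    have hq0 : 0 < Q ^ (m + 1) := by positivity
    have h2 : 0 < 1 - Q ^ (m + 1) := by linarith
    rw [octRn]
    constructor
    · rw [le_div_iff₀ h2]; linarith [ih.1]
    · rw [div_eq_mul_inv]
      have e : (1 - Q ^ (m + 1))⁻¹ ≤ exp (Q ^ (m + 1) / (1 - Q)) := by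
        calc (1 - Q ^ (m + 1))⁻¹ = Q ^ (m + 1) / (1 - Q ^ (m + 1)) + 1 := by field_simp; ring
          _ ≤ Q ^ (m + 1) / (1 - Q) + 1 := by gcongr
          _ ≤ _ := add_one_le_exp _
      calc _ ≤ exp (Q * (1 - Q ^ m) / (1 - Q) ^ 2) * exp (Q ^ (m + 1) / (1 - Q)) := by
            gcongr; exact ih.2
        _ = _ := by
          rw [← exp_add]; congr 1
          have : 1 - Q ≠ 0 := by linarith
          field_simp; ring

theorem octRn_le (Q : ℝ) (h0 : 0 < Q) (h1 : Q < 1) (m : ℕ) : octRn Q m ≤ exp (Q / (1 - Q) ^ 2) := by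
  refine (octRn_bound Q h0 h1 m).2.trans (exp_le_exp.2 ?_)
  gcongr
  have : 0 < Q ^ m := by positivity
  nlinarith

theorem octRn_mono (Q : ℝ) (h0 : 0 < Q) (h1 : Q < 1) : Monotone (octRn Q) := by
  refine monotone_nat_of_le_succ fun m => ?_
  have hq : Q ^ (m + 1) ≤ Q := by
    rw [pow_succ]; exact mul_le_of_le_one_left h0.le (pow_le_one₀ h0.le h1.le)
  have hq0 : 0 < Q ^ (m + 1) := by positivity
  have := (octRn_bound Q h0 h1 m).1
  rw [octRn, le_div_iff₀ (by linarith)]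
  nlinarith

theorem octRn_lim (Q : ℝ) (h0 : 0 < Q) (h1 : Q < 1) : ∃ L, 1 ≤ L ∧ Tendsto (octRn Q) atTop (𝓝 L) := by
  have h := tendsto_atTop_ciSup (octRn_mono Q h0 h1)
    ⟨exp (Q / (1 - Q) ^ 2), by rintro _ ⟨m, rfl⟩; exact octRn_le Q h0 h1 m⟩
  exact ⟨_, ge_of_tendsto' h fun m => (octRn_bound Q h0 h1 m).1, h⟩

theorem octR_nonneg (Q : ℝ) (h0 : 0 < Q) (h1 : Q < 1) (m : ℤ) : 0 ≤ octR Q m := by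
  unfold octR; split_ifs
  · linarith [(octRn_bound Q h0 h1 m.toNat).1]
  · exact le_rfl

theorem octR_le (Q : ℝ) (h0 : 0 < Q) (h1 : Q < 1) (m : ℤ) : octR Q m ≤ exp (Q / (1 - Q) ^ 2) := by
  unfold octR; split_ifs
  · exact octRn_le Q h0 h1 _
  · positivity

theorem octR_rec (Q : ℝ) (h0 : 0 < Q) (h1 : Q < 1) (m : ℤ) : octR Q (m - 1) = (1 - Q ^ m) * octR Q m := by
  unfold octR
  rcases lt_trichotomy m 0 with h | h | h
  · rw [if_neg (by omega), if_neg (by omega), mul_zero]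
  · subst h; simp
  · rw [if_pos (by omega), if_pos (by omega)]
    obtain ⟨n, rfl⟩ : ∃ n : ℕ, m = n + 1 := ⟨(m - 1).toNat, by omega⟩
    rw [add_sub_cancel_right, Int.toNat_natCast, show ((n : ℤ) + 1).toNat = n + 1 by omega, octRn]
    have hq : Q ^ (n + 1) < 1 := pow_lt_one₀ h0.le h1 (by omega)
    rw [show Q ^ ((n : ℤ) + 1) = Q ^ (n + 1) by rw [← zpow_natCast]; norm_num]
    have : 1 - Q ^ (n + 1) ≠ 0 := by linarith
    field_simp

theorem octR_lim (Q L : ℝ) (hL : Tendsto (octRn Q) atTop (𝓝 L)) (f : ℕ → ℤ) (hf : Tendsto f atTop atTop) :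
    Tendsto (fun n => octR Q (f n)) atTop (𝓝 L) := by
  have h2 : Tendsto (fun n => (f n).toNat) atTop atTop := by
    rw [tendsto_atTop] at hf ⊢
    intro b
    filter_upwards [hf b] with n hn
    omega
  refine (hL.comp h2).congr' ?_
  filter_upwards [hf.eventually_ge_atTop 0] with n hn
  simp [octR, hn]

noncomputable def octU (t : ℝ) (n : ℕ) (j : ℤ) : ℝ :=
  exp (-t * (j : ℝ) ^ 2) * (octR (exp (-2 * t)) (n + j) * octR (exp (-2 * t)) (n - j) / octRn (exp (-2 * t)) (2 * n))

theorem oct_exp_zpow (t : ℝ) (j : ℤ) : exp (-2 * t) ^ j = exp (-2 * t * j) := by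
  rw [Real.exp_mul (-2 * t), Real.rpow_intCast]

theorem octU_rec (t : ℝ) (ht : 0 < t) (n : ℕ) (j : ℤ) :
    octU t (n + 1) j = (1 + exp (-t * (4 * n + 2))) * octU t n j +
      exp (-t * (2 * n + 1)) * (octU t n (j - 1) + octU t n (j + 1)) := by
  have h0 : 0 < exp (-2 * t) := exp_pos _
  have h1 : exp (-2 * t) < 1 := by rw [exp_lt_one_iff]; linarith
  set Q := exp (-2 * t) with hQ
  set a := octR Q (n + 1 + j) with ha
  set b := octR Q (n + 1 - j) with hb
  set x := Q ^ ((n : ℤ) + j) with hx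
  set y := Q ^ ((n : ℤ) - j) with hy
  set E := exp (-t * (j : ℝ) ^ 2) with hE
  have r1 : octR Q (n + j) = (1 - x * Q) * a := by
    have := octR_rec Q h0 h1 (n + 1 + j)
    rw [show (n : ℤ) + 1 + j - 1 = n + j by ring, show (n : ℤ) + 1 + j = (n + j) + 1 by ring,
      zpow_add_one₀ h0.ne', show ((n : ℤ) + j) + 1 = n + 1 + j by ring] at this
    exact this
  have r2 : octR Q (n - j) = (1 - y * Q) * b := by
    have := octR_rec Q h0 h1 (n + 1 - j)
    rw [show (n : ℤ) + 1 - j - 1 = n - j by ring, show (n : ℤ) + 1 - j = (n - j) + 1 by ring,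
      zpow_add_one₀ h0.ne', show ((n : ℤ) - j) + 1 = n + 1 - j by ring] at this
    exact this
  have r3 : octR Q (n + (j - 1)) = (1 - x) * ((1 - x * Q) * a) := by
    rw [← r1, ← octR_rec Q h0 h1 (n + j), add_sub_assoc]
  have r4 : octR Q (n - (j + 1)) = (1 - y) * ((1 - y * Q) * b) := by
    rw [← r2, ← octR_rec Q h0 h1 (n - j), sub_sub]
  have r5 : octR Q (n - (j - 1)) = b := by rw [hb]; congr 1; ring
  have r6 : octR Q (n + (j + 1)) = a := by rw [ha]; congr 1; ring
  have xy : Q ^ (2 * n) = x * y := by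
    rw [hx, hy, ← zpow_add₀ h0.ne', ← zpow_natCast]; congr 1; push_cast; ring
  have e1 : exp (-t * (4 * n + 2)) = x * y * Q := by
    rw [← xy, hQ, ← exp_nat_mul, ← exp_add]; congr 1; push_cast; ring
  have e2 : exp (-t * (2 * n + 1)) * exp (-t * ((j - 1 : ℤ) : ℝ) ^ 2) = y * Q * E := by
    rw [hy, hE, hQ, oct_exp_zpow, ← exp_add, ← exp_add, ← exp_add]; congr 1; push_cast; ring
  have e3 : exp (-t * (2 * n + 1)) * exp (-t * ((j + 1 : ℤ) : ℝ) ^ 2) = x * Q * E := by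
    rw [hx, hE, hQ, oct_exp_zpow, ← exp_add, ← exp_add, ← exp_add]; congr 1; push_cast; ring
  set W := octRn Q (2 * n) with hW
  have hWp : 0 < W := by linarith [(octRn_bound Q h0 h1 (2 * n)).1]
  have w1 : octRn Q (2 * (n + 1)) = W / (1 - x * y * Q) / (1 - x * y * Q ^ 2) := by
    rw [show 2 * (n + 1) = 2 * n + 1 + 1 by ring, octRn, octRn, pow_succ Q (2 * n + 1), pow_succ Q (2 * n), xy]
    ring
  have p1 : 0 < 1 - x * y * Q := by
    rw [← xy, ← pow_succ]; linarith [pow_lt_one₀ h0.le h1 (n := 2 * n + 1) (by omega)]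
  have p2 : 0 < 1 - x * y * Q ^ 2 := by
    rw [← xy, ← pow_add]; linarith [pow_lt_one₀ h0.le h1 (n := 2 * n + 2) (by omega)]
  unfold octU
  rw [show ∀ c d e A B : ℝ, c * (d * A + e * B) = (c * d) * A + (c * e) * B from fun _ _ _ _ _ => by ring, e2, e3, e1, ← hQ, ← hE, r1, r2, r3, r4, r5, r6, ← hW]
  rw [w1, show (((n + 1 : ℕ) : ℤ) + j) = n + 1 + j by push_cast; ring,
    show (((n + 1 : ℕ) : ℤ) - j) = n + 1 - j by push_cast; ring, ← ha, ← hb]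
  field_simp
  ring

noncomputable def octB (t : ℝ) : ℕ → ℕ → ℝ
  | 0, k => if k = 0 then 1 else 0
  | n + 1, 0 => (1 + exp (-t * (4 * n + 2))) * octB t n 0
  | n + 1, k + 1 => (1 + exp (-t * (4 * n + 2))) * octB t n (k + 1) + exp (-t * (2 * n + 1)) * (2 * octB t n k)

theorem octB_nonneg (t : ℝ) (n : ℕ) : ∀ k, 0 ≤ octB t n k := by
  induction n with
  | zero => intro k; rw [octB]; split_ifs <;> norm_num
  | succ n ih =>
    intro k
    rcases k with _ | k
    · rw [octB]; have := ih 0; positivity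
    · rw [octB]; have := ih k; have := ih (k + 1); positivity

theorem octU_bound (t : ℝ) (ht : 0 < t) : ∃ M, ∀ n j, |octU t n j| ≤ M * exp (-t * (j : ℝ) ^ 2) := by
  have h0 : 0 < exp (-2 * t) := exp_pos _
  have h1 : exp (-2 * t) < 1 := by rw [exp_lt_one_iff]; linarith
  set Q := exp (-2 * t) with hQ
  refine ⟨exp (Q / (1 - Q) ^ 2) * exp (Q / (1 - Q) ^ 2), fun n j => ?_⟩
  have a1 := octR_nonneg Q h0 h1 (n + j)
  have a2 := octR_nonneg Q h0 h1 (n - j)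
  have a3 := octR_le Q h0 h1 (n + j)
  have a4 := octR_le Q h0 h1 (n - j)
  have a5 := (octRn_bound Q h0 h1 (2 * n)).1
  unfold octU
  rw [← hQ, abs_of_nonneg (by positivity), mul_comm]
  gcongr
  rw [div_le_iff₀ (by linarith)]
  calc _ ≤ exp (Q / (1 - Q) ^ 2) * exp (Q / (1 - Q) ^ 2) := by gcongr
    _ ≤ _ := le_mul_of_one_le_right (by positivity) a5

theorem octU_term_bound (t : ℝ) (ht : 0 < t) : ∃ M, ∀ n j k, ‖octU t n j * octT j k‖ ≤ M * (exp (-t * (j : ℝ) ^ 2) * 3 ^ j.natAbs) := by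
  obtain ⟨M, hM⟩ := octU_bound t ht
  refine ⟨M, fun n j k => ?_⟩
  rw [norm_mul, ← mul_assoc]
  exact mul_le_mul (hM n j) (octT_abs_le j k) (abs_nonneg _) ((abs_nonneg _).trans (hM n j))

theorem octU_summable (t : ℝ) (ht : 0 < t) (n k : ℕ) : Summable (fun j => octU t n j * octT j k) := by
  obtain ⟨M, hM⟩ := octU_term_bound t ht
  exact Summable.of_norm_bounded ((oct_gauss_summable t 3 ht (by norm_num)).mul_left M) (fun j => hM n j k)

theorem octU_shift_summable (t : ℝ) (ht : 0 < t) (n k : ℕ) :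
    Summable (fun j => octU t n j * octT (j + 1) k) ∧ Summable (fun j => octU t n j * octT (j - 1) k) := by
  obtain ⟨M, hM⟩ := octU_bound t ht
  have key : ∀ j i : ℤ, i.natAbs ≤ j.natAbs + 1 → ‖octU t n j * octT i k‖ ≤ (M * 3) * (exp (-t * (j : ℝ) ^ 2) * 3 ^ j.natAbs) := by
    intro j i hij
    rw [norm_mul]
    calc _ ≤ (M * exp (-t * (j : ℝ) ^ 2)) * (3 ^ (j.natAbs + 1)) := by
          refine mul_le_mul (hM n j) ((octT_abs_le i k).trans ?_) (abs_nonneg _) ((abs_nonneg _).trans (hM n j))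
          exact pow_le_pow_right₀ (by norm_num) hij
      _ = _ := by ring
  have hs := (oct_gauss_summable t 3 ht (by norm_num)).mul_left (M * 3)
  exact ⟨Summable.of_norm_bounded hs (fun j => key j _ (by omega)), Summable.of_norm_bounded hs (fun j => key j _ (by omega))⟩

theorem octU_hasSum (t : ℝ) (ht : 0 < t) (n : ℕ) : ∀ k, HasSum (fun j => octU t n j * octT j k) (octB t n k) := by
  induction n with
  | zero =>
    intro k
    have h := hasSum_single (f := fun j => octU t 0 j * octT j k) 0 (fun j hj => by
      have : octU t 0 j = 0 := by
        unfold octU octR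
        rcases lt_or_gt_of_ne hj with h | h
        · rw [if_neg (by push_cast; omega)]; simp
        · rw [if_neg (c := 0 ≤ ((0 : ℕ) : ℤ) - j) (by push_cast; omega)]; simp
      simp [this])
    refine oct_hasSum_congr h (fun _ => rfl) ?_
    rw [octT_zero, octB]
    simp [octU, octR, octRn]
  | succ n ih =>
    intro k
    obtain ⟨s1, s2⟩ := octU_shift_summable t ht n k
    have h1 : HasSum (fun j => octU t n (j - 1) * octT j k) (∑' j, octU t n j * octT (j + 1) k) := by
      have := (Equiv.addRight (-1 : ℤ)).hasSum_iff.2 s1.hasSum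
      refine oct_hasSum_congr this (fun j => ?_) rfl
      simp [sub_eq_add_neg]
    have h2 : HasSum (fun j => octU t n (j + 1) * octT j k) (∑' j, octU t n j * octT (j - 1) k) := by
      have := (Equiv.addRight (1 : ℤ)).hasSum_iff.2 s2.hasSum
      refine oct_hasSum_congr this (fun j => ?_) rfl
      simp
    have h3 := ((ih k).mul_left (1 + exp (-t * (4 * n + 2)))).add ((h1.add h2).mul_left (exp (-t * (2 * n + 1))))
    refine oct_hasSum_congr h3 (fun j => by rw [octU_rec t ht]; ring) ?_
    rw [← s1.tsum_add s2]
    rcases k with _ | k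
    · rw [octB]
      simp_rw [← mul_add, octT_rec_zero]
      simp
    · rw [octB]
      simp_rw [← mul_add, octT_rec_succ]
      congr 2
      rw [← ((ih k).mul_left 2).tsum_eq]
      exact tsum_congr fun j => by ring

theorem octC_nonneg (t : ℝ) (ht : 0 < t) (k : ℕ) : 0 ≤ octC t k := by
  have h0 : 0 < exp (-2 * t) := exp_pos _
  have h1 : exp (-2 * t) < 1 := by rw [exp_lt_one_iff]; linarith
  obtain ⟨L, hL1, hL⟩ := octRn_lim _ h0 h1
  obtain ⟨M, hM⟩ := octU_term_bound t ht
  have hlim : ∀ j : ℤ, Tendsto (fun n => octU t n j * octT j k) atTop (𝓝 (L * (exp (-t * (j : ℝ) ^ 2) * octT j k))) := by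
    intro j
    have c : Tendsto (fun n : ℕ => (n : ℤ)) atTop atTop := tendsto_natCast_atTop_atTop
    have a1 := octR_lim _ L hL (fun n => n + j) (tendsto_atTop_add_const_right _ _ c)
    have a2 := octR_lim _ L hL (fun n => n - j) (tendsto_atTop_add_const_right _ _ c)
    have a3 := hL.comp (tendsto_id.const_mul_atTop' (show 0 < 2 by norm_num))
    have := (((a1.mul a2).div a3 (by linarith)).const_mul (exp (-t * (j : ℝ) ^ 2))).mul_const (octT j k)
    have e : L * (exp (-t * (j : ℝ) ^ 2) * octT j k) = exp (-t * (j : ℝ) ^ 2) * (L * L / L) * octT j k := by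
      have : L ≠ 0 := by linarith
      field_simp
    rw [e]; exact this
  have hd := tendsto_tsum_of_dominated_convergence (𝓕 := atTop) ((oct_gauss_summable t 3 ht (by norm_num)).mul_left M) hlim
    (Eventually.of_forall fun n j => hM n j k)
  rw [tsum_mul_left] at hd
  have h2 : 0 ≤ L * octC t k := by
    refine ge_of_tendsto' hd fun n => ?_
    rw [(octU_hasSum t ht n k).tsum_eq]
    exact octB_nonneg t n k
  by_contra hc
  nlinarith

theorem octT_explicit (k l : ℕ) : octT ((k + 1 + 2 * l : ℕ) : ℤ) (k + 1) * (2 * (k + 1).factorial * l.factorial) =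
    (-1) ^ l * 2 ^ (k + 1) * (k + 1 + 2 * l) * (k + l).factorial := by
  have h00 : ∀ l : ℕ, octT ((2 * l : ℕ) : ℤ) 0 = (-1) ^ l := by
    intro l
    induction l with
    | zero => simp [octT_zero]
    | succ l ih =>
      have := octT_rec_zero (2 * l + 1)
      rw [add_sub_cancel_right] at this
      push_cast at ih ⊢
      rw [show 2 * ((l : ℤ) + 1) = 2 * l + 1 + 1 by ring, pow_succ]
      linarith
  induction k generalizing l with
  | zero =>
    have : octT ((0 + 1 + 2 * l : ℕ) : ℤ) 1 = (-1) ^ l * (2 * l + 1) := by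
      induction l with
      | zero => simp [octT_one]
      | succ l ih =>
        have h := octT_rec_succ (2 * l + 2) 0
        have h0 := h00 (l + 1)
        push_cast at ih h0 ⊢
        rw [show 2 * (l : ℤ) + 2 - 1 = 0 + 1 + 2 * l by ring, show 2 * (l : ℤ) + 2 + 1 = 0 + 1 + 2 * (l + 1) by ring,
          show 2 * (l : ℤ) + 2 = 2 * (l + 1) by ring, zero_add 1, ih, h0] at h
        rw [zero_add] at h
        rw [eq_sub_of_add_eq h, pow_succ]
        ring
    rw [zero_add] at this ⊢
    rw [this]
    simp only [zero_add, Nat.factorial_one]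
    push_cast
    ring
  | succ k ih =>
    induction l with
    | zero =>
      have h := octT_rec_succ (k + 1) (k + 1)
      have h1 := ih 0
      rw [octT_deg (((k : ℤ) + 1) - 1) _ (by omega), add_zero] at h
      rw [show ((k + 1 + 1 + 2 * 0 : ℕ) : ℤ) = (k : ℤ) + 1 + 1 by push_cast; ring, h]
      simp only [mul_zero, add_zero, Nat.factorial_zero] at h1 ⊢
      push_cast [Nat.factorial_succ] at h1 ⊢
      rw [pow_succ]
      linear_combination 2 * ((k : ℝ) + 1 + 1) * h1
    | succ l ihl =>
      have h := octT_rec_succ (k + 1 + 2 * (l + 1)) (k + 1)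
      have h1 := ih (l + 1)
      rw [show (k : ℤ) + 1 + 2 * (l + 1) - 1 = ((k + 1 + 1 + 2 * l : ℕ) : ℤ) by push_cast; ring,
        show (k : ℤ) + 1 + 2 * (l + 1) + 1 = ((k + 1 + 1 + 2 * (l + 1) : ℕ) : ℤ) by push_cast; ring,
        show (k : ℤ) + 1 + 2 * (l + 1) = ((k + 1 + 2 * (l + 1) : ℕ) : ℤ) by push_cast; ring] at h
      rw [eq_sub_of_add_eq h]
      rw [show k + 1 + (l + 1) = k + l + 1 + 1 by ring] 
      rw [show k + (l + 1) = k + l + 1 by ring] at h1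
      rw [show k + 1 + l = k + l + 1 by ring] at ihl
      generalize octT ((k + 1 + 2 * (l + 1) : ℕ) : ℤ) (k + 1) = x at *
      generalize octT ((k + 1 + 1 + 2 * l : ℕ) : ℤ) (k + 1 + 1) = y at *
      have hk : (((k + l).factorial : ℕ) : ℝ) ≠ 0 := by positivity
      push_cast [Nat.factorial_succ] at h1 ihl ⊢
      simp only [pow_succ] at *
      linear_combination 2 * ((k : ℝ) + 1 + 1) * h1 - ((l : ℝ) + 1) * ihl

theorem octT_parity (n : ℕ) : ∀ k, (n + k) % 2 = 1 → octT n k = 0 := by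
  induction n using Nat.twoStepInduction with
  | zero => intro k hk; simp only [Nat.cast_zero, octT_zero]; rw [if_neg (by omega)]
  | one => intro k hk; simp only [Nat.cast_one, octT_one]; rw [if_neg (by omega)]
  | more n ih0 ih1 =>
    intro k hk
    rcases k with _ | k
    · have := octT_rec_zero (n + 1)
      rw [add_sub_cancel_right, ih0 0 (by omega), show (n : ℤ) + 1 + 1 = ((n + 2 : ℕ) : ℤ) by push_cast; ring] at this
      linarith
    · have := octT_rec_succ (n + 1) k
      have h1 := ih1 k (by omega)
      push_cast at h1
      rw [add_sub_cancel_right, ih0 _ (by omega), show (n : ℤ) + 1 + 1 = ((n + 2 : ℕ) : ℤ) by push_cast; ring, h1] at this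
      linarith

theorem octC_hasSum (t : ℝ) (ht : 0 < t) (k : ℕ) :
    HasSum (fun l : ℕ => 2 * octT ((k + 1 + 2 * l : ℕ) : ℤ) (k + 1) * exp (-t * ((k + 1 + 2 * l : ℕ) : ℝ) ^ 2)) (octC t (k + 1)) := by
  have h := (octC_summable t (k + 1) ht).hasSum.nat_add_neg
  have inj : Function.Injective (fun l : ℕ => k + 1 + 2 * l) := fun a b hab => by simpa using hab
  have h2 := (inj.hasSum_iff (fun n hn => ?_)).2 h
  · refine oct_hasSum_congr h2 (fun l => ?_) ?_
    · simp only [Function.comp]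
      rw [octT_neg]; push_cast; ring_nf
    · rw [octT_zero]; simp [octC]
  · rw [octT_neg]
    have : octT n (k + 1) = 0 := by
      by_cases hp : (n + (k + 1)) % 2 = 1
      · exact octT_parity n _ hp
      · apply octT_deg
        rw [Int.natAbs_natCast]
        by_contra hc
        apply hn
        exact ⟨(n - (k + 1)) / 2, by simp only; omega⟩
    rw [this]; simp

theorem oct_antidiag (f : ℕ → ℕ → ℝ) (g : ℕ → ℝ) (hs : Summable fun p : ℕ × ℕ => f p.1 p.2)
    (hg : ∀ i, HasSum (fun l => f l i) (g i)) :
    HasSum g (∑' p : ℕ × ℕ, f p.1 p.2) ∧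
    HasSum (fun k => ∑ l ∈ Finset.range (k + 1), f l (k - l)) (∑' p : ℕ × ℕ, f p.1 p.2) := by
  constructor
  · have h2 : HasSum (fun p : ℕ × ℕ => f p.2 p.1) (∑' p : ℕ × ℕ, f p.1 p.2) :=
      (Equiv.prodComm ℕ ℕ).hasSum_iff.2 hs.hasSum
    exact h2.prod_fiberwise hg
  · have h := (Finset.HasAntidiagonal.sigmaAntidiagonalEquivProd (A := ℕ)).hasSum_iff.2 hs.hasSum
    refine h.sigma fun k => ?_
    have h3 := (Finset.HasAntidiagonal.antidiagonal k).hasSum (fun p : ℕ × ℕ => f p.1 p.2)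
    rw [Finset.Nat.sum_antidiagonal_eq_sum_range_succ] at h3
    exact h3

noncomputable def octPW (m i : ℕ) : ℝ :=
  (m + 3) * ((m + 5).choose 5) * (m + 2 * i + 7).factorial / (i.factorial * (m + i + 3).factorial * 2 ^ (m + 2 * i + 7))

noncomputable def octPF (t ρ : ℝ) (m l i : ℕ) : ℝ :=
  16 / π ^ 8 * exp (40 * t) * octPW m i * exp ((m + 3) ^ 2 * t) * ρ ^ (m + 2 * i) *
    (2 * octT ((m + 2 * i + 6 + 1 + 2 * l : ℕ) : ℤ) (m + 2 * i + 6 + 1) * exp (-t * ((m + 2 * i + 6 + 1 + 2 * l : ℕ) : ℝ) ^ 2))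

noncomputable def octPG (t ρ : ℝ) (m i : ℕ) : ℝ :=
  16 / π ^ 8 * exp (40 * t) * octPW m i * exp ((m + 3) ^ 2 * t) * ρ ^ (m + 2 * i) * octC t (m + 2 * i + 6 + 1)

theorem oct_coef (m i l : ℕ) :
    alphOct (i + l) m * ((-1) ^ l * ((m + 3 + (i + l)).choose l) * ((2 * (i + l) + (m + 3) + 3 - l).choose (i + l - l))) =
    16 / π ^ 8 * octPW m i * (2 * octT ((m + 2 * i + 6 + 1 + 2 * l : ℕ) : ℤ) (m + 2 * i + 6 + 1)) := by
  have h := octT_explicit (m + 2 * i + 6) l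
  have hT : octT ((m + 2 * i + 6 + 1 + 2 * l : ℕ) : ℤ) (m + 2 * i + 6 + 1) =
    (-1) ^ l * 2 ^ (m + 2 * i + 6 + 1) * (m + 2 * i + 6 + 1 + 2 * l) * (m + 2 * i + 6 + l).factorial / (2 * (m + 2 * i + 6 + 1).factorial * l.factorial) := by
    rw [eq_div_iff (by positivity), h]; push_cast; ring
  rw [hT]
  unfold alphOct octPW
  have c1 : (((i + l + m + 6).choose (i + l + m + 3) : ℕ) : ℝ) = (i + l + m + 6).factorial / ((i + l + m + 3).factorial * 6) := by
    rw [Nat.cast_choose ℝ (by omega), show i + l + m + 6 - (i + l + m + 3) = 3 by omega]; simp [Nat.factorial]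
  have c2 : (((m + 3 + (i + l)).choose l : ℕ) : ℝ) = (i + l + m + 3).factorial / (l.factorial * (m + i + 3).factorial) := by
    rw [Nat.cast_choose ℝ (by omega), show m + 3 + (i + l) - l = m + i + 3 by omega, show m + 3 + (i + l) = i + l + m + 3 by ring]
  have c3 : (((2 * (i + l) + (m + 3) + 3 - l).choose (i + l - l) : ℕ) : ℝ) = (m + 2 * i + 6 + l).factorial / (i.factorial * (i + l + m + 6).factorial) := by
    rw [Nat.add_sub_cancel, show 2 * (i + l) + (m + 3) + 3 - l = m + 2 * i + 6 + l by omega, Nat.cast_choose ℝ (by omega), show m + 2 * i + 6 + l - i = i + l + m + 6 by omega]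
  have c4 : (m + 5).choose m = (m + 5).choose 5 := by
    rw [← Nat.choose_symm_of_eq_add]; omega
  rw [c1, c2, c3, c4, show m + 2 * i + 6 + 1 = m + 2 * i + 7 by ring]
  push_cast
  field_simp
  ring

theorem oct_term (t r : ℝ) (m k : ℕ) :
    alphOct k m * hOct m 0 * Real.exp (-(4 * ((k * (k + m + 7) + 2 * m : ℕ) : ℝ)) * t) *
      (Real.cos r) ^ m * (jacP k (m + 3)).eval (Real.cos (2 * r)) =
    ∑ l ∈ Finset.range (k + 1), octPF t (cos r) m l (k - l) := by
  rw [oct_jac_eval, oct_h_zero, Finset.mul_sum]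
  refine Finset.sum_congr rfl fun l hl => ?_
  obtain ⟨i, rfl⟩ : ∃ i, k = i + l := ⟨k - l, by have := Finset.mem_range.1 hl; omega⟩
  have h := oct_coef m i l
  rw [Nat.add_sub_cancel] at h ⊢
  have e : Real.exp (-(4 * (((i + l) * ((i + l) + m + 7) + 2 * m : ℕ) : ℝ)) * t) =
      exp (40 * t) * exp ((m + 3) ^ 2 * t) * exp (-t * ((m + 2 * i + 6 + 1 + 2 * l : ℕ) : ℝ) ^ 2) := by
    rw [← exp_add, ← exp_add]; congr 1; push_cast; ring
  rw [e]
  unfold octPF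
  rw [pow_add (cos r) m]
  linear_combination exp (40 * t) * exp ((m + 3) ^ 2 * t) * exp (-t * ((m + 2 * i + 6 + 1 + 2 * l : ℕ) : ℝ) ^ 2) * (cos r) ^ m * (cos r) ^ (2 * i) * h

theorem octPW_eq (m i : ℕ) : octPW m i = (m + 3) * ((m + 5).choose 5) * ((m + i + 4) * (m + i + 5) * (m + i + 6) * (m + i + 7)) *
    (((m + 2 * i + 7).choose i : ℕ) / 2 ^ (m + 2 * i + 7)) := by
  unfold octPW
  rw [Nat.cast_choose ℝ (show i ≤ m + 2 * i + 7 by omega), show m + 2 * i + 7 - i = m + i + 3 + 1 + 1 + 1 + 1 by omega]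
  have : ((m + i + 3).factorial : ℝ) ≠ 0 := by positivity
  rw [Nat.factorial_succ (m + i + 3 + 1 + 1 + 1), Nat.factorial_succ (m + i + 3 + 1 + 1), Nat.factorial_succ (m + i + 3 + 1), Nat.factorial_succ (m + i + 3)]
  push_cast
  field_simp
  ring

theorem octPW_pos (m i : ℕ) : 0 < octPW m i := by
  unfold octPW
  have : 0 < (m + 5).choose 5 := Nat.choose_pos (by omega)
  positivity

theorem octPW_le (m i : ℕ) : octPW m i ≤ ((m + 2 * i + 7 : ℕ) : ℝ) ^ 10 * (((m + 2 * i + 7).choose i : ℕ) / 2 ^ (m + 2 * i + 7)) := by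
  rw [octPW_eq]
  have hm : (0 : ℝ) ≤ m := by positivity
  have hi : (0 : ℝ) ≤ i := by positivity
  have h1 : (((m + 5).choose 5 : ℕ) : ℝ) ≤ ((m + 2 * i + 7 : ℕ) : ℝ) ^ 5 := by
    calc (((m + 5).choose 5 : ℕ) : ℝ) ≤ ((m + 5) ^ 5 : ℕ) := by exact_mod_cast Nat.choose_le_pow (m + 5) 5
      _ ≤ _ := by push_cast; gcongr <;> linarith
  gcongr
  calc _ ≤ ((m + 2 * i + 7 : ℕ) : ℝ) * ((m + 2 * i + 7 : ℕ) : ℝ) ^ 5 * (((m + 2 * i + 7 : ℕ) : ℝ) * ((m + 2 * i + 7 : ℕ) : ℝ) * ((m + 2 * i + 7 : ℕ) : ℝ) * ((m + 2 * i + 7 : ℕ) : ℝ)) := by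
        gcongr <;> (push_cast; linarith)
    _ = _ := by ring

theorem oct_pow_le_exp (n : ℕ) (x : ℝ) (hx : 0 ≤ x) : x ^ n ≤ n.factorial * exp x := by
  have := oct_pow_exp_le n x hx
  rw [exp_neg, ← div_eq_mul_inv, div_le_iff₀ (exp_pos _)] at this
  exact this

theorem octPW_le_pow (m i : ℕ) : octPW m i ≤ ((m + 2 * i + 7 : ℕ) : ℝ) ^ 10 := by
  refine (octPW_le m i).trans (mul_le_of_le_one_right (by positivity) ?_)
  rw [div_le_one (by positivity)]
  exact_mod_cast Nat.choose_le_two_pow _ _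

theorem oct_gauss_geo (t Z : ℝ) (ht : 0 < t) (hZ : 0 < Z) : ∃ M, 0 ≤ M ∧ ∀ n : ℕ, exp (-t * n ^ 2) * Z ^ n ≤ M * (1 / 2) ^ n := by
  have hs := oct_gauss_summable_nat t (2 * Z) ht (by positivity)
  refine ⟨∑' n : ℕ, exp (-t * n ^ 2) * (2 * Z) ^ n, tsum_nonneg fun n => by positivity, fun n => ?_⟩
  · have := hs.le_tsum n (fun j _ => by positivity)
    calc exp (-t * n ^ 2) * Z ^ n = (exp (-t * n ^ 2) * (2 * Z) ^ n) * (1 / 2) ^ n := by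
          rw [mul_pow, mul_comm (2 ^ n), ← mul_assoc, mul_assoc (_ * _), ← mul_pow]; norm_num
      _ ≤ _ := by gcongr

theorem octPF_summable (t ρ : ℝ) (ht : 0 < t) (h0 : 0 ≤ ρ) (h1 : ρ ≤ 1) (m : ℕ) :
    Summable (fun p : ℕ × ℕ => octPF t ρ m p.1 p.2) := by
  obtain ⟨M, hM0, hM⟩ := oct_gauss_geo t (3 * exp 1) ht (by positivity)
  set c := 16 / π ^ 8 * exp (40 * t) * exp ((m + 3) ^ 2 * t) * (Nat.factorial 10) * 2 * M with hc
  have hc0 : 0 ≤ c := by positivity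
  have hg : Summable (fun n : ℕ => ((1 : ℝ) / 2) ^ n) := summable_geometric_of_lt_one (by norm_num) (by norm_num)
  have hgg := (hg.mul_of_nonneg hg (fun n => by positivity) (fun n => by positivity)).mul_left c
  refine Summable.of_norm_bounded hgg fun p => ?_
  obtain ⟨l, i⟩ := p
  simp only
  set n := m + 2 * i + 6 + 1 + 2 * l with hn
  have b1 : octPW m i ≤ (Nat.factorial 10) * exp 1 ^ n := by
    refine (octPW_le_pow m i).trans ((oct_pow_le_exp 10 _ (by positivity)).trans ?_)
    rw [← exp_nat_mul, mul_one]
    gcongr; omega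
  have b2 := octT_abs_le (n : ℤ) (m + 2 * i + 6 + 1)
  rw [Int.natAbs_natCast] at b2
  have b3 : ρ ^ (m + 2 * i) ≤ 1 := pow_le_one₀ h0 h1
  have b0 := (octPW_pos m i).le
  unfold octPF
  rw [← hn, norm_mul, norm_mul (2 * octT _ _), norm_mul 2, Real.norm_of_nonneg (show 0 ≤ 16 / π ^ 8 * exp (40 * t) * octPW m i * exp ((m + 3) ^ 2 * t) * ρ ^ (m + 2 * i) by positivity), Real.norm_of_nonneg (exp_pos _).le, Real.norm_of_nonneg zero_le_two]
  calc _ ≤ 16 / π ^ 8 * exp (40 * t) * ((Nat.factorial 10) * exp 1 ^ n) * exp ((m + 3) ^ 2 * t) * 1 * (2 * 3 ^ n * exp (-t * (n : ℝ) ^ 2)) := by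
        gcongr; exact b2
    _ = (16 / π ^ 8 * exp (40 * t) * exp ((m + 3) ^ 2 * t) * (Nat.factorial 10) * 2) * (exp (-t * (n : ℝ) ^ 2) * (3 * exp 1) ^ n) := by rw [mul_pow]; ring
    _ ≤ (16 / π ^ 8 * exp (40 * t) * exp ((m + 3) ^ 2 * t) * (Nat.factorial 10) * 2) * (M * (1 / 2) ^ n) := by
      refine mul_le_mul_of_nonneg_left (hM n) (by positivity)
    _ = c * (1 / 2) ^ n := by rw [hc]; ring
    _ ≤ c * (1 / 2) ^ (l + i) := by
      refine mul_le_mul_of_nonneg_left ?_ hc0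
      exact pow_le_pow_of_le_one (by norm_num) (by norm_num) (by omega)
    _ = _ := by rw [pow_add]

theorem pOct_eq (t r : ℝ) (ht : 0 < t) (hr : 0 ≤ cos r) :
    (∀ m, Summable (fun i => octPG t (cos r) m i)) ∧ pOct t r 0 = ∑' m : ℕ, ∑' i : ℕ, octPG t (cos r) m i := by
  have key := fun m => oct_antidiag (octPF t (cos r) m) (octPG t (cos r) m) (octPF_summable t _ ht hr (cos_le_one r) m)
    (fun i => (octC_hasSum t ht (m + 2 * i + 6)).mul_left _)
  refine ⟨fun m => (key m).1.summable, ?_⟩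
  unfold pOct
  refine tsum_congr fun m => ?_
  simp_rw [oct_term]
  rw [(key m).1.tsum_eq, (key m).2.tsum_eq]

theorem octPG_nonneg (t ρ : ℝ) (ht : 0 < t) (h0 : 0 ≤ ρ) (m i : ℕ) : 0 ≤ octPG t ρ m i := by
  have := (octPW_pos m i).le
  have := octC_nonneg t ht (m + 2 * i + 6 + 1)
  unfold octPG; positivity

theorem octTh_mono (t : ℝ) (ht : 0 < t) (X Y : ℝ) (hX : 0 ≤ X) (hXY : X ≤ Y) : octTh t X ≤ octTh t Y := by
  refine hasSum_le (fun k => ?_) (octTh_hasSum t X ht hX) (octTh_hasSum t Y ht (hX.trans hXY))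
  have := octC_nonneg t ht k
  gcongr

noncomputable def octCst (t : ℝ) : ℝ := 1 / (t / π) ^ (1 / 2 : ℝ)

theorem octCst_pos (t : ℝ) (ht : 0 < t) : 0 < octCst t := by
  unfold octCst; positivity

theorem oct_poisson_summable (t : ℝ) (ht : 0 < t) (w : ℂ) :
    Summable (fun j : ℤ => Complex.exp (-t * (j : ℂ) ^ 2 + w * j)) := by
  refine Summable.of_norm_bounded (oct_gauss_summable t (exp ‖w‖) ht (exp_pos _)) fun j => ?_
  rw [Complex.norm_exp, ← exp_nat_mul, ← exp_add]
  apply exp_le_exp.2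
  have e1 : (-(t : ℂ) * (j : ℂ) ^ 2 + w * j).re = -t * (j : ℝ) ^ 2 + (w * j).re := by
    rw [Complex.add_re]; congr 1
    rw [show -(t : ℂ) * (j : ℂ) ^ 2 = ((-t * (j : ℝ) ^ 2 : ℝ) : ℂ) by push_cast; ring, Complex.ofReal_re]
  rw [e1]
  have e2 := (Complex.re_le_norm (w * j))
  rw [norm_mul, Complex.norm_intCast] at e2
  have e3 : (j.natAbs : ℝ) = |(j : ℝ)| := by rw [← Int.cast_abs]; simp
  rw [e3]; linarith [mul_comm ‖w‖ |(j : ℝ)|]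

theorem oct_poisson (t : ℝ) (ht : 0 < t) (w : ℂ) :
    ∑' j : ℤ, Complex.exp (-t * (j : ℂ) ^ 2 + w * j) =
      (octCst t : ℂ) * ∑' n : ℤ, Complex.exp (w ^ 2 / (4 * t) - π ^ 2 * n ^ 2 / t - Complex.I * π * n * w / t) := by
  have hpi : (π : ℂ) ≠ 0 := by exact_mod_cast pi_ne_zero
  have htc : (t : ℂ) ≠ 0 := by exact_mod_cast ht.ne'
  have h := Complex.tsum_exp_neg_quadratic (a := ((t / π : ℝ) : ℂ)) (by rw [Complex.ofReal_re]; positivity) (w / (2 * π))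
  have e1 : ∀ j : ℤ, -π * ((t / π : ℝ) : ℂ) * (j : ℂ) ^ 2 + 2 * π * (w / (2 * π)) * j = -t * (j : ℂ) ^ 2 + w * j := by
    intro j; push_cast; field_simp
  have e2 : ∀ n : ℤ, -π / ((t / π : ℝ) : ℂ) * ((n : ℂ) + Complex.I * (w / (2 * π))) ^ 2 =
      w ^ 2 / (4 * t) - π ^ 2 * n ^ 2 / t - Complex.I * π * n * w / t := by
    intro n; push_cast; field_simp
    ring_nf
    rw [Complex.I_sq]; ring
  simp_rw [e1, e2] at h
  rw [h]
  congr 1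
  unfold octCst
  rw [Complex.ofReal_div 1, Complex.ofReal_cpow (by positivity)]
  norm_num

theorem octTh_cos (t δ : ℝ) (ht : 0 < t) :
    Summable (fun n : ℤ => exp (-(δ - 2 * π * n) ^ 2 / (4 * t))) ∧
    octTh t (cos δ) = octCst t * ∑' n : ℤ, exp (-(δ - 2 * π * n) ^ 2 / (4 * t)) := by
  have h := oct_poisson t ht (Complex.I * δ)
  have hs := oct_poisson_summable t ht (Complex.I * δ)
  have htc : (t : ℂ) ≠ 0 := by exact_mod_cast ht.ne'
  have e2 : ∀ n : ℤ, (Complex.I * δ) ^ 2 / (4 * t) - π ^ 2 * n ^ 2 / t - Complex.I * π * n * (Complex.I * δ) / t =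
      ((-(δ - 2 * π * n) ^ 2 / (4 * t) : ℝ) : ℂ) := by
    intro n
    push_cast
    rw [mul_pow, Complex.I_sq, show Complex.I * π * n * (Complex.I * δ) = Complex.I ^ 2 * (π * n * δ) by ring, Complex.I_sq]
    field_simp; ring
  constructor
  · have := oct_gauss_summable (π ^ 2 / t) (exp (π * |δ| / t)) (by positivity) (exp_pos _)
    refine Summable.of_nonneg_of_le (fun n => (exp_pos _).le) (fun n => ?_) this
    rw [← exp_nat_mul, ← exp_add]
    apply exp_le_exp.2
    have e3 : (n.natAbs : ℝ) = |(n : ℝ)| := by rw [← Int.cast_abs]; simp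
    rw [e3]
    have h4 : δ * n ≤ |(n : ℝ)| * |δ| := by rw [← abs_mul, mul_comm]; exact le_abs_self _
    have : -(π ^ 2 / t) * (n : ℝ) ^ 2 + |(n : ℝ)| * (π * |δ| / t) - (-(δ - 2 * π * n) ^ 2 / (4 * t)) = (π * (|(n : ℝ)| * |δ| - δ * n) + δ ^ 2 / 4) / t := by
      field_simp; ring
    have h5 : 0 ≤ (π * (|(n : ℝ)| * |δ| - δ * n) + δ ^ 2 / 4) / t := by
      have : 0 ≤ |(n : ℝ)| * |δ| - δ * n := by linarith
      positivity
    linarith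
  · simp_rw [e2, ← Complex.ofReal_exp] at h
    rw [← Complex.ofReal_tsum, ← Complex.ofReal_mul] at h
    have h2 := congrArg Complex.re h
    rw [Complex.ofReal_re, Complex.re_tsum hs] at h2
    rw [← h2]
    unfold octTh
    refine tsum_congr fun j => ?_
    rw [Polynomial.Chebyshev.T_real_cos, Complex.exp_add, show -(t : ℂ) * (j : ℂ) ^ 2 = ((-t * (j : ℝ) ^ 2 : ℝ) : ℂ) by push_cast; ring,
      ← Complex.ofReal_exp, Complex.re_ofReal_mul, show Complex.I * δ * j = ((j * δ : ℝ) : ℂ) * Complex.I by push_cast; ring,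
      Complex.exp_ofReal_mul_I_re]

noncomputable def octK : ℝ := ∑' n : ℤ, exp (-1 * (n : ℝ) ^ 2) * 1 ^ n.natAbs

theorem octK_summable : Summable (fun n : ℤ => exp (-1 * (n : ℝ) ^ 2) * 1 ^ n.natAbs) :=
  oct_gauss_summable 1 1 one_pos one_pos

theorem octK_nonneg : 0 ≤ octK := tsum_nonneg fun n => by positivity

theorem octTh_cos_lower (t δ : ℝ) (ht : 0 < t) : octCst t * exp (-δ ^ 2 / (4 * t)) ≤ octTh t (cos δ) := by
  obtain ⟨h1, h2⟩ := octTh_cos t δ ht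
  rw [h2]
  have := h1.le_tsum 0 (fun n _ => (exp_pos _).le)
  refine mul_le_mul_of_nonneg_left ?_ (octCst_pos t ht).le
  simpa using this

theorem octTh_cos_upper (t δ : ℝ) (ht : 0 < t) (ht1 : t ≤ 1) (h0 : 0 ≤ δ) (h1 : δ ≤ π / 2) :
    octTh t (cos δ) ≤ octK * octCst t * exp (-δ ^ 2 / (4 * t)) := by
  obtain ⟨hs, h2⟩ := octTh_cos t δ ht
  rw [h2, mul_comm octK, mul_assoc]
  refine mul_le_mul_of_nonneg_left ?_ (octCst_pos t ht).le
  rw [octK, ← tsum_mul_right]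
  refine hs.tsum_le_tsum (fun n => ?_) (octK_summable.mul_right _)
  rw [one_pow, mul_one, ← exp_add]
  apply exp_le_exp.2
  have hpi := pi_gt_three
  have hn : (n : ℝ) ≤ (n : ℝ) ^ 2 := by exact_mod_cast Int.le_self_sq n
  have hn' : -(n : ℝ) ≤ (n : ℝ) ^ 2 := by have := Int.le_self_sq (-n); rw [neg_sq] at this; exact_mod_cast this
  have key : δ ^ 2 + 4 * (n : ℝ) ^ 2 ≤ (δ - 2 * π * n) ^ 2 := by
    have a1 : δ * n ≤ π / 2 * (n : ℝ) ^ 2 := by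
      rcases le_total 0 (n : ℝ) with h | h
      · exact mul_le_mul h1 hn h (by positivity)
      · exact (mul_nonpos_of_nonneg_of_nonpos h0 h).trans (by positivity)
    have a2 : 4 * (n : ℝ) ^ 2 ≤ 2 * π ^ 2 * (n : ℝ) ^ 2 := by
      gcongr; nlinarith
    nlinarith [mul_le_mul_of_nonneg_left a1 pi_pos.le]
  have : -1 * (n : ℝ) ^ 2 + -δ ^ 2 / (4 * t) - (-(δ - 2 * π * n) ^ 2 / (4 * t)) = ((δ - 2 * π * n) ^ 2 - δ ^ 2 - 4 * t * (n : ℝ) ^ 2) / (4 * t) := by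
    field_simp; ring
  have h5 : 0 ≤ ((δ - 2 * π * n) ^ 2 - δ ^ 2 - 4 * t * (n : ℝ) ^ 2) / (4 * t) := by
    apply div_nonneg _ (by positivity)
    nlinarith [sq_nonneg (n : ℝ)]
  linarith

theorem oct_cosh_aux (t u : ℝ) (ht : 0 < t) (ht1 : t ≤ 1) :
    Summable (fun j : ℤ => exp (-t * (j : ℝ) ^ 2 + u * j)) ∧
    ∑' j : ℤ, exp (-t * (j : ℝ) ^ 2 + u * j) ≤ octK * octCst t * exp (u ^ 2 / (4 * t)) := by
  have h := oct_poisson t ht u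
  have hs := oct_poisson_summable t ht u
  have e : ∀ j : ℤ, Complex.exp (-t * (j : ℂ) ^ 2 + u * j) = ((exp (-t * (j : ℝ) ^ 2 + u * j) : ℝ) : ℂ) := by
    intro j; push_cast; rfl
  simp_rw [e] at h hs
  have hs' := Complex.summable_ofReal.1 hs
  refine ⟨hs', ?_⟩
  rw [← Complex.ofReal_tsum] at h
  have h2 := congrArg norm h
  rw [Complex.norm_real, norm_mul, Complex.norm_real, Real.norm_of_nonneg (octCst_pos t ht).le] at h2
  refine (le_abs_self _).trans ?_
  rw [← Real.norm_eq_abs, h2, mul_comm octK, mul_assoc]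
  refine mul_le_mul_of_nonneg_left ?_ (octCst_pos t ht).le
  rw [octK, ← tsum_mul_right]
  refine tsum_of_norm_bounded (octK_summable.mul_right _).hasSum fun n => ?_
  rw [Complex.norm_exp, one_pow, mul_one, ← exp_add]
  apply exp_le_exp.2
  have e1 : (u : ℂ) ^ 2 / (4 * t) - π ^ 2 * n ^ 2 / t - Complex.I * π * n * u / t =
      ((u ^ 2 / (4 * t) - π ^ 2 * n ^ 2 / t : ℝ) : ℂ) - ((π * n * u / t : ℝ) : ℂ) * Complex.I := by
    push_cast; ring
  rw [e1, Complex.sub_re, Complex.ofReal_re, Complex.re_ofReal_mul, Complex.I_re, mul_zero, sub_zero]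
  have : (n : ℝ) ^ 2 ≤ π ^ 2 * n ^ 2 / t := by
    rw [le_div_iff₀ ht]
    have hpi := pi_gt_three
    have : t ≤ π ^ 2 := by nlinarith
    nlinarith [sq_nonneg (n : ℝ)]
  linarith

theorem octTh_cosh_upper (t u : ℝ) (ht : 0 < t) (ht1 : t ≤ 1) :
    octTh t (cosh u) ≤ octK * octCst t * exp (u ^ 2 / (4 * t)) := by
  obtain ⟨s1, b1⟩ := oct_cosh_aux t u ht ht1
  obtain ⟨s2, b2⟩ := oct_cosh_aux t (-u) ht ht1
  have : octTh t (cosh u) = (∑' j : ℤ, exp (-t * (j : ℝ) ^ 2 + u * j) + ∑' j : ℤ, exp (-t * (j : ℝ) ^ 2 + -u * j)) / 2 := by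
    rw [← s1.tsum_add s2, ← tsum_div_const]
    unfold octTh
    refine tsum_congr fun j => ?_
    rw [Polynomial.Chebyshev.T_real_cosh, Real.cosh_eq, exp_add, exp_add, show (j : ℝ) * u = u * j by ring, show -(u * (j : ℝ)) = -u * j by ring]
    ring
  rw [this]
  rw [neg_sq] at b2
  linarith

theorem oct_sinh_le (y : ℝ) (hy : 0 ≤ y) : sinh y ≤ y * cosh y := by
  have hd : ∀ x : ℝ, HasDerivAt (fun x => x * cosh x - sinh x) (x * sinh x) x := by
    intro x
    have := ((hasDerivAt_id x).mul (hasDerivAt_cosh x)).sub (hasDerivAt_sinh x)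
    refine this.congr_deriv ?_
    simp
  have hm : MonotoneOn (fun x => x * cosh x - sinh x) (Set.Ici 0) := by
    refine monotoneOn_of_deriv_nonneg (convex_Ici 0) ?_ ?_ ?_
    · exact fun x _ => (hd x).continuousAt.continuousWithinAt
    · exact fun x _ => (hd x).differentiableAt.differentiableWithinAt
    · intro x hx
      rw [interior_Ici] at hx
      rw [(hd x).deriv]
      exact mul_nonneg (le_of_lt hx) (sinh_nonneg_iff.2 (le_of_lt hx))
  have := hm (Set.mem_Ici.2 le_rfl) (Set.mem_Ici.2 hy) hy
  simp at this
  linarith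

theorem oct_mul_cos_le (x : ℝ) (h0 : 0 ≤ x) (h1 : x < π / 2) : x * cos x ≤ sin x := by
  have h := Real.le_tan h0 h1
  have hc : 0 < cos x := cos_pos_of_mem_Ioo ⟨by linarith [pi_pos], h1⟩
  rw [tan_eq_sin_div_cos, le_div_iff₀ hc] at h
  exact h

theorem oct_sqrt_deriv (d z : ℝ) (hz : 0 < z) : HasDerivAt (fun z => √(d ^ 2 + z ^ 2)) (z / √(d ^ 2 + z ^ 2)) z := by
  have h1 : HasDerivAt (fun z : ℝ => d ^ 2 + z ^ 2) (2 * z) z := by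
    simpa using (hasDerivAt_pow 2 z).const_add (d ^ 2)
  have := h1.sqrt (by positivity)
  refine this.congr_deriv ?_
  rw [mul_div_mul_left _ _ two_ne_zero]

theorem oct_key1 (r y : ℝ) (hy : 0 ≤ y) (hyr : y ≤ r) (hr : r < π / 2) : cos r * cosh y ≤ cos (√(r ^ 2 - y ^ 2)) := by
  set d := √(r ^ 2 - y ^ 2) with hd
  have hd2 : d ^ 2 = r ^ 2 - y ^ 2 := sq_sqrt (by nlinarith)
  have hm : AntitoneOn (fun z => cos (√(d ^ 2 + z ^ 2)) * cosh z) (Set.Icc 0 y) := by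
    have hdd : ∀ z, 0 < z → HasDerivAt (fun z => cos (√(d ^ 2 + z ^ 2)) * cosh z)
        (-sin (√(d ^ 2 + z ^ 2)) * (z / √(d ^ 2 + z ^ 2)) * cosh z + cos (√(d ^ 2 + z ^ 2)) * sinh z) z :=
      fun z hz => ((oct_sqrt_deriv d z hz).cos).mul (hasDerivAt_cosh z)
    refine antitoneOn_of_deriv_nonpos (convex_Icc 0 y) ?_ ?_ ?_
    · fun_prop
    · rw [interior_Icc]; exact fun z hz => (hdd z hz.1).differentiableAt.differentiableWithinAt
    · rw [interior_Icc]; intro z hz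
      rw [(hdd z hz.1).deriv]
      have hR : 0 < √(d ^ 2 + z ^ 2) := sqrt_pos.2 (by have := hz.1; positivity)
      have hRr : √(d ^ 2 + z ^ 2) ≤ r := by
        rw [show r = √(r ^ 2) from (sqrt_sq (by linarith)).symm]
        apply sqrt_le_sqrt; rw [hd2]; nlinarith [hz.1, hz.2]
      set R := √(d ^ 2 + z ^ 2)
      have h1 := oct_mul_cos_le R hR.le (by linarith)
      have h2 := oct_sinh_le z hz.1.le
      have h3 : 0 ≤ cos R := cos_nonneg_of_mem_Icc ⟨by linarith [pi_pos], by linarith⟩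
      have h4 : cos R * sinh z ≤ cos R * (z * cosh z) := mul_le_mul_of_nonneg_left h2 h3
      have h5 : cos R ≤ sin R / R := by rw [le_div_iff₀ hR]; linarith
      have h6 : cos R * (z * cosh z) ≤ sin R / R * (z * cosh z) :=
        mul_le_mul_of_nonneg_right h5 (mul_nonneg hz.1.le (cosh_pos z).le)
      have : -sin R * (z / R) * cosh z = -(sin R / R * (z * cosh z)) := by ring
      linarith
  have := hm (Set.left_mem_Icc.2 hy) (Set.right_mem_Icc.2 hy) hy
  simp only at this
  rw [show d ^ 2 + y ^ 2 = r ^ 2 by linarith, sqrt_sq (by linarith)] at this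
  simpa [sqrt_sq (show 0 ≤ d from sqrt_nonneg _)] using this

theorem oct_key2 (r y : ℝ) (h0 : 0 ≤ r) (hyr : r ≤ y) (hr : r < π / 2) : cos r * cosh y ≤ cosh (√(y ^ 2 - r ^ 2)) := by
  set d := √(y ^ 2 - r ^ 2) with hd
  have hd2 : d ^ 2 = y ^ 2 - r ^ 2 := sq_sqrt (by nlinarith)
  have hm : AntitoneOn (fun z => cos z * cosh (√(d ^ 2 + z ^ 2))) (Set.Icc 0 r) := by
    have hdd : ∀ z, 0 < z → HasDerivAt (fun z => cos z * cosh (√(d ^ 2 + z ^ 2)))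
        (-sin z * cosh (√(d ^ 2 + z ^ 2)) + cos z * (sinh (√(d ^ 2 + z ^ 2)) * (z / √(d ^ 2 + z ^ 2)))) z :=
      fun z hz => (hasDerivAt_cos z).mul ((oct_sqrt_deriv d z hz).cosh)
    refine antitoneOn_of_deriv_nonpos (convex_Icc 0 r) ?_ ?_ ?_
    · fun_prop
    · rw [interior_Icc]; exact fun z hz => (hdd z hz.1).differentiableAt.differentiableWithinAt
    · rw [interior_Icc]; intro z hz
      rw [(hdd z hz.1).deriv]
      have hR : 0 < √(d ^ 2 + z ^ 2) := sqrt_pos.2 (by have := hz.1; positivity)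
      set R := √(d ^ 2 + z ^ 2)
      have h1 := oct_mul_cos_le z hz.1.le (by linarith [hz.2])
      have h2 := oct_sinh_le R hR.le
      have h3 : 0 ≤ cos z := cos_nonneg_of_mem_Icc ⟨by linarith [pi_pos, hz.1], by linarith [hz.2]⟩
      have h5 : sinh R / R ≤ cosh R := by rw [div_le_iff₀ hR]; linarith
      have h6 : (z * cos z) * (sinh R / R) ≤ sin z * cosh R :=
        mul_le_mul h1 h5 (div_nonneg (sinh_nonneg_iff.2 hR.le) hR.le) ((mul_nonneg hz.1.le h3).trans h1)
      have : cos z * (sinh R * (z / R)) = (z * cos z) * (sinh R / R) := by ring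
      linarith
  have := hm (Set.left_mem_Icc.2 h0) (Set.right_mem_Icc.2 h0) h0
  simp only at this
  rw [show d ^ 2 + r ^ 2 = y ^ 2 by linarith, sqrt_sq (by linarith)] at this
  simpa [sqrt_sq (show 0 ≤ d from sqrt_nonneg _)] using this

theorem octTh_key1 (t r y : ℝ) (ht : 0 < t) (ht1 : t ≤ 1) (h0 : 0 ≤ r) (hr : r < π / 2) (hy : 0 ≤ y) :
    octTh t (cos r * cosh y) ≤ octK * octCst t * exp ((y ^ 2 - r ^ 2) / (4 * t)) := by
  have hc : 0 ≤ cos r * cosh y := mul_nonneg (cos_nonneg_of_mem_Icc ⟨by linarith [pi_pos], hr.le⟩) (cosh_pos y).le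
  rcases le_total y r with h | h
  · refine (octTh_mono t ht _ _ hc (oct_key1 r y hy h hr)).trans ?_
    have h2 := octTh_cos_upper t (√(r ^ 2 - y ^ 2)) ht ht1 (sqrt_nonneg _) (by
      rw [sqrt_le_left (by positivity)]; nlinarith)
    rw [sq_sqrt (by nlinarith), neg_sub] at h2
    exact h2
  · refine (octTh_mono t ht _ _ hc (oct_key2 r y h0 h hr)).trans ?_
    have h2 := octTh_cosh_upper t (√(y ^ 2 - r ^ 2)) ht ht1
    rw [sq_sqrt (by nlinarith)] at h2
    exact h2

theorem octTh_key2 (t r y : ℝ) (ht : 0 < t) (ht1 : t ≤ 1) (h0 : 0 ≤ r) (hr : r < π / 2) :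
    octTh t (cos r * cosh y) ≤ octK * octCst t * exp ((y + log (cos r)) ^ 2 / (4 * t)) := by
  have hcr : 0 < cos r := cos_pos_of_mem_Ioo ⟨by linarith [pi_pos], hr⟩
  have hc : 0 ≤ cos r * cosh y := mul_nonneg hcr.le (cosh_pos y).le
  refine (octTh_mono t ht _ _ hc ?_).trans (octTh_cosh_upper t (y + log (cos r)) ht ht1)
  rw [cosh_eq, cosh_eq, neg_add, exp_add, exp_add, exp_log hcr, exp_neg (log _), exp_log hcr]
  have h1 : cos r ≤ (cos r)⁻¹ := by
    have := cos_le_one r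
    exact this.trans (one_le_inv_iff₀.2 ⟨hcr, this⟩)
  have h2 := mul_le_mul_of_nonneg_left h1 (exp_pos (-y)).le
  linarith

theorem octTh_key (t r θ : ℝ) (v : ℕ) (ht : 0 < t) (ht1 : t ≤ 1) (h0 : 0 ≤ r) (hr : r < π / 2) (hθ : 0 ≤ θ) (hθ1 : θ ≤ 1) :
    exp (-t * v ^ 2) * octTh t (cos r * cosh (2 * t * v)) ≤
      octK * octCst t * exp (-((1 - θ) * r ^ 2 - θ * log (cos r) ^ 2) / (4 * t)) * exp (θ * log (cos r)) ^ v := by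
  have h1 := mul_le_mul_of_nonneg_left (octTh_key1 t r (2 * t * v) ht ht1 h0 hr (by positivity)) (exp_pos (-t * v ^ 2)).le
  have h2 := mul_le_mul_of_nonneg_left (octTh_key2 t r (2 * t * v) ht ht1 h0 hr) (exp_pos (-t * v ^ 2)).le
  rw [mul_left_comm, ← exp_add] at h1 h2
  rw [mul_assoc _ _ (exp _ ^ v), ← exp_nat_mul, ← exp_add]
  set A := -t * v ^ 2 + ((2 * t * v) ^ 2 - r ^ 2) / (4 * t) with hA
  set B := -t * v ^ 2 + (2 * t * v + log (cos r)) ^ 2 / (4 * t) with hB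
  have e : -((1 - θ) * r ^ 2 - θ * log (cos r) ^ 2) / (4 * t) + v * (θ * log (cos r)) = (1 - θ) * A + θ * B := by
    rw [hA, hB]; field_simp; ring
  rw [e]
  have hk : 0 ≤ octK * octCst t := mul_nonneg octK_nonneg (octCst_pos t ht).le
  rcases le_total A B with h | h
  · refine h1.trans (mul_le_mul_of_nonneg_left (exp_le_exp.2 ?_) hk)
    nlinarith
  · refine h2.trans (mul_le_mul_of_nonneg_left (exp_le_exp.2 ?_) hk)
    nlinarith

theorem oct_pow_le_geo (n : ℕ) (L : ℝ) (hL : 1 < L) : ∃ C, 0 < C ∧ ∀ N : ℕ, (N : ℝ) ^ n ≤ C * L ^ N := by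
  have hl : 0 < log L := log_pos hL
  refine ⟨n.factorial / (log L) ^ n, by positivity, fun N => ?_⟩
  have := oct_pow_le_exp n (N * log L) (by positivity)
  rw [exp_nat_mul, exp_log (by linarith), mul_pow] at this
  rw [div_mul_eq_mul_div, le_div_iff₀ (by positivity)]
  exact this

theorem oct_binom_hasSum (a : ℝ) (N : ℕ) :
    HasSum (fun i : ℕ => ((N.choose i : ℕ) : ℝ) / 2 ^ N * exp (a * (N - 2 * i))) (cosh a ^ N) := by
  have h := hasSum_sum_of_ne_finset_zero (s := Finset.range (N + 1)) (f := fun i : ℕ => ((N.choose i : ℕ) : ℝ) / 2 ^ N * exp (a * (N - 2 * i)))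
    (L := SummationFilter.unconditional ℕ) (fun i hi => by
      rw [Nat.choose_eq_zero_of_lt (by simpa using hi)]; simp)
  refine oct_hasSum_congr h (fun _ => rfl) ?_
  rw [cosh_eq, div_pow, add_comm, add_pow, Finset.sum_div]
  refine Finset.sum_congr rfl fun i hi => ?_
  have hi' : i ≤ N := by have := Finset.mem_range.1 hi; omega
  rw [← exp_nat_mul, ← exp_nat_mul, ← exp_add, Nat.cast_sub hi', show (i : ℝ) * -a + (N - i) * a = a * (N - 2 * i) by ring]
  ring

noncomputable def octH (t ρ : ℝ) (v N i : ℕ) : ℝ :=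
  exp (-t * v ^ 2) * (octC t N * ρ ^ N) * (((N.choose i : ℕ) : ℝ) / 2 ^ N * exp (2 * t * v * (N - 2 * i)))

theorem octH_nonneg (t ρ : ℝ) (ht : 0 < t) (h : 0 ≤ ρ) (v N i : ℕ) : 0 ≤ octH t ρ v N i := by
  have := octC_nonneg t ht N
  unfold octH; positivity

theorem octH_sum (t ρ : ℝ) (ht : 0 < t) (h : 0 ≤ ρ) (v : ℕ) :
    ∑' (N : ℕ) (i : ℕ), ENNReal.ofReal (octH t ρ v N i) = ENNReal.ofReal (exp (-t * v ^ 2) * octTh t (ρ * cosh (2 * t * v))) := by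
  have h1 : ∀ N, HasSum (octH t ρ v N) (exp (-t * v ^ 2) * (octC t N * ρ ^ N) * cosh (2 * t * v) ^ N) :=
    fun N => (oct_binom_hasSum (2 * t * v) N).mul_left _
  have h2 : HasSum (fun N => exp (-t * v ^ 2) * (octC t N * ρ ^ N) * cosh (2 * t * v) ^ N) (exp (-t * v ^ 2) * octTh t (ρ * cosh (2 * t * v))) := by
    have := (octTh_hasSum t (ρ * cosh (2 * t * v)) ht (mul_nonneg h (cosh_pos _).le)).mul_left (exp (-t * v ^ 2))
    refine oct_hasSum_congr this (fun N => ?_) rfl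
    rw [mul_pow]; ring
  rw [← h2.tsum_eq, ENNReal.ofReal_tsum_of_nonneg (fun N => (h1 N).nonneg (octH_nonneg t ρ ht h v N)) h2.summable]
  refine tsum_congr fun N => ?_
  rw [← (h1 N).tsum_eq, ENNReal.ofReal_tsum_of_nonneg (octH_nonneg t ρ ht h v N) (h1 N).summable]

theorem oct_upper (r r' θ : ℝ) (h0 : 0 < r') (hrr : r' < r) (hr : r < π / 2) (hθ : 0 < θ) (hθ1 : θ ≤ 1) :
    ∃ C, ∀ t, 0 < t → t ≤ 1 → Summable (fun p : ℕ × ℕ => octPG t (cos r) p.1 p.2) ∧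
      pOct t r 0 ≤ C * octCst t * exp (-((1 - θ) * r' ^ 2 - θ * log (cos r') ^ 2) / (4 * t)) := by
  have hpi := pi_pos
  have hc : 0 < cos r := cos_pos_of_mem_Ioo ⟨by linarith, hr⟩
  have hc' : cos r < cos r' := cos_lt_cos_of_nonneg_of_le_pi_div_two h0.le hr.le hrr
  have hc0' : 0 < cos r' := hc.trans hc'
  have hc1 : cos r' < 1 := by
    have := cos_lt_cos_of_nonneg_of_le_pi_div_two le_rfl (by linarith : r' ≤ π / 2) h0
    rwa [cos_zero] at this
  obtain ⟨C1, hC1, hN⟩ := oct_pow_le_geo 10 (cos r' / cos r) (by rwa [one_lt_div hc])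
  have hq1 : exp (θ * log (cos r')) < 1 := by
    rw [exp_lt_one_iff]
    exact mul_neg_of_pos_of_neg hθ (log_neg (hc.trans hc') hc1)
  set q := exp (θ * log (cos r')) with hq
  set D := 16 / π ^ 8 * exp 40 * C1 / cos r ^ 7 with hD
  have hD0 : 0 < D := by positivity
  refine ⟨D * (octK * (1 - q)⁻¹), fun t ht ht1 => ?_⟩
  set E := exp (-((1 - θ) * r' ^ 2 - θ * log (cos r') ^ 2) / (4 * t)) with hE
  have hpt : ∀ m i : ℕ, octPG t (cos r) m i ≤ D * octH t (cos r') (m + 3) (m + 2 * i + 7) i := by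
    intro m i
    have hw := octPW_le m i
    have hCn := octC_nonneg t ht (m + 2 * i + 7)
    have hNN := hN (m + 2 * i + 7)
    set N := m + 2 * i + 7 with hNdef
    have e40 : exp (40 * t) ≤ exp 40 := exp_le_exp.2 (by linarith)
    have eN : cos r ^ (m + 2 * i) = cos r ^ N / cos r ^ 7 := by
      rw [hNdef, pow_add _ (m + 2 * i) 7]; field_simp
    have ew : exp ((m + 3) ^ 2 * t) ≤ exp (-t * ((m + 3 : ℕ) : ℝ) ^ 2) * exp (2 * t * ((m + 3 : ℕ) : ℝ) * (N - 2 * i)) := by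
      rw [← exp_add]
      apply exp_le_exp.2
      rw [hNdef]; push_cast
      have : 0 ≤ t * (m + 3) := by positivity
      nlinarith
    unfold octPG octH
    rw [show m + 2 * i + 6 + 1 = N from rfl, eN]
    have hb : 0 ≤ (((N.choose i : ℕ) : ℝ) / 2 ^ N) := by positivity
    calc _ ≤ 16 / π ^ 8 * exp 40 * ((C1 * (cos r' / cos r) ^ N) * (((N.choose i : ℕ) : ℝ) / 2 ^ N)) *
          (exp (-t * ((m + 3 : ℕ) : ℝ) ^ 2) * exp (2 * t * ((m + 3 : ℕ) : ℝ) * (N - 2 * i))) * (cos r ^ N / cos r ^ 7) * octC t N := by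
          have := (octPW_pos m i).le
          have hw2 := hw.trans (mul_le_mul_of_nonneg_right hNN hb)
          gcongr
      _ = _ := by
        rw [hD, div_pow]
        field_simp
  have hbound : ∑' p : ℕ × ℕ, ENNReal.ofReal (octPG t (cos r) p.1 p.2) ≤ ENNReal.ofReal (D * (octK * (1 - q)⁻¹) * octCst t * E) := by
    calc _ ≤ ∑' p : ℕ × ℕ, ENNReal.ofReal D * ENNReal.ofReal (octH t (cos r') (p.1 + 3) (p.1 + 2 * p.2 + 7) p.2) := by
          refine ENNReal.tsum_le_tsum fun p => ?_
          rw [← ENNReal.ofReal_mul hD0.le]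
          exact ENNReal.ofReal_le_ofReal (hpt p.1 p.2)
      _ = ENNReal.ofReal D * ∑' p : ℕ × ℕ, ENNReal.ofReal (octH t (cos r') (p.1 + 3) (p.1 + 2 * p.2 + 7) p.2) := ENNReal.tsum_mul_left
      _ ≤ ENNReal.ofReal D * ∑' p : ℕ × ℕ × ℕ, ENNReal.ofReal (octH t (cos r') p.1 p.2.1 p.2.2) := by
          refine mul_le_mul_right ?_ _
          exact ENNReal.tsum_comp_le_tsum_of_injective (f := fun p : ℕ × ℕ => (p.1 + 3, p.1 + 2 * p.2 + 7, p.2))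
            (fun p p' h => by
              simp only [Prod.mk.injEq] at h
              ext <;> omega)
            (fun p : ℕ × ℕ × ℕ => ENNReal.ofReal (octH t (cos r') p.1 p.2.1 p.2.2))
      _ = ENNReal.ofReal D * ∑' v : ℕ, ENNReal.ofReal (exp (-t * v ^ 2) * octTh t (cos r' * cosh (2 * t * v))) := by
          congr 1
          rw [ENNReal.tsum_prod']
          refine tsum_congr fun v => ?_
          rw [ENNReal.tsum_prod', octH_sum t _ ht (hc.trans hc').le]
      _ ≤ ENNReal.ofReal D * ∑' v : ℕ, ENNReal.ofReal (octK * octCst t * E * q ^ v) := by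
          refine mul_le_mul_right (ENNReal.tsum_le_tsum fun v => ENNReal.ofReal_le_ofReal ?_) _
          exact octTh_key t r' θ v ht ht1 h0.le (by linarith) hθ.le hθ1
      _ = _ := by
          have hK := octK_nonneg
          have hct := (octCst_pos t ht).le
          have hq0 : 0 ≤ q := (exp_pos _).le
          rw [← ENNReal.ofReal_tsum_of_nonneg (fun v => by positivity) ((summable_geometric_of_lt_one hq0 hq1).mul_left _),
            tsum_mul_left, tsum_geometric_of_lt_one hq0 hq1, ← ENNReal.ofReal_mul hD0.le]
          congr 1; ring
  have hB0 : 0 ≤ D * (octK * (1 - q)⁻¹) * octCst t * E := by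
    have hK := octK_nonneg
    have hct := (octCst_pos t ht).le
    have : 0 ≤ (1 - q)⁻¹ := inv_nonneg.2 (by linarith)
    positivity
  have hfin : ∀ s : Finset (ℕ × ℕ), ∑ p ∈ s, octPG t (cos r) p.1 p.2 ≤ D * (octK * (1 - q)⁻¹) * octCst t * E := by
    intro s
    rw [← ENNReal.ofReal_le_ofReal_iff hB0, ENNReal.ofReal_sum_of_nonneg (fun p _ => octPG_nonneg t _ ht hc.le _ _)]
    exact (ENNReal.sum_le_tsum s).trans hbound
  have hs : Summable (fun p : ℕ × ℕ => octPG t (cos r) p.1 p.2) :=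
    summable_of_sum_le (fun p => octPG_nonneg t _ ht hc.le _ _) hfin
  refine ⟨hs, ?_⟩
  rw [(pOct_eq t r ht hc.le).2, ← hs.tsum_prod]
  exact hs.tsum_le_of_sum_le hfin

theorem oct_choose_mid (s : ℕ) : 2 ^ s ≤ (s + 1) * s.choose (s / 2) := by
  rw [← Nat.sum_range_choose]
  calc _ ≤ ∑ _x ∈ Finset.range (s + 1), s.choose (s / 2) := Finset.sum_le_sum fun i _ => Nat.choose_le_middle i s
    _ = _ := by simp

theorem octPW_lower (s : ℕ) : 1 / (128 * ((s : ℝ) + 1)) ≤ octPW (s % 2) (s / 2) := by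
  rw [octPW_eq]
  have hs : s % 2 + 2 * (s / 2) = s := Nat.mod_add_div s 2
  rw [hs]
  set m := s % 2
  set i := s / 2 with hi
  have h1 : (1:ℝ) ≤ ((m + 5).choose 5 : ℕ) := by
    exact_mod_cast Nat.choose_pos (by omega)
  have hm : (0:ℝ) ≤ m := Nat.cast_nonneg _
  have hi0 : (0:ℝ) ≤ i := Nat.cast_nonneg _
  have h2 : (1:ℝ) ≤ (m + i + 4) * (m + i + 5) * (m + i + 6) * (m + i + 7) := by
    have a1 : (1:ℝ) ≤ m + i + 4 := by linarith
    have a2 : (1:ℝ) ≤ m + i + 5 := by linarith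
    have a3 : (1:ℝ) ≤ m + i + 6 := by linarith
    have a4 : (1:ℝ) ≤ m + i + 7 := by linarith
    exact one_le_mul_of_one_le_of_one_le (one_le_mul_of_one_le_of_one_le (one_le_mul_of_one_le_of_one_le a1 a2) a3) a4
  have h3 : (1:ℝ) ≤ (m:ℝ) + 3 := by linarith
  have h4 := one_le_mul_of_one_le_of_one_le (one_le_mul_of_one_le_of_one_le h3 h1) h2
  have h5 : 1 / (128 * ((s : ℝ) + 1)) ≤ (((s + 7).choose i : ℕ) : ℝ) / 2 ^ (s + 7) := by
    rw [div_le_div_iff₀ (by positivity) (by positivity)]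
    have := oct_choose_mid s
    have h6 : s.choose i ≤ (s + 7).choose i := Nat.choose_le_choose _ (by omega)
    have h7 : 2 ^ s ≤ (s + 1) * (s + 7).choose i := this.trans (Nat.mul_le_mul_left _ h6)
    have h8 : (2:ℝ) ^ s ≤ (s + 1) * (((s + 7).choose i : ℕ) : ℝ) := by exact_mod_cast h7
    rw [pow_add]; nlinarith
  have h9 : 0 ≤ (((s + 7).choose i : ℕ) : ℝ) / 2 ^ (s + 7) := by positivity
  calc _ ≤ _ := h5
    _ = 1 * ((((s + 7).choose i : ℕ) : ℝ) / 2 ^ (s + 7)) := by ring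
    _ ≤ _ := mul_le_mul_of_nonneg_right h4 h9

theorem oct_lower_term (t ρ ρ1 C1 c : ℝ) (s : ℕ) (ht : 0 < t) (hc : 0 < ρ) (hc1 : 0 < ρ1) (hC1 : 0 < C1)
    (hN : ((s + 1 : ℕ) : ℝ) ^ 1 ≤ C1 * (ρ / ρ1) ^ (s + 1))
    (hcdef : c = 16 / π ^ 8 * (1 / 128) / (C1 * (ρ / ρ1)) / ρ1 ^ 7) :
    c * (octC t (s + 7) * ρ1 ^ (s + 7)) ≤ octPG t ρ (s % 2) (s / 2) := by
  have hpi := pi_pos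
  have hw := octPW_lower s
  have hCn := octC_nonneg t ht (s + 7)
  have hs : s % 2 + 2 * (s / 2) = s := Nat.mod_add_div s 2
  unfold octPG
  have hs7 : s % 2 + 2 * (s / 2) + 6 + 1 = s + 7 := by omega
  rw [hs7, hs]
  rw [pow_one] at hN
  push_cast at hN
  generalize octC t (s + 7) = Z at *
  generalize octPW (s % 2) (s / 2) = W at *
  have e40 : 1 ≤ exp (40 * t) := one_le_exp (by positivity)
  have e3 : 1 ≤ exp ((((s % 2 : ℕ) : ℝ) + 3) ^ 2 * t) := one_le_exp (by positivity)
  generalize exp (40 * t) = E1 at *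
  generalize exp ((((s % 2 : ℕ) : ℝ) + 3) ^ 2 * t) = E2 at *
  have hq : 1 / (128 * (C1 * (ρ / ρ1) ^ (s + 1))) ≤ W := by
    refine le_trans ?_ hw
    apply one_div_le_one_div_of_le (by positivity)
    linarith
  have hq0 : 0 ≤ 1 / (128 * (C1 * (ρ / ρ1) ^ (s + 1))) := by positivity
  calc c * (Z * ρ1 ^ (s + 7))
      = 16 / π ^ 8 * 1 * (1 / (128 * (C1 * (ρ / ρ1) ^ (s + 1)))) * 1 * ρ ^ s * Z := by
        rw [hcdef, div_pow, pow_add ρ1 s 7, pow_succ ρ1 s, pow_succ ρ s]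
        field_simp
    _ ≤ 16 / π ^ 8 * E1 * W * E2 * ρ ^ s * Z := by
        have : 0 ≤ W := hq0.trans hq
        gcongr

theorem oct_inj : Function.Injective (fun s : ℕ => (s % 2, s / 2)) := by
  intro a b h
  have h1 : a % 2 = b % 2 := congrArg Prod.fst h
  have h2 : a / 2 = b / 2 := congrArg Prod.snd h
  omega

theorem oct_shift7 (f : ℕ → ℝ) (a : ℝ) (h : HasSum f a) :
    a - ∑ k ∈ Finset.range 7, f k = ∑' s, f (s + 7) ∧ Summable (fun s => f (s + 7)) := by
  have h5 := h.summable.sum_add_tsum_nat_add 7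
  rw [h.tsum_eq] at h5
  exact ⟨by linarith, (summable_nat_add_iff 7).2 h.summable⟩

theorem oct_sub (f : ℕ → ℕ → ℝ) (hS : Summable (fun p : ℕ × ℕ => f p.1 p.2)) (h0 : ∀ m i, 0 ≤ f m i) :
    Summable (fun s : ℕ => f (s % 2) (s / 2)) ∧ ∑' s : ℕ, f (s % 2) (s / 2) ≤ ∑' p : ℕ × ℕ, f p.1 p.2 :=
  ⟨hS.comp_injective oct_inj, tsum_comp_le_tsum_of_inj hS (fun p => h0 p.1 p.2) oct_inj⟩

theorem oct_lower1 (r r1 : ℝ) (h0 : 0 < r) (hr : r < r1) (hr1 : r1 < π / 2) :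
    ∃ c, 0 < c ∧ ∀ t, 0 < t → t ≤ 1 →
      c * (octTh t (cos r1) - ∑ k ∈ Finset.range 7, octC t k * cos r1 ^ k) ≤ pOct t r 0 := by
  have hpi := pi_pos
  have hc : 0 < cos r := cos_pos_of_mem_Ioo ⟨by linarith, by linarith⟩
  have hc1 : 0 < cos r1 := cos_pos_of_mem_Ioo ⟨by linarith, by linarith⟩
  have hlt : cos r1 < cos r := cos_lt_cos_of_nonneg_of_le_pi_div_two h0.le hr1.le hr
  obtain ⟨C1, hC1, hN⟩ := oct_pow_le_geo 1 (cos r / cos r1) (by rwa [one_lt_div hc1])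
  obtain ⟨C2, hC2⟩ := oct_upper r (r / 2) 1 (by linarith) (by linarith) (by linarith) one_pos le_rfl
  obtain ⟨c, hcdef⟩ : ∃ c, c = 16 / π ^ 8 * (1 / 128) / (C1 * (cos r / cos r1)) / cos r1 ^ 7 := ⟨_, rfl⟩
  have hcpos : 0 < c := by rw [hcdef]; positivity
  refine ⟨c, hcpos, fun t ht ht1 => ?_⟩
  have hS := (hC2 t ht ht1).1
  have hP := pOct_eq t r ht hc.le
  have e1 : pOct t r 0 = ∑' p : ℕ × ℕ, octPG t (cos r) p.1 p.2 := by
    rw [hP.2, hS.tsum_prod' hP.1]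
  have hTh := octTh_hasSum t (cos r1) ht hc1.le
  obtain ⟨e2, hS7⟩ := oct_shift7 _ _ hTh
  obtain ⟨hSs, hB⟩ := oct_sub (octPG t (cos r)) hS (octPG_nonneg t (cos r) ht hc.le)
  rw [e1, e2, ← tsum_mul_left]
  have hA : ∑' s, c * (octC t (s + 7) * cos r1 ^ (s + 7)) ≤ ∑' s : ℕ, octPG t (cos r) (s % 2) (s / 2) :=
    (hS7.mul_left c).tsum_le_tsum
      (fun s => oct_lower_term t (cos r) (cos r1) C1 c s ht hc hc1 hC1 (hN (s + 1)) hcdef) hSs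
  exact hA.trans hB

theorem octCst_one_le (t : ℝ) (ht : 0 < t) (ht1 : t ≤ 1) : 1 ≤ octCst t := by
  have := pi_gt_three
  unfold octCst
  rw [le_div_iff₀ (by positivity), one_mul]
  exact rpow_le_one (by positivity) (by rw [div_le_one (by linarith)]; linarith) (by norm_num)

theorem octCst_le (t : ℝ) (ht : 0 < t) (ht1 : t ≤ 1) : octCst t ≤ π * (1 / t) := by
  have := pi_gt_three
  unfold octCst
  have h1 : t / π ≤ (t / π) ^ (1 / 2 : ℝ) := by
    have h2 := rpow_le_rpow_of_exponent_ge (x := t / π) (by positivity) (by rw [div_le_one (by linarith)]; linarith) (by norm_num : (1 / 2 : ℝ) ≤ 1)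
    rwa [rpow_one] at h2
  calc _ ≤ 1 / (t / π) := one_div_le_one_div_of_le (by positivity) h1
    _ = _ := by field_simp

theorem oct_lower2 (r r1 : ℝ) (h0 : 0 < r) (hr : r < r1) (hr1 : r1 < π / 2) :
    ∃ c, 0 < c ∧ ∀ᶠ t in 𝓝[>] (0:ℝ), c * exp (-r1 ^ 2 / (4 * t)) ≤ pOct t r 0 := by
  have hpi := pi_pos
  obtain ⟨c, hc, h⟩ := oct_lower1 r r1 h0 hr hr1
  obtain ⟨r2, h12, h2⟩ := exists_between hr1
  have hc1 : 0 < cos r1 := cos_pos_of_mem_Ioo ⟨by linarith, by linarith⟩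
  have hc2 : 0 < cos r2 := cos_pos_of_mem_Ioo ⟨by linarith, by linarith⟩
  have hlt : cos r2 < cos r1 := cos_lt_cos_of_nonneg_of_le_pi_div_two (by linarith) h2.le h12
  have hL : 1 ≤ cos r1 / cos r2 := ((one_lt_div hc2).2 hlt).le
  set A := (cos r1 / cos r2) ^ 7 with hA
  have hA0 : 0 < A := by positivity
  refine ⟨c / 2, by positivity, ?_⟩
  have hK := octK_nonneg
  filter_upwards [oct_poly_le_exp (2 * A * octK) 0 (r2 ^ 2 - r1 ^ 2) (by nlinarith), Ioc_mem_nhdsGT (zero_lt_one' ℝ)] with t hp ht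
  obtain ⟨ht0, ht1⟩ := ht
  refine le_trans ?_ (h t ht0 ht1)
  have l1 := octTh_cos_lower t r1 ht0
  have u2 := octTh_cos_upper t r2 ht0 ht1 (by linarith) h2.le
  have hTh := octTh_hasSum t (cos r2) ht0 hc2.le
  have hcst := octCst_one_le t ht0 ht1
  have hs : ∑ k ∈ Finset.range 7, octC t k * cos r1 ^ k ≤ A * octTh t (cos r2) := by
    calc _ ≤ ∑ k ∈ Finset.range 7, A * (octC t k * cos r2 ^ k) := by
          refine Finset.sum_le_sum fun k hk => ?_
          have hk7 : k ≤ 7 := (Finset.mem_range.1 hk).le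
          have hCn := octC_nonneg t ht0 k
          have : (cos r1 / cos r2) ^ k ≤ A := pow_le_pow_right₀ hL hk7
          calc octC t k * cos r1 ^ k = (cos r1 / cos r2) ^ k * (octC t k * cos r2 ^ k) := by
                rw [div_pow]; field_simp
            _ ≤ _ := by gcongr
      _ = A * ∑ k ∈ Finset.range 7, octC t k * cos r2 ^ k := by rw [Finset.mul_sum]
      _ ≤ _ := by
          have := sum_le_hasSum (Finset.range 7) (fun k _ => mul_nonneg (octC_nonneg t ht0 k) (pow_nonneg hc2.le k)) hTh
          gcongr
  set X := exp (-r1 ^ 2 / (4 * t)) with hX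
  have hX0 : 0 < X := exp_pos _
  have e2 : exp ((r2 ^ 2 - r1 ^ 2) / (4 * t)) * exp (-r2 ^ 2 / (4 * t)) = X := by
    rw [← exp_add, hX]; congr 1; ring
  rw [pow_zero, mul_one] at hp
  have hp2 : 2 * A * octK * exp (-r2 ^ 2 / (4 * t)) ≤ X := by
    rw [← e2]; exact mul_le_mul_of_nonneg_right hp (exp_pos _).le
  have h3 : 2 * (A * octTh t (cos r2)) ≤ octCst t * X := by
    calc _ ≤ 2 * (A * (octK * octCst t * exp (-r2 ^ 2 / (4 * t)))) := by gcongr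
      _ = octCst t * (2 * A * octK * exp (-r2 ^ 2 / (4 * t))) := by ring
      _ ≤ _ := by gcongr
  have h4 : X ≤ octCst t * X := le_mul_of_one_le_left hX0.le hcst
  calc c / 2 * X = c * (X / 2) := by ring
    _ ≤ _ := by
      refine mul_le_mul_of_nonneg_left ?_ hc.le
      linarith

theorem oct_part2 (r : ℝ) (h0 : 0 ≤ r) (h1 : r < π / 2) :
    Tendsto (fun t => -(4 * t) * log (pOct t r 0)) (𝓝[>] 0) (𝓝 (r ^ 2)) := by
  rcases h0.eq_or_lt with rfl | h0
  · simpa using oct_part_zero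
  refine oct_log_limit _ _ fun ε hε => ?_
  have hlow : ∀ᶠ t in 𝓝[>] (0:ℝ), exp (-(r ^ 2 + ε) / (4 * t)) ≤ pOct t r 0 := by
    have hn : ∀ᶠ x in 𝓝[>] r, x ^ 2 < r ^ 2 + ε / 2 := by
      have : Tendsto (fun x : ℝ => x ^ 2) (𝓝[>] r) (𝓝 (r ^ 2)) :=
        ((continuous_pow 2).tendsto r).mono_left nhdsWithin_le_nhds
      exact this.eventually_lt_const (by linarith)
    obtain ⟨r1, hr1, hr1a, hr1b⟩ := (hn.and (Ioo_mem_nhdsGT h1)).exists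
    obtain ⟨c, hc, h⟩ := oct_lower2 r r1 h0 hr1a hr1b
    filter_upwards [h, oct_poly_le_exp (1 / c) 0 (ε / 2) (by linarith), self_mem_nhdsWithin] with t ht hp ht0
    have ht0 : 0 < t := ht0
    refine le_trans ?_ ht
    rw [pow_zero, mul_one, div_le_iff₀ hc] at hp
    calc exp (-(r ^ 2 + ε) / (4 * t)) ≤ exp (-(ε / 2) / (4 * t)) * exp (-r1 ^ 2 / (4 * t)) := by
          rw [← exp_add, ← add_div]
          apply exp_le_exp.2
          gcongr
          linarith
      _ ≤ c * exp (-r1 ^ 2 / (4 * t)) := by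
          refine mul_le_mul_of_nonneg_right ?_ (exp_pos _).le
          rw [neg_div, exp_neg, inv_le_iff_one_le_mul₀ (exp_pos _)]
          linarith
  have hup : ∀ᶠ t in 𝓝[>] (0:ℝ), pOct t r 0 ≤ exp (-(r ^ 2 - ε) / (4 * t)) := by
    have hn : ∀ᶠ x in 𝓝[<] r, r ^ 2 - ε / 4 < x ^ 2 := by
      have : Tendsto (fun x : ℝ => x ^ 2) (𝓝[<] r) (𝓝 (r ^ 2)) :=
        ((continuous_pow 2).tendsto r).mono_left nhdsWithin_le_nhds
      exact this.eventually_const_lt (by linarith)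
    obtain ⟨r1, hr1, hr1a, hr1b⟩ := (hn.and (Ioo_mem_nhdsLT h0)).exists
    have hn2 : ∀ᶠ θ in 𝓝[>] (0:ℝ), r ^ 2 - ε / 2 < (1 - θ) * r1 ^ 2 - θ * log (cos r1) ^ 2 := by
      have h3 : Continuous (fun θ : ℝ => (1 - θ) * r1 ^ 2 - θ * log (cos r1) ^ 2) := by fun_prop
      have h4 := (h3.tendsto 0).mono_left (nhdsWithin_le_nhds (s := Set.Ioi 0))
      exact h4.eventually_const_lt (by linarith)
    obtain ⟨θ, hθ, hθ0, hθ1⟩ := (hn2.and (Ioc_mem_nhdsGT (zero_lt_one' ℝ))).exists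
    obtain ⟨C, h⟩ := oct_upper r r1 θ hr1a hr1b h1 hθ0 hθ1
    filter_upwards [oct_poly_le_exp (|C| * π) 1 (ε / 2) (by linarith), Ioc_mem_nhdsGT (zero_lt_one' ℝ)] with t hp ht
    obtain ⟨ht0, ht1⟩ := ht
    refine (h t ht0 ht1).2.trans ?_
    have hcl := octCst_le t ht0 ht1
    have hcp := (octCst_pos t ht0).le
    rw [pow_one] at hp
    calc _ ≤ |C| * (π * (1 / t)) * exp (-(r ^ 2 - ε / 2) / (4 * t)) := by
          gcongr
          exact le_abs_self C
      _ ≤ exp (ε / 2 / (4 * t)) * exp (-(r ^ 2 - ε / 2) / (4 * t)) := by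
          gcongr
          linarith
      _ = _ := by rw [← exp_add]; congr 1; ring
  exact hlow.and hup

/-- The squared sub-Riemannian distance of the octonionic Hopf fibration is recovered from the
subelliptic heat kernel by `d²(r,η) = −lim_{t→0⁺} 4t ln p_t(r,η)`; in particular
`d²(0,η) = 2πη − η²` for `η ∈ [0,π)` and `d²(r,0) = r²` for `r ∈ [0,π/2)`. -/
theorem pOct_subRiemannian_distance :
    (∀ η ∈ Set.Ico (0 : ℝ) π,
        Filter.Tendsto (fun t => -(4 * t) * Real.log (pOct t 0 η)) (𝓝[>] 0)
          (𝓝 (2 * π * η - η ^ 2))) ∧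
    (∀ r ∈ Set.Ico (0 : ℝ) (π / 2),
        Filter.Tendsto (fun t => -(4 * t) * Real.log (pOct t r 0)) (𝓝[>] 0)
          (𝓝 (r ^ 2))) := 
  ⟨fun η h => oct_part1 η h.1 h.2, fun r h => oct_part2 r h.1 h.2⟩
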